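/- arXiv:1801.03359 — 2 statements merged into one kernel-verified Lean document; each statement's English description precedes it below -/
import Mathlib

section
/- Assume f satisfies (A1)–(A3) and fix χ > 0. Then, for all sufficiently small ε > 0, there exist a countable directed graph 𝔊 = (V, E), with associated topological Markov shift Σ := {v ∈ V^ℤ : (v_n, v_{n+1}) ∈ E for all n ∈ ℤ}, left shift σ, distance d(v, w) := exp(−min{|n| : v_n ≠ w_n}), and recurrent set Σ^# := {v ∈ Σ : some vertex occurs infinitely often among (v_n)_{n>0} and some vertex occurs infinitely often among (v_n)_{n<0}}, and a map π : Σ → M̂ such that: (0) π is Hölder continuous, i.e. there are C > 0 and α ∈ (0,1] with d̂(π(v), π(w)) ≤ C·d(v,w)^α for all v, w ∈ Σ; (1) π ∘ σ = f̂ ∘ π; (2) for every f-adapted χ-expanding f-invariant Borel probability measure μ on M and every lift μ̂ of μ, the set π[Σ^#] has full μ̂-outer measure; (3) for every x̂ ∈ π[Σ^#], the set {v ∈ Σ^# : π(v) = x̂} is finite. -/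
open Real MeasureTheory Filter Topology Metric Set

noncomputable section

namespace OneDim

/-- The interval `M = [0, 1/2]`. -/
def Mset : Set ℝ := Set.Icc 0 (1/2)

/-- Data of a piecewise `C^{1+β}` interval map `f : M → M` with discontinuity set `D`,
constants `β ∈ (0,1)`, `a, K > 1`, radius function `r` and inverse branches `g`. -/
structure GoodMap where
  f : ℝ → ℝ
  D : Set ℝ
  β : ℝ
  a : ℝ
  K : ℝ
  r : ℝ → ℝ
  g : ℝ → ℝ → ℝ
  hβ0 : 0 < β
  hβ1 : β < 1
  ha : 1 < a
  hK : 1 < K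
  hmaps : ∀ x ∈ Mset, f x ∈ Mset
  hD : D ⊆ Mset
  hdiff : DifferentiableOn ℝ f (Mset \ D)

namespace GoodMap

/-- The critical set `C = {x ∈ M \ D : df_x = 0}`. -/
def crit (F : GoodMap) : Set ℝ := {x | x ∈ Mset \ F.D ∧ deriv F.f x = 0}

/-- The singular set `S = C ∪ D`. -/
def S (F : GoodMap) : Set ℝ := F.crit ∪ F.D

/-- Distance to the singular set. -/
def dS (F : GoodMap) (x : ℝ) : ℝ := Metric.infDist x F.S

/-- Conditions (A1)–(A3). -/
def SatA (F : GoodMap) : Prop :=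
  ∀ x ∈ Mset, x ∉ F.S → F.f x ∉ F.S →
    (min (F.dS x ^ F.a) (F.dS (F.f x) ^ F.a) < F.r x ∧ F.r x < 1) ∧
    -- (A1)
    (Set.InjOn F.f (Metric.ball x (2 * F.r x)) ∧
      (∀ y ∈ Metric.ball x (2 * F.r x), DifferentiableAt ℝ F.f y) ∧
      F.g x (F.f x) = x ∧
      (∀ z ∈ Metric.ball (F.f x) (2 * F.r x), F.f (F.g x z) = z) ∧
      Set.InjOn (F.g x) (Metric.ball (F.f x) (2 * F.r x)) ∧
      (∀ z ∈ Metric.ball (F.f x) (2 * F.r x), DifferentiableAt ℝ (F.g x) z)) ∧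
    -- (A2)
    ((∀ y ∈ Metric.ball x (2 * F.r x),
        F.dS x ^ F.a ≤ |deriv F.f y| ∧ |deriv F.f y| ≤ F.dS x ^ (-F.a)) ∧
      (∀ z ∈ Metric.ball (F.f x) (2 * F.r x),
        F.dS x ^ F.a ≤ |deriv (F.g x) z| ∧ |deriv (F.g x) z| ≤ F.dS x ^ (-F.a))) ∧
    -- (A3)
    ((∀ y ∈ Metric.ball x (2 * F.r x), ∀ z ∈ Metric.ball x (2 * F.r x),
        |deriv F.f y - deriv F.f z| ≤ F.K * |y - z| ^ F.β) ∧
      (∀ y ∈ Metric.ball (F.f x) (2 * F.r x), ∀ z ∈ Metric.ball (F.f x) (2 * F.r x),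
        |deriv (F.g x) y - deriv (F.g x) z| ≤ F.K * |y - z| ^ F.β))

end GoodMap

/-- Membership in the natural extension space `M̂`. -/
def inMhat (f : ℝ → ℝ) (x : ℤ → ℝ) : Prop :=
  (∀ n, x n ∈ Mset) ∧ ∀ n : ℤ, f (x (n - 1)) = x n

/-- The natural extension map `f̂` (left shift). -/
def fhat (x : ℤ → ℝ) : ℤ → ℝ := fun n => x (n + 1)

/-- Iterate `f̂^k` of the natural extension map, `k ∈ ℤ`. -/
def fhatI (k : ℤ) (x : ℤ → ℝ) : ℤ → ℝ := fun n => x (n + k)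

/-- The metric `d̂(x̂,ŷ) = sup{2^n d(x_n,y_n) : n ≤ 0}` on `M̂`. -/
def dhat (x y : ℤ → ℝ) : ℝ :=
  sSup {t : ℝ | ∃ n : ℤ, n ≤ 0 ∧ t = (2:ℝ) ^ n * |x n - y n|}

/-- The invertible derivative cocycle `d̂f^{(n)}` over `f̂`. -/
def dfhat (f : ℝ → ℝ) (x : ℤ → ℝ) (n : ℤ) : ℝ :=
  if 0 ≤ n then ∏ j ∈ Finset.range n.toNat, deriv f (x (j : ℤ))
  else (∏ j ∈ Finset.range (-n).toNat, deriv f (x (-(j : ℤ) - 1)))⁻¹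

/-- The Pesin parameter `u(x̂)`. -/
def uPes (f : ℝ → ℝ) (χ : ℝ) (x : ℤ → ℝ) : ℝ :=
  Real.sqrt (∑' n : ℕ, Real.exp (2 * (n:ℝ) * χ) * (dfhat f x (-(n:ℤ))) ^ 2)

/-- The Pesin chart `Ψ_{x̂}(t) = t/u(x̂) + x₀`. -/
def Psi (f : ℝ → ℝ) (χ : ℝ) (x : ℤ → ℝ) (t : ℝ) : ℝ := t / uPes f χ x + x 0

/-- The set `NUE_χ`. -/
def NUE (F : GoodMap) (χ : ℝ) : Set (ℤ → ℝ) :=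
  {x | inMhat F.f x ∧ (∀ n, x n ∉ F.S) ∧
    (∃ l > χ, Tendsto (fun n : ℕ => Real.log |dfhat F.f x (n:ℤ)| / (n:ℝ)) atTop (𝓝 l)) ∧
    (∃ l > χ, Tendsto (fun n : ℕ => Real.log |dfhat F.f x (-(n:ℤ))| / (-(n:ℝ))) atTop (𝓝 l))}

/-- `ρ(x̂) = d({x₋₁,x₀,x₁}, S)`. -/
def rho (F : GoodMap) (x : ℤ → ℝ) : ℝ :=
  min (F.dS (x (-1))) (min (F.dS (x 0)) (F.dS (x 1)))

/-- `I_ε = {e^{-εn/3} : n ≥ 0}`. -/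
def Ieps (ε : ℝ) : Set ℝ := {q | ∃ n : ℕ, q = Real.exp (-(ε * n) / 3)}

/-- `Q̃_ε(x̂)`. -/
def Qtilde (F : GoodMap) (χ ε : ℝ) (x : ℤ → ℝ) : ℝ :=
  ε ^ (3 / F.β) *
    min (uPes F.f χ x ^ (-(24 / F.β)))
      (uPes F.f χ (fhatI (-1) x) ^ (-(12 / F.β)) * rho F x ^ (72 * F.a / F.β))

/-- `Q_ε(x̂) = max{q ∈ I_ε : q ≤ Q̃_ε(x̂)}`. -/
def Qeps (F : GoodMap) (χ ε : ℝ) (x : ℤ → ℝ) : ℝ :=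
  sSup {q | q ∈ Ieps ε ∧ q ≤ Qtilde F χ ε x}

/-- The regular set. -/
def Reg (F : GoodMap) : Set (ℤ → ℝ) :=
  {x | inMhat F.f x ∧ (∀ n, x n ∉ F.S) ∧
    Tendsto (fun n : ℕ => Real.log (F.dS (x (n:ℤ))) / (n:ℝ)) atTop (𝓝 0) ∧
    Tendsto (fun n : ℕ => Real.log (F.dS (x (-(n:ℤ)))) / (n:ℝ)) atTop (𝓝 0)}

/-- The set `NUE*_χ`. -/
def NUEstar (F : GoodMap) (χ : ℝ) : Set (ℤ → ℝ) :=
  {x | x ∈ NUE F χ ∧ x ∈ Reg F ∧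
    (∃ nk : ℕ → ℤ, Tendsto nk atTop atBot ∧
      Tendsto (fun k => uPes F.f χ (fhatI (nk k) x)) atTop (𝓝 (uPes F.f χ x))) ∧
    Tendsto (fun n : ℕ => Real.log (uPes F.f χ (fhatI (-(n:ℤ)) x)) / (-(n:ℝ))) atTop (𝓝 0)}

/-- An ε-chart is a pair `(x̂, p)`, representing `Ψ_{x̂}` restricted to `[-p,p]`. -/
structure Chart where
  x : ℤ → ℝ
  p : ℝ

/-- `(x̂, p)` is a genuine ε-chart. -/
def IsChart (F : GoodMap) (χ ε : ℝ) (c : Chart) : Prop :=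
  c.x ∈ NUE F χ ∧ 0 < c.p ∧ c.p ≤ Qeps F χ ε c.x

/-- ε-overlap of two ε-charts. -/
def Overlap (F : GoodMap) (χ ε : ℝ) (c₁ c₂ : Chart) : Prop :=
  Real.exp (-ε) ≤ c₁.p / c₂.p ∧ c₁.p / c₂.p ≤ Real.exp ε ∧
  |c₁.x 0 - c₂.x 0| + |(uPes F.f χ c₁.x)⁻¹ - (uPes F.f χ c₂.x)⁻¹| < (c₁.p * c₂.p) ^ 4

/-- `g_{x̂} = g_{x₋₁}`, the inverse branch of `f` taking `x₀` to `x₋₁`. -/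
def ghat (F : GoodMap) (x : ℤ → ℝ) : ℝ → ℝ := F.g (x (-1))

/-- `G_{x̂} = Ψ_{f̂⁻¹x̂}⁻¹ ∘ g_{x̂} ∘ Ψ_{x̂}`. -/
def Gmap (F : GoodMap) (χ : ℝ) (x : ℤ → ℝ) (t : ℝ) : ℝ :=
  uPes F.f χ (fhatI (-1) x) * (ghat F x (Psi F.f χ x t) - x (-1))

/-- `G_{x̂,ŷ} = Ψ_{ŷ}⁻¹ ∘ g_{x̂} ∘ Ψ_{x̂}`. -/
def Gmap2 (F : GoodMap) (χ : ℝ) (x y : ℤ → ℝ) (t : ℝ) : ℝ :=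
  uPes F.f χ y * (ghat F x (Psi F.f χ x t) - y 0)

/-- `F_{x̂} = Ψ_{f̂x̂}⁻¹ ∘ f ∘ Ψ_{x̂}`. -/
def Fmap (F : GoodMap) (χ : ℝ) (x : ℤ → ℝ) (t : ℝ) : ℝ :=
  uPes F.f χ (fhat x) * (F.f (Psi F.f χ x t) - x 1)

/-- `δ_ε = e^{-εn}` where `n` is the unique positive integer with `e^{-εn} < ε ≤ e^{-ε(n-1)}`. -/
def deltaEps (ε : ℝ) : ℝ :=
  Real.exp (-(ε * ((⌊Real.log (1 / ε) / ε⌋ + 1 : ℤ) : ℝ)))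

/-- Weak edge `v ⤎ w` (from `w = Ψ_{x̂}^p` to `v = Ψ_{ŷ}^q`). -/
def WeakEdge (F : GoodMap) (χ ε : ℝ) (v w : Chart) : Prop :=
  IsChart F χ ε v ∧ IsChart F χ ε w ∧
  Overlap F χ ε ⟨fhatI (-1) w.x, v.p⟩ v ∧
  w.p ≤ Real.exp ε * v.p

/-- Edge `v ← w` (from `w = Ψ_{x̂}^p` to `v = Ψ_{ŷ}^q`). -/
def Edge (F : GoodMap) (χ ε : ℝ) (v w : Chart) : Prop :=
  IsChart F χ ε v ∧ IsChart F χ ε w ∧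
  Overlap F χ ε ⟨fhatI (-1) w.x, v.p⟩ v ∧
  |v.x 1 - w.x 0| < v.p ∧
  Real.exp (-v.p) ≤ uPes F.f χ (fhat v.x) / uPes F.f χ w.x ∧
  uPes F.f χ (fhat v.x) / uPes F.f χ w.x ≤ Real.exp v.p ∧
  w.p = min (Real.exp ε * v.p) (deltaEps ε * Qeps F χ ε w.x)

/-- ε-generalized pseudo-orbit. -/
def IsGPO (F : GoodMap) (χ ε : ℝ) (v : ℤ → Chart) : Prop :=
  ∀ n : ℤ, Edge F χ ε (v n) (v (n + 1))

/-- weak ε-generalized pseudo-orbit. -/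
def IsWeakGPO (F : GoodMap) (χ ε : ℝ) (v : ℤ → Chart) : Prop :=
  ∀ n : ℤ, WeakEdge F χ ε (v n) (v (n + 1))

/-- The range `Ψ_{x̂}([-p,p])` of an ε-chart. -/
def chartRange (F : GoodMap) (χ : ℝ) (c : Chart) : Set ℝ :=
  Psi F.f χ c.x '' Set.Icc (-c.p) c.p

/-- A bi-infinite sequence of ε-charts shadows `x̂ ∈ M̂`. -/
def Shadows (F : GoodMap) (χ : ℝ) (v : ℤ → Chart) (x : ℤ → ℝ) : Prop :=
  inMhat F.f x ∧ ∀ n : ℤ, x n ∈ chartRange F χ (v n)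

/-- `q_ε(x̂) = δ_ε inf{e^{ε|m|} Q_ε(f̂^m x̂) : m ≤ 0}`. -/
def qeps (F : GoodMap) (χ ε : ℝ) (x : ℤ → ℝ) : ℝ :=
  deltaEps ε *
    sInf {t : ℝ | ∃ m : ℤ, m ≤ 0 ∧ t = Real.exp (ε * |(m:ℝ)|) * Qeps F χ ε (fhatI m x)}

/-- Recurrence: some symbol repeats infinitely often in the future and some in the past. -/
def Recurrent {V : Type*} (v : ℤ → V) : Prop :=
  (∃ c, {n : ℤ | 0 < n ∧ v n = c}.Infinite) ∧ ∃ c, {n : ℤ | n < 0 ∧ v n = c}.Infinite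

/-- The distance `d(v,w) = exp(-min{|n| : v_n ≠ w_n})` on sequence spaces. -/
def dSigma {V : Type*} (v w : ℤ → V) : ℝ :=
  sSup {t : ℝ | ∃ n : ℤ, v n ≠ w n ∧ t = Real.exp (-|(n:ℝ)|)}

/-- Sup norm over a set. -/
def supNorm (h : ℝ → ℝ) (I : Set ℝ) : ℝ := sSup ((fun t => |h t|) '' I)

/-- Hölder constant over a set. -/
def holConst (γ : ℝ) (h : ℝ → ℝ) (I : Set ℝ) : ℝ :=
  sSup {r : ℝ | ∃ t ∈ I, ∃ s ∈ I, t ≠ s ∧ r = |h t - h s| / |t - s| ^ γ}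

/-!
The orbits are coded by the laps of `f` rather than by Pesin charts. Call a time `t` hyperbolic of
depth `κ` for a bi-infinite orbit if the cylinder of depth `κ` at `x t` is mapped by every inverse
branch along the past of the orbit, with contraction at an exponential rate. Cut the itinerary of an
orbit at its hyperbolic times, for the least depth at which they exist, and take for vertices the
finite words between consecutive cuts, extended by `κ` letters, with a marked position. Since
contracting inverse branches compose, the blocks of a path again end at hyperbolic times; the
pullbacks of cylinders at these times shrink to a point, so a path codes an orbit, with Hölder
dependence. The cuts are determined by the orbit, hence so is its path.

For a lift of an expanding measure, the ergodic theorem produces times along which all backward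
derivatives grow exponentially; since the distance to the singular set is tempered, the inverse
branches at such times are defined on a neighbourhood of fixed size. If the cylinders at the present
shrink to a point, this neighbourhood contains one of them, the time is hyperbolic, and Poincaré
recurrence makes the code recurrent. The cylinders can only fail to shrink if the orbit has the same
itinerary as a rational number. Then a return map is monotone along the orbit, so that recurrence
makes the orbit periodic; there are countably many repelling periodic points, and they serve as
their own vertices.
-/

section Shift

variable {α : Type*}

/-- The `k`-th power of the left shift on bi-infinite sequences, `k ∈ ℤ`; `fhat` is the case
`k = 1` and `fhatI` the case of real sequences. -/
def shift (k : ℤ) (a : ℤ → α) : ℤ → α := fun n => a (n + k)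

lemma shift_apply (k : ℤ) (a : ℤ → α) (n : ℤ) : shift k a n = a (n + k) := rfl

lemma shift_zero (a : ℤ → α) : shift 0 a = a := by
  funext n; rw [shift_apply, add_zero]

lemma shift_shift (k l : ℤ) (a : ℤ → α) : shift k (shift l a) = shift (k + l) a := by
  funext n; simp only [shift_apply, add_assoc]

lemma iterate_apply_of_forall_map_eq {f : α → α} {x : ℤ → α} (hx : ∀ n, f (x n) = x (n + 1))
    (n : ℤ) (j : ℕ) : f^[j] (x n) = x (n + j) := by
  induction j with
  | zero => rw [Function.iterate_zero_apply, Nat.cast_zero, add_zero]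
  | succ j ih => rw [Function.iterate_succ_apply', ih, hx, Nat.cast_succ, add_assoc]

end Shift

/-! ### Hölder continuity from exponential shadowing -/

section Holder

variable {V : Type*} {v w : ℤ → V} {x y : ℤ → ℝ}

lemma dSigma_self (v : ℤ → V) : dSigma v v = 0 := by
  simp [dSigma]

lemma exp_neg_abs_le_dSigma {n : ℤ} (h : v n ≠ w n) : Real.exp (-|(n : ℝ)|) ≤ dSigma v w := by
  refine le_csSup ⟨1, ?_⟩ ⟨n, h, rfl⟩
  rintro _ ⟨m, _, rfl⟩
  exact Real.exp_le_one_iff.2 (neg_nonpos.2 (abs_nonneg _))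

lemma exists_agree_and_exp_le_dSigma (h : v ≠ w) :
    ∃ N : ℕ, (∀ n : ℤ, n.natAbs < N → v n = w n) ∧ Real.exp (-(N : ℝ)) ≤ dSigma v w := by
  classical
  have hex : ∃ N : ℕ, ∃ n : ℤ, n.natAbs = N ∧ v n ≠ w n := by
    obtain ⟨n, hn⟩ := Function.ne_iff.1 h
    exact ⟨_, n, rfl, hn⟩
  obtain ⟨n, hn, hne⟩ := Nat.find_spec hex
  refine ⟨Nat.find hex, fun m hm => ?_, ?_⟩
  · by_contra hc
    exact Nat.find_min hex hm ⟨m, rfl, hc⟩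
  · simpa only [← hn, Nat.cast_natAbs, Int.cast_abs] using exp_neg_abs_le_dSigma hne

lemma dhat_le {C : ℝ} (hC : 0 ≤ C) (h : ∀ n : ℤ, n ≤ 0 → (2 : ℝ) ^ n * |x n - y n| ≤ C) :
    dhat x y ≤ C := by
  refine Real.sSup_le ?_ hC
  rintro _ ⟨n, hn, rfl⟩
  exact h n hn

lemma pow_le_exp_neg_mul {θ α : ℝ} (hθ : 0 < θ) (hα : α ≤ -Real.log θ) (N : ℕ) :
    θ ^ N ≤ Real.exp (-(α * N)) := by
  rw [← Real.exp_log hθ, ← Real.exp_nat_mul, Real.exp_le_exp]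
  nlinarith [(Nat.cast_nonneg N : (0 : ℝ) ≤ N)]

lemma two_zpow_le_exp_neg_mul {α : ℝ} (hα₀ : 0 ≤ α) (hα : α ≤ Real.log 2) {N : ℕ} {n : ℤ}
    (hn : n ≤ -N) : (2 : ℝ) ^ n ≤ Real.exp (-(α * N)) := by
  have hn' : (n : ℝ) ≤ -N := by exact_mod_cast hn
  rw [← Real.exp_log two_pos, ← Real.rpow_intCast, ← Real.exp_mul, Real.exp_le_exp]
  nlinarith [(Nat.cast_nonneg N : (0 : ℝ) ≤ N)]

theorem dhat_le_mul_dSigma_rpow {θ : ℝ} (hθ₀ : 0 < θ) (hθ₁ : θ < 1)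
    (hxy : ∀ n, |x n - y n| ≤ 1)
    (hclose : ∀ (n : ℤ) (N : ℕ), (∀ j : ℕ, j ≤ N → v (n + j) = w (n + j)) →
      |x n - y n| ≤ θ ^ N) :
    dhat x y ≤ θ⁻¹ * dSigma v w ^ min (-Real.log θ) (Real.log 2) := by
  set α := min (-Real.log θ) (Real.log 2)
  have hα : 0 < α := lt_min (neg_pos.2 (Real.log_neg hθ₀ hθ₁)) (Real.log_pos one_lt_two)
  have hθ_inv : 1 ≤ θ⁻¹ := (one_le_inv₀ hθ₀).2 hθ₁.le
  by_cases hvw : v = w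
  · subst hvw
    have hzero : ∀ n, |x n - y n| ≤ 0 := fun n =>
      ge_of_tendsto' (tendsto_pow_atTop_nhds_zero_of_lt_one hθ₀.le hθ₁)
        fun N => hclose n N fun _ _ => rfl
    rw [dSigma_self, Real.zero_rpow hα.ne', mul_zero]
    exact dhat_le le_rfl fun n _ => mul_nonpos_of_nonneg_of_nonpos (by positivity) (hzero n)
  obtain ⟨N, hagree, hN⟩ := exists_agree_and_exp_le_dSigma hvw
  have hexp : Real.exp (-(α * N)) ≤ dSigma v w ^ α := by
    calc Real.exp (-(α * N)) = Real.exp (-(N : ℝ)) ^ α := by rw [← Real.exp_mul]; ring_nf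
      _ ≤ _ := Real.rpow_le_rpow (Real.exp_pos _).le hN hα.le
  suffices h : dhat x y ≤ θ⁻¹ * Real.exp (-(α * N)) from
    h.trans (mul_le_mul_of_nonneg_left hexp (zero_le_one.trans hθ_inv))
  refine dhat_le (by positivity) fun n hn => ?_
  rcases lt_or_ge n.natAbs N with hnN | hnN
  · obtain ⟨M, rfl⟩ : ∃ M, N = M + 1 := ⟨N - 1, by omega⟩
    calc (2 : ℝ) ^ n * |x n - y n|
        ≤ 1 * θ ^ M := mul_le_mul (zpow_le_one_of_nonpos₀ one_le_two hn)
          (hclose n M fun j hj => hagree _ (by omega)) (abs_nonneg _) zero_le_one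
      _ = θ⁻¹ * θ ^ (M + 1) := by rw [pow_succ]; field_simp
      _ ≤ _ := mul_le_mul_of_nonneg_left (pow_le_exp_neg_mul hθ₀ (min_le_left _ _) _)
          (inv_nonneg.2 hθ₀.le)
  · calc (2 : ℝ) ^ n * |x n - y n|
        ≤ Real.exp (-(α * N)) * 1 := mul_le_mul
          (two_zpow_le_exp_neg_mul hα.le (min_le_right _ _) (by omega)) (hxy n)
          (abs_nonneg _) (Real.exp_pos _).le
      _ ≤ _ := by rw [mul_comm]; gcongr

end Holder

/-! ### Codings of orbits by paths in a graph -/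

/-- A bi-infinite path in the graph with edge relation `E`. -/
def IsPath {V : Type*} (E : V → V → Prop) (v : ℤ → V) : Prop := ∀ n, E (v n) (v (n + 1))

/-- A relation between the paths of a graph and orbits of `f` in `M`: every path codes an orbit,
`N + 1` common vertices force the coded points to be `θ ^ N`-close, and an orbit is coded by
finitely many paths. -/
structure OrbitCoding (V : Type*) {X : Type*} [MetricSpace X] (f : X → X) (M : Set X) (θ : ℝ) where
  Adj : V → V → Prop
  Codes : (ℤ → V) → (ℤ → X) → Prop
  mem {v x} : Codes v x → ∀ n, x n ∈ M
  map_eq {v x} : Codes v x → ∀ n, f (x n) = x (n + 1)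
  isPath {v x} : Codes v x → IsPath Adj v
  exists_codes {v} : IsPath Adj v → ∃ x, Codes v x
  codes_shift {v x} : Codes v x → ∀ k, Codes (shift k v) (shift k x)
  dist_le {v w x y} : Codes v x → Codes w y → ∀ N : ℕ, (∀ n : ℕ, n ≤ N → v n = w n) →
    dist (x 0) (y 0) ≤ θ ^ N
  finite_codes x : {v | Codes v x}.Finite

namespace OrbitCoding

variable {V V' X : Type*} [MetricSpace X] {f : X → X} {M : Set X} {θ : ℝ}

section Projection

variable (C : OrbitCoding V f M θ) {v w : ℤ → V} {x y : ℤ → X}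

include C in
lemma dist_apply_le (hx : C.Codes v x) (hy : C.Codes w y) {n : ℤ} {N : ℕ}
    (h : ∀ j : ℕ, j ≤ N → v (n + j) = w (n + j)) : dist (x n) (y n) ≤ θ ^ N := by
  simpa only [shift_apply, zero_add] using C.dist_le (C.codes_shift hx n) (C.codes_shift hy n) N
    fun j hj => by simpa only [shift_apply, add_comm] using h j hj

lemma codes_unique (hθ₀ : 0 < θ) (hθ₁ : θ < 1) (hx : C.Codes v x) (hy : C.Codes v y) : x = y :=
  funext fun _ => dist_le_zero.1 <|
    ge_of_tendsto' (tendsto_pow_atTop_nhds_zero_of_lt_one hθ₀.le hθ₁)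
      fun _ => C.dist_apply_le hx hy fun _ _ => rfl

variable [Nonempty X]

/-- The coding map, with an arbitrary value at sequences that are not paths. -/
def proj (v : ℤ → V) : ℤ → X := Classical.epsilon (C.Codes v)

lemma codes_proj (hv : IsPath C.Adj v) : C.Codes v (C.proj v) :=
  Classical.epsilon_spec (C.exists_codes hv)

lemma proj_eq (hθ₀ : 0 < θ) (hθ₁ : θ < 1) (hx : C.Codes v x) : C.proj v = x :=
  C.codes_unique hθ₀ hθ₁ (C.codes_proj (C.isPath hx)) hx

lemma proj_shift (hθ₀ : 0 < θ) (hθ₁ : θ < 1) (hv : IsPath C.Adj v) (k : ℤ) :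
    C.proj (shift k v) = shift k (C.proj v) :=
  C.proj_eq hθ₀ hθ₁ (C.codes_shift (C.codes_proj hv) k)

lemma finite_proj_eq (x : ℤ → X) : {v | IsPath C.Adj v ∧ C.proj v = x}.Finite := by
  refine (C.finite_codes x).subset ?_
  rintro v ⟨hv, rfl⟩
  exact C.codes_proj hv

lemma mem_image_proj (hθ₀ : 0 < θ) (hθ₁ : θ < 1) (hx : C.Codes v x) (hv : Recurrent v) :
    x ∈ C.proj '' {v | IsPath C.Adj v ∧ Recurrent v} :=
  ⟨v, ⟨C.isPath hx, hv⟩, C.proj_eq hθ₀ hθ₁ hx⟩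

end Projection

lemma inMhat_proj {f : ℝ → ℝ} {M : Set ℝ} (C : OrbitCoding V f M θ) (hM : M ⊆ Mset) {v : ℤ → V}
    (hv : IsPath C.Adj v) : inMhat f (C.proj v) :=
  ⟨fun n => hM (C.mem (C.codes_proj hv) n), fun n => by
    rw [C.map_eq (C.codes_proj hv), sub_add_cancel]⟩

lemma exists_holder_proj {f : ℝ → ℝ} {M : Set ℝ} (C : OrbitCoding V f M θ)
    (hM : ∀ x ∈ M, ∀ y ∈ M, dist x y ≤ 1) (hθ₀ : 0 < θ) (hθ₁ : θ < 1) :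
    ∃ K > 0, ∃ α : ℝ, 0 < α ∧ α ≤ 1 ∧ ∀ v w, IsPath C.Adj v → IsPath C.Adj w →
      dhat (C.proj v) (C.proj w) ≤ K * dSigma v w ^ α := by
  refine ⟨θ⁻¹, inv_pos.2 hθ₀, min (-Real.log θ) (Real.log 2),
    lt_min (neg_pos.2 (Real.log_neg hθ₀ hθ₁)) (Real.log_pos one_lt_two),
    (min_le_right _ _).trans (by linarith [Real.log_two_lt_d9]), fun v w hv hw => ?_⟩
  have hx := C.codes_proj hv
  have hy := C.codes_proj hw
  exact dhat_le_mul_dSigma_rpow hθ₀ hθ₁ (fun n => hM _ (C.mem hx n) _ (C.mem hy n))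
    fun n N h => C.dist_apply_le hx hy h

section Sum

/-- The disjoint union of two edge relations. -/
inductive SumAdj (E : V → V → Prop) (E' : V' → V' → Prop) : V ⊕ V' → V ⊕ V' → Prop
  | inl {a b} : E a b → SumAdj E E' (.inl a) (.inl b)
  | inr {a b} : E' a b → SumAdj E E' (.inr a) (.inr b)

lemma SumAdj.isLeft_eq {E : V → V → Prop} {E' : V' → V' → Prop} {a b : V ⊕ V'}
    (h : SumAdj E E' a b) : b.isLeft = a.isLeft := by
  cases h <;> rfl

lemma isLeft_eq_of_isPath_sumAdj {E : V → V → Prop} {E' : V' → V' → Prop} {v : ℤ → V ⊕ V'}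
    (hv : IsPath (SumAdj E E') v) (n : ℤ) : (v n).isLeft = (v 0).isLeft := by
  have step : ∀ k, (v (k + 1)).isLeft = (v k).isLeft := fun k => (hv k).isLeft_eq
  induction n using Int.induction_on with
  | zero => rfl
  | succ i ih => rw [step, ih]
  | pred i ih => rw [← ih, ← step, sub_add_cancel]

lemma isPath_sumAdj_iff {E : V → V → Prop} {E' : V' → V' → Prop} {v : ℤ → V ⊕ V'} :
    IsPath (SumAdj E E') v ↔
      (∃ u, v = Sum.inl ∘ u ∧ IsPath E u) ∨ ∃ u, v = Sum.inr ∘ u ∧ IsPath E' u := by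
  constructor
  · intro hv
    have hside := isLeft_eq_of_isPath_sumAdj hv
    cases h : (v 0).isLeft
    · have hright : ∀ n, ∃ u, v n = Sum.inr u := fun n =>
        Sum.isRight_iff.1 (by simp [← Sum.not_isLeft, hside, h])
      choose u hu using hright
      obtain rfl : v = Sum.inr ∘ u := funext hu
      exact .inr ⟨u, rfl, fun n => by cases hv n; assumption⟩
    · have hleft : ∀ n, ∃ u, v n = Sum.inl u := fun n => Sum.isLeft_iff.1 (by rw [hside, h])
      choose u hu using hleft
      obtain rfl : v = Sum.inl ∘ u := funext hu
      exact .inl ⟨u, rfl, fun n => by cases hv n; assumption⟩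
  · rintro (⟨u, rfl, hu⟩ | ⟨u, rfl, hu⟩)
    exacts [fun n => .inl (hu n), fun n => .inr (hu n)]

/-- The coding by the disjoint union of the graphs of two codings. -/
def sum (C : OrbitCoding V f M θ) (C' : OrbitCoding V' f M θ) : OrbitCoding (V ⊕ V') f M θ where
  Adj := SumAdj C.Adj C'.Adj
  Codes v x := (∃ u, v = Sum.inl ∘ u ∧ C.Codes u x) ∨ ∃ u, v = Sum.inr ∘ u ∧ C'.Codes u x
  mem := by rintro _ _ (⟨_, _, h⟩ | ⟨_, _, h⟩); exacts [C.mem h, C'.mem h]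
  map_eq := by rintro _ _ (⟨_, _, h⟩ | ⟨_, _, h⟩); exacts [C.map_eq h, C'.map_eq h]
  isPath := by
    rintro _ _ (⟨u, rfl, h⟩ | ⟨u, rfl, h⟩)
    exacts [isPath_sumAdj_iff.2 (.inl ⟨u, rfl, C.isPath h⟩),
      isPath_sumAdj_iff.2 (.inr ⟨u, rfl, C'.isPath h⟩)]
  exists_codes := by
    intro v hv
    obtain ⟨u, rfl, hu⟩ | ⟨u, rfl, hu⟩ := isPath_sumAdj_iff.1 hv
    · obtain ⟨x, hx⟩ := C.exists_codes hu
      exact ⟨x, .inl ⟨u, rfl, hx⟩⟩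
    · obtain ⟨x, hx⟩ := C'.exists_codes hu
      exact ⟨x, .inr ⟨u, rfl, hx⟩⟩
  codes_shift := by
    rintro _ _ (⟨u, rfl, h⟩ | ⟨u, rfl, h⟩) k
    exacts [.inl ⟨_, rfl, C.codes_shift h k⟩, .inr ⟨_, rfl, C'.codes_shift h k⟩]
  dist_le := by
    rintro _ _ _ _ (⟨u, rfl, h⟩ | ⟨u, rfl, h⟩) (⟨u', rfl, h'⟩ | ⟨u', rfl, h'⟩) N hN
    · exact C.dist_le h h' N fun n hn => Sum.inl_injective (hN n hn)
    · exact absurd (hN 0 N.zero_le) Sum.inl_ne_inr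
    · exact absurd (hN 0 N.zero_le) Sum.inr_ne_inl
    · exact C'.dist_le h h' N fun n hn => Sum.inr_injective (hN n hn)
  finite_codes x := by
    refine (((C.finite_codes x).image (Sum.inl ∘ ·)).union
      ((C'.finite_codes x).image (Sum.inr ∘ ·))).subset ?_
    rintro v (⟨u, rfl, h⟩ | ⟨u, rfl, h⟩)
    exacts [.inl ⟨u, h, rfl⟩, .inr ⟨u, h, rfl⟩]

end Sum

/-- The coding of the orbits inside a subset `P` of `M` by themselves. -/
def self (P : Set X) (hP : P ⊆ M) (hθ : 0 ≤ θ) : OrbitCoding P f M θ where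
  Adj p q := f p = q
  Codes v x := (∀ n, (v n : X) = x n) ∧ ∀ n, f (x n) = x (n + 1)
  mem h n := hP (h.1 n ▸ (_ : P).2)
  map_eq h := h.2
  isPath {v x} h n := by
    change f (v n) = v (n + 1)
    rw [h.1, h.2, h.1]
  exists_codes {v} hv := ⟨fun n => v n, fun _ => rfl, hv⟩
  codes_shift h k := ⟨fun n => h.1 _, fun n => by
    rw [shift_apply, h.2, shift_apply, add_right_comm]⟩
  dist_le h h' N hN := by
    have h₀ := hN 0 N.zero_le
    rw [Nat.cast_zero] at h₀
    rw [← h.1, ← h'.1, h₀, dist_self]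
    exact pow_nonneg hθ N
  finite_codes x := Set.Subsingleton.finite fun v hv w hw =>
    funext fun n => Subtype.ext ((hv.1 n).trans (hw.1 n).symm)

end OrbitCoding

lemma Recurrent.comp {V W : Type*} {v : ℤ → V} (h : Recurrent v) (g : V → W) :
    Recurrent (g ∘ v) := by
  obtain ⟨⟨a, ha⟩, ⟨b, hb⟩⟩ := h
  exact ⟨⟨g a, ha.mono fun n hn => ⟨hn.1, congrArg g hn.2⟩⟩,
    ⟨g b, hb.mono fun n hn => ⟨hn.1, congrArg g hn.2⟩⟩⟩

section Periodic

variable {α : Type*} {x : ℤ → α} {p : ℕ}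

lemma apply_mul_eq_of_forall_add_eq (h : ∀ n, x (n + p) = x n) (k : ℤ) : x (p * k) = x 0 := by
  induction k using Int.induction_on with
  | zero => rw [mul_zero]
  | succ i ih => rw [mul_add, mul_one, h, ih]
  | pred i ih => rw [← ih, ← h, mul_sub, mul_one, sub_add_cancel]

lemma recurrent_of_forall_add_eq (hp : 0 < p) (h : ∀ n, x (n + p) = x n) : Recurrent x := by
  have hp' : (p : ℤ) ≠ 0 := by exact_mod_cast hp.ne'
  refine ⟨⟨x 0, infinite_of_injective_forall_mem (f := fun k : ℕ => (p : ℤ) * (k + 1)) ?_ ?_⟩,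
    ⟨x 0, infinite_of_injective_forall_mem (f := fun k : ℕ => (p : ℤ) * (-k - 1)) ?_ ?_⟩⟩
  · intro a b hab
    have := mul_left_cancel₀ hp' hab
    omega
  · exact fun k => ⟨by positivity, apply_mul_eq_of_forall_add_eq h _⟩
  · intro a b hab
    have := mul_left_cancel₀ hp' hab
    omega
  · exact fun k => ⟨mul_neg_of_pos_of_neg (by positivity) (by omega),
      apply_mul_eq_of_forall_add_eq h _⟩

end Periodic

/-! ### Cylinders, contracting pullbacks and hyperbolic times -/

/-- A map on a compact space of diameter at most one, a domain on which its orbits are given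
letters in `A`, and a contraction rate for inverse branches. -/
structure LabelledSystem (X A : Type*) [MetricSpace X] where
  map : X → X
  space : Set X
  domain : Set X
  label : X → A
  rate : ℝ
  isCompact_space : IsCompact space
  dist_le_one : ∀ x ∈ space, ∀ y ∈ space, dist x y ≤ 1
  domain_subset : domain ⊆ space
  rate_pos : 0 < rate
  rate_lt_one : rate < 1

namespace LabelledSystem

variable {X A : Type*} [MetricSpace X] (Y : LabelledSystem X A)

/-- The points whose itinerary over the next `k` steps reads `a t, …, a (t + k - 1)`. -/
def cylinder (a : ℤ → A) (t : ℤ) (k : ℕ) : Set X :=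
  {z | ∀ j : ℕ, j < k → Y.map^[j] z ∈ Y.domain ∧ Y.label (Y.map^[j] z) = a (t + j)}

/-- The points which follow `a` from time `s` to time `s + m` and then land in the closed cylinder
of depth `κ`. -/
def pullback (a : ℤ → A) (s : ℤ) (m κ : ℕ) : Set X :=
  {z | z ∈ Y.cylinder a s m ∧ Y.map^[m] z ∈ closure (Y.cylinder a (s + m) κ)}

/-- The closed cylinder of depth `κ` at time `s + m` has a full inverse branch of order `m` along
`a`, which contracts by the rate of the system to the power `m`. -/
structure Contracts (a : ℤ → A) (s : ℤ) (m κ : ℕ) : Prop where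
  surjOn : SurjOn Y.map^[m] (Y.pullback a s m κ) (closure (Y.cylinder a (s + m) κ))
  dist_le : ∀ y ∈ Y.pullback a s m κ, ∀ z ∈ Y.pullback a s m κ,
    dist y z ≤ Y.rate ^ m * dist (Y.map^[m] y) (Y.map^[m] z)

/-- All inverse branches along `a` of the closed cylinder of depth `κ` at time `t` contract. -/
def IsHyperbolicTime (a : ℤ → A) (t : ℤ) (κ : ℕ) : Prop :=
  ∀ (s : ℤ) (m : ℕ), s + m = t → Y.Contracts a s m κ

/-- A bi-infinite orbit which stays in the domain. -/
def IsOrbit (x : ℤ → X) : Prop := ∀ n, x n ∈ Y.domain ∧ Y.map (x n) = x (n + 1)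

variable {Y} {a b : ℤ → A} {s t : ℤ} {k l m n κ κ' : ℕ} {x y : ℤ → X} {z : X}

lemma rate_pow_le_one (m : ℕ) : Y.rate ^ m ≤ 1 := pow_le_one₀ Y.rate_pos.le Y.rate_lt_one.le

section Cylinder

lemma cylinder_congr (h : ∀ j : ℕ, j < k → a (t + j) = b (s + j)) :
    Y.cylinder a t k = Y.cylinder b s k := by
  ext z
  exact forall₂_congr fun j hj => by rw [h j hj]

lemma cylinder_anti (h : k ≤ l) : Y.cylinder a t l ⊆ Y.cylinder a t k :=
  fun _ hz j hj => hz j (hj.trans_le h)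

lemma cylinder_zero : Y.cylinder a t 0 = univ :=
  eq_univ_of_forall fun _ _ hj => absurd hj (Nat.not_lt_zero _)

lemma mem_cylinder_add : z ∈ Y.cylinder a t (k + l) ↔
    z ∈ Y.cylinder a t k ∧ Y.map^[k] z ∈ Y.cylinder a (t + k) l := by
  have hiter : ∀ j, Y.map^[j] (Y.map^[k] z) = Y.map^[k + j] z := fun j => by
    rw [add_comm, Function.iterate_add_apply]
  refine ⟨fun h => ⟨cylinder_anti (Nat.le_add_right k l) h, fun j hj => ?_⟩,
    fun ⟨h, h'⟩ j hj => ?_⟩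
  · rw [hiter, add_assoc, ← Nat.cast_add]
    exact h (k + j) (by omega)
  · rcases lt_or_ge j k with hjk | hjk
    · exact h j hjk
    · obtain ⟨i, rfl⟩ := Nat.exists_eq_add_of_le hjk
      rw [← hiter, Nat.cast_add, ← add_assoc]
      exact h' i (by omega)

lemma closure_cylinder_subset_space (hk : 0 < k) : closure (Y.cylinder a t k) ⊆ Y.space :=
  closure_minimal (fun _ hz => Y.domain_subset (hz 0 hk).1) Y.isCompact_space.isClosed

end Cylinder

section Contracts

lemma pullback_congr (h : ∀ j : ℕ, j < m + κ → a (s + j) = b (t + j)) :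
    Y.pullback a s m κ = Y.pullback b t m κ := by
  have hend : Y.cylinder a (s + m) κ = Y.cylinder b (t + m) κ := cylinder_congr fun j hj => by
    rw [add_assoc, add_assoc, ← Nat.cast_add, h _ (by omega)]
  rw [pullback, pullback, hend, cylinder_congr fun j hj => h j (by omega)]

lemma pullback_anti (h : κ ≤ κ') : Y.pullback a s m κ' ⊆ Y.pullback a s m κ :=
  fun _ hz => ⟨hz.1, closure_mono (cylinder_anti h) hz.2⟩

lemma Contracts.congr (h : ∀ j : ℕ, j < m + κ → a (s + j) = b (t + j))
    (ha : Y.Contracts a s m κ) : Y.Contracts b t m κ := by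
  have hend : Y.cylinder a (s + m) κ = Y.cylinder b (t + m) κ := cylinder_congr fun j hj => by
    rw [add_assoc, add_assoc, ← Nat.cast_add, h _ (by omega)]
  constructor
  · rw [← pullback_congr h, ← hend]
    exact ha.surjOn
  · rw [← pullback_congr h]
    exact ha.dist_le

lemma Contracts.mono (h : κ ≤ κ') (ha : Y.Contracts a s m κ) : Y.Contracts a s m κ' where
  surjOn := fun q hq => by
    obtain ⟨y, hy, rfl⟩ := ha.surjOn (closure_mono (cylinder_anti h) hq)
    exact ⟨y, ⟨hy.1, hq⟩, rfl⟩
  dist_le y hy z hz := ha.dist_le y (pullback_anti h hy) z (pullback_anti h hz)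

lemma Contracts.zero (a : ℤ → A) (s : ℤ) (κ : ℕ) : Y.Contracts a s 0 κ where
  surjOn q hq := ⟨q, ⟨by rw [cylinder_zero]; trivial, hq⟩, rfl⟩
  dist_le y _ z _ := by rw [pow_zero, one_mul]; rfl

lemma Contracts.dist_le_dist (h : Y.Contracts a s m κ) {y z : X} (hy : y ∈ Y.pullback a s m κ)
    (hz : z ∈ Y.pullback a s m κ) : dist y z ≤ dist (Y.map^[m] y) (Y.map^[m] z) :=
  (h.dist_le y hy z hz).trans (mul_le_of_le_one_left dist_nonneg (rate_pow_le_one m))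

lemma Contracts.pullback_subset_closure (h : Y.Contracts a s m κ) :
    Y.pullback a s m κ ⊆ closure (Y.cylinder a s (m + κ)) := by
  intro y hy
  rw [Metric.mem_closure_iff]
  intro ε hε
  obtain ⟨q, hq, hqε⟩ := Metric.mem_closure_iff.1 hy.2 ε hε
  obtain ⟨w, hw, rfl⟩ := h.surjOn (subset_closure hq)
  exact ⟨w, mem_cylinder_add.2 ⟨hw.1, hq⟩, (h.dist_le_dist hy hw).trans_lt hqε⟩

lemma mem_pullback_add : z ∈ Y.pullback a s (l + m) κ ↔
    z ∈ Y.cylinder a s l ∧ Y.map^[l] z ∈ Y.pullback a (s + l) m κ := by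
  rw [pullback, mem_ofPred_eq, mem_cylinder_add, pullback, mem_ofPred_eq, add_comm l m,
    Function.iterate_add_apply, add_comm m l, Nat.cast_add, ← add_assoc, and_assoc]

/-- The inverse branch along the last `m` letters gains the depth `κ ≤ m + κ'` required by the
preceding one. -/
lemma Contracts.comp (h : Y.Contracts a s l κ) (h' : Y.Contracts a (s + l) m κ')
    (hκ : κ ≤ m + κ') : Y.Contracts a s (l + m) κ' := by
  have hmem : ∀ z ∈ Y.pullback a s (l + m) κ', z ∈ Y.pullback a s l κ := fun z hz =>
    ⟨(mem_pullback_add.1 hz).1, closure_mono (cylinder_anti hκ)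
      (h'.pullback_subset_closure (mem_pullback_add.1 hz).2)⟩
  constructor
  · intro q hq
    rw [Nat.cast_add, ← add_assoc] at hq
    obtain ⟨y, hy, rfl⟩ := h'.surjOn hq
    obtain ⟨w, hw, rfl⟩ := h.surjOn
      (closure_mono (cylinder_anti hκ) (h'.pullback_subset_closure hy))
    exact ⟨w, mem_pullback_add.2 ⟨hw.1, hy⟩, by rw [add_comm, Function.iterate_add_apply]⟩
  · intro y hy z hz
    calc dist y z ≤ Y.rate ^ l * dist (Y.map^[l] y) (Y.map^[l] z) :=
          h.dist_le y (hmem y hy) z (hmem z hz)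
      _ ≤ Y.rate ^ l * (Y.rate ^ m * dist (Y.map^[m] (Y.map^[l] y)) (Y.map^[m] (Y.map^[l] z))) :=
          mul_le_mul_of_nonneg_left (h'.dist_le _ (mem_pullback_add.1 hy).2 _
            (mem_pullback_add.1 hz).2) (pow_nonneg Y.rate_pos.le _)
      _ = _ := by rw [← Function.iterate_add_apply, ← Function.iterate_add_apply, add_comm m l,
          pow_add, mul_assoc]

end Contracts

section HyperbolicTime

lemma IsHyperbolicTime.mono (h : κ ≤ κ') (ht : Y.IsHyperbolicTime a t κ) :
    Y.IsHyperbolicTime a t κ' := fun s m hs => (ht s m hs).mono h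

lemma isHyperbolicTime_shift {k : ℤ} :
    Y.IsHyperbolicTime (shift k a) t κ ↔ Y.IsHyperbolicTime a (t + k) κ := by
  constructor
  · intro h s m hs
    exact (h (s - k) m (by omega)).congr fun j _ => by rw [shift_apply]; congr 1; ring
  · intro h s m hs
    exact (h (s + k) m (by omega)).congr fun j _ => by rw [shift_apply]; congr 1; ring

lemma IsHyperbolicTime.of_local (hs : Y.IsHyperbolicTime a s κ) (hst : s ≤ t)
    (hκ : κ ≤ t - s + κ')
    (hloc : ∀ (r : ℤ) (m : ℕ), s ≤ r → r + m = t → Y.Contracts a r m κ') :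
    Y.IsHyperbolicTime a t κ' := by
  intro r m hr
  rcases le_total s r with hsr | hsr
  · exact hloc r m hsr hr
  · obtain ⟨l, hl⟩ := Int.le.dest hsr
    obtain ⟨n, rfl⟩ := Nat.exists_eq_add_of_le (show l ≤ m by omega)
    exact (hs r l hl).comp (hloc _ n (by omega) (by omega)) (by omega)

/-- The block current at time `n` is `[start n, finish n)`. -/
lemma isHyperbolicTime_of_blocks {start finish : ℤ → ℤ} (hstart : ∀ n, start n ≤ n)
    (hle : ∀ n, start n ≤ finish n)
    (hnext : ∀ n, start (n + 1) = start n ∨ start (n + 1) = finish n)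
    (hloc : ∀ n (s : ℤ) (m : ℕ), start n ≤ s → s + m = finish n → Y.Contracts a s m κ) (n : ℤ) :
    Y.IsHyperbolicTime a (start n) κ := by
  have key : ∀ s n : ℤ, s ≤ n → ∀ m : ℕ, s + m = start n → Y.Contracts a s m κ := by
    intro s n hn
    induction n, hn using Int.leInduction with
    | base =>
      intro m hm
      obtain rfl : m = 0 := by have := hstart s; omega
      exact .zero a s κ
    | succ n _ ih =>
      intro m hm
      rcases hnext n with h | h
      · exact ih m (by rw [hm, h])
      · rcases le_total (start n) s with hs | hs
        · exact hloc n s m hs (by rw [hm, h])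
        · have := hle n
          obtain ⟨l, hl⟩ := Int.le.dest hs
          obtain ⟨i, rfl⟩ := Nat.exists_eq_add_of_le (show l ≤ m by omega)
          exact (ih l hl).comp (hloc n _ i (by omega) (by push_cast at hm; omega)) (by omega)
  exact fun s m hs => key s n (by have := hstart n; omega) m hs

end HyperbolicTime

section Orbit

lemma IsOrbit.map_iterate (hx : Y.IsOrbit x) (n : ℤ) (j : ℕ) :
    Y.map^[j] (x n) = x (n + j) :=
  iterate_apply_of_forall_map_eq (fun n => (hx n).2) n j

lemma IsOrbit.shift (hx : Y.IsOrbit x) (k : ℤ) : Y.IsOrbit (shift k x) := fun n =>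
  ⟨(hx _).1, by rw [shift_apply, (hx _).2, shift_apply, add_right_comm]⟩

lemma IsOrbit.mem_cylinder (hx : Y.IsOrbit x) {n : ℤ}
    (h : ∀ j : ℕ, j < k → Y.label (x (n + j)) = a (t + j)) : x n ∈ Y.cylinder a t k :=
  fun j hj => by rw [hx.map_iterate]; exact ⟨(hx _).1, h j hj⟩

lemma IsOrbit.mem_pullback (hx : Y.IsOrbit x) {n : ℤ}
    (h : ∀ j : ℕ, j < m + κ → Y.label (x (n + j)) = a (s + j)) :
    x n ∈ Y.pullback a s m κ := by
  refine ⟨hx.mem_cylinder fun j hj => h j (by omega), subset_closure ?_⟩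
  rw [hx.map_iterate]
  refine hx.mem_cylinder fun j hj => ?_
  rw [add_assoc, add_assoc, ← Nat.cast_add, h _ (by omega)]

lemma IsOrbit.dist_le (hx : Y.IsOrbit x) (hy : Y.IsOrbit y)
    (ht : Y.IsHyperbolicTime (Y.label ∘ x) m κ)
    (h : ∀ j : ℕ, j < m + κ → Y.label (x j) = Y.label (y j)) :
    dist (x 0) (y 0) ≤ Y.rate ^ m := by
  have hx₀ : x 0 ∈ Y.pullback (Y.label ∘ x) 0 m κ := hx.mem_pullback fun _ _ => rfl
  have hy₀ : y 0 ∈ Y.pullback (Y.label ∘ x) 0 m κ := hy.mem_pullback fun j hj => by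
    rw [Function.comp_apply, zero_add, h j hj]
  calc dist (x 0) (y 0) ≤ Y.rate ^ m * dist (Y.map^[m] (x 0)) (Y.map^[m] (y 0)) :=
        (ht 0 m (zero_add _)).dist_le _ hx₀ _ hy₀
    _ ≤ Y.rate ^ m * 1 := by
        rw [hx.map_iterate, hy.map_iterate]
        exact mul_le_mul_of_nonneg_left (Y.dist_le_one _ (Y.domain_subset (hx _).1) _
          (Y.domain_subset (hy _).1)) (pow_nonneg Y.rate_pos.le _)
    _ = _ := mul_one _

end Orbit

section Realization

lemma Contracts.isCompact_pullback (h : Y.Contracts a s m κ) (hκ : 0 < κ) :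
    IsCompact (Y.pullback a s m κ) := by
  have hcyl : IsCompact (closure (Y.cylinder a (s + m) κ)) :=
    Y.isCompact_space.of_isClosed_subset isClosed_closure (closure_cylinder_subset_space hκ)
  choose! g hg_mem hg using h.surjOn
  have himage : Y.pullback a s m κ = g '' closure (Y.cylinder a (s + m) κ) := by
    refine subset_antisymm (fun z hz => ⟨_, hz.2, ?_⟩) (image_subset_iff.2 hg_mem)
    refine dist_le_zero.1 ((h.dist_le_dist (hg_mem hz.2) hz).trans_eq ?_)
    rw [hg hz.2, dist_self]
  have hlip : LipschitzOnWith 1 g (closure (Y.cylinder a (s + m) κ)) :=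
    LipschitzOnWith.of_dist_le_mul fun p hp q hq => by
      simpa only [hg hp, hg hq, NNReal.coe_one, one_mul]
        using h.dist_le_dist (hg_mem hp) (hg_mem hq)
  rw [himage]
  exact hcyl.image_of_continuousOn hlip.continuousOn

lemma IsHyperbolicTime.pullback_subset (ht : Y.IsHyperbolicTime a (s + (m + n : ℕ)) κ) :
    Y.pullback a s (m + n) κ ⊆ Y.pullback a s m κ := by
  intro z hz
  rw [mem_pullback_add] at hz
  exact ⟨hz.1, closure_mono (cylinder_anti (Nat.le_add_left κ n))
    ((ht (s + m) n (by push_cast; ring)).pullback_subset_closure hz.2)⟩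

lemma exists_mem_pullback (hκ : 0 < κ)
    (h : ∀ N : ℤ, ∃ t ≥ N, Y.IsHyperbolicTime a t κ ∧ (Y.cylinder a t κ).Nonempty) (s : ℤ) :
    ∃ z, ∀ m : ℕ, z ∈ Y.pullback a s m κ := by
  let I := {m : ℕ // Y.IsHyperbolicTime a (s + m) κ ∧ (Y.cylinder a (s + m) κ).Nonempty}
  have hI : ∀ N : ℕ, ∃ i : I, N ≤ i.1 := fun N => by
    obtain ⟨t, ht, hyp⟩ := h (s + N)
    obtain ⟨m, rfl⟩ := Int.le.dest (show s ≤ t by omega)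
    exact ⟨⟨m, hyp⟩, show N ≤ m by omega⟩
  have hanti : ∀ (m : ℕ) (i : I), m ≤ i.1 → Y.pullback a s i.1 κ ⊆ Y.pullback a s m κ := by
    rintro m ⟨i, hi⟩ (hmi : m ≤ i)
    obtain ⟨n, rfl⟩ := Nat.exists_eq_add_of_le hmi
    exact hi.1.pullback_subset
  have hcompact : ∀ i : I, IsCompact (Y.pullback a s i.1 κ) := fun i =>
    (i.2.1 s i.1 rfl).isCompact_pullback hκ
  have : Nonempty I := ⟨(hI 0).choose⟩
  obtain ⟨z, hz⟩ := IsCompact.nonempty_iInter_of_directed_nonempty_isCompact_isClosed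
    (fun i : I => Y.pullback a s i.1 κ)
    (fun i j => (le_total i.1 j.1).elim (fun hij => ⟨j, hanti _ j hij, subset_rfl⟩)
      fun hji => ⟨i, subset_rfl, hanti _ i hji⟩)
    (fun i => i.2.2.elim fun q hq =>
      ((i.2.1 s i.1 rfl).surjOn (subset_closure hq)).imp fun _ hy => hy.1)
    hcompact fun i => (hcompact i).isClosed
  refine ⟨z, fun m => ?_⟩
  obtain ⟨i, hi⟩ := hI m
  exact hanti m i hi (mem_iInter.1 hz i)

/-- At each time, the pullbacks of the closed cylinders at later hyperbolic times shrink to the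
point of the orbit. -/
theorem exists_isOrbit_label_eq (hκ : 0 < κ)
    (h : ∀ N : ℤ, ∃ t ≥ N, Y.IsHyperbolicTime a t κ ∧ (Y.cylinder a t κ).Nonempty) :
    ∃ x, Y.IsOrbit x ∧ Y.label ∘ x = a := by
  choose x hx using exists_mem_pullback hκ h
  have hlarge : ∀ (n : ℤ) (N : ℕ), ∃ m : ℕ, N ≤ m ∧ Y.IsHyperbolicTime a (n + m) κ := by
    intro n N
    obtain ⟨t, ht, hyp, -⟩ := h (n + N)
    obtain ⟨m, rfl⟩ := Int.le.dest (show n ≤ t by omega)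
    exact ⟨m, by omega, hyp⟩
  have hletter : ∀ n, x n ∈ Y.domain ∧ Y.label (x n) = a n := fun n => by
    simpa using (hx n 1).1 0 one_pos
  refine ⟨x, fun n => ⟨(hletter n).1, ?_⟩, funext fun n => (hletter n).2⟩
  have hclose : ∀ N : ℕ, dist (Y.map (x n)) (x (n + 1)) ≤ Y.rate ^ N := by
    intro N
    obtain ⟨m, hm, hyp⟩ := hlarge (n + 1) N
    have hleft : Y.map (x n) ∈ Y.pullback a (n + 1) m κ := by
      simpa using (mem_pullback_add.1 (hx n (1 + m))).2
    have hright := hx (n + 1) m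
    calc dist (Y.map (x n)) (x (n + 1)) ≤ Y.rate ^ m * 1 :=
          ((hyp _ m rfl).dist_le _ hleft _ hright).trans <|
            mul_le_mul_of_nonneg_left (Y.dist_le_one _ (closure_cylinder_subset_space hκ hleft.2) _
              (closure_cylinder_subset_space hκ hright.2)) (pow_nonneg Y.rate_pos.le _)
      _ ≤ Y.rate ^ N := by
          rw [mul_one]
          exact pow_le_pow_of_le_one Y.rate_pos.le Y.rate_lt_one.le hm
  exact dist_le_zero.1 (ge_of_tendsto'
    (tendsto_pow_atTop_nhds_zero_of_lt_one Y.rate_pos.le Y.rate_lt_one) hclose)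

end Realization

end LabelledSystem

/-! ### The Markov graph of blocks between hyperbolic times -/

/-- The vertices of the Markov graph: a block of letters between consecutive hyperbolic times of
depth `level + 1`, with a marked position. The `word` extends `level + 1` letters beyond the end
of the block, as far as hyperbolicity of the end depends on the letters. -/
structure Vertex (A : Type*) where
  level : ℕ
  elapsed : ℕ
  remaining : ℕ
  word : List A

instance {A : Type*} [Countable A] : Countable (Vertex A) :=
  Function.Injective.countable
    (f := fun v : Vertex A => (v.level, v.elapsed, v.remaining, v.word)) <| by
      rintro ⟨⟩ ⟨⟩ h
      simpa using h

/-- The word of length `k` of the sequence `a` which starts at time `s`. -/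
def readWord {A : Type*} (a : ℤ → A) (s : ℤ) (k : ℕ) : List A :=
  (List.range k).map fun j : ℕ => a (s + j)

lemma eq_of_forall_eq_succ {α : Type*} {c : ℤ → α} {m n : ℤ} (hmn : m ≤ n)
    (h : ∀ k, m ≤ k → k < n → c k = c (k + 1)) : c m = c n := by
  induction n, hmn using Int.leInduction with
  | base => rfl
  | succ n hn ih =>
    rw [ih fun k hk hkn => h k hk (by omega), h n hn (by omega)]

lemma apply_eq_diagonal {α : Type*} {c : ℤ → ℤ → α} {lo hi : ℤ → ℤ} (hlo : Monotone lo)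
    (hhi : Monotone hi) (hlo_le : ∀ n, lo n ≤ n) (hlt_hi : ∀ n, n < hi n)
    (hc : ∀ n m, lo (n + 1) ≤ m → m < hi (n + 1) → c n m = c (n + 1) m) {n m : ℤ}
    (hm : lo n ≤ m) (hm' : m < hi n) : c n m = c m m := by
  rcases le_total n m with hnm | hmn
  · refine eq_of_forall_eq_succ (c := fun k => c k m) hnm fun k hk hkm => hc k m ?_ ?_
    · exact (hlo_le _).trans (by omega)
    · exact hm'.trans_le (hhi (by omega))
  · refine (eq_of_forall_eq_succ (c := fun k => c k m) hmn fun k hk hkn => hc k m ?_ ?_).symm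
    · exact (hlo (by omega)).trans hm
    · exact lt_of_le_of_lt (by omega) (hlt_hi _)

namespace LabelledSystem

variable {X A : Type*} [MetricSpace X] (Y : LabelledSystem X A)

/-- The itineraries which have arbitrarily early and late hyperbolic times of depth `κ + 1`, but
no hyperbolic time of depth `κ`. -/
def admissible (κ : ℕ) : Set (ℤ → A) :=
  {a | (∃ x, Y.IsOrbit x ∧ Y.label ∘ x = a) ∧
    (∀ N : ℤ, ∃ t ≥ N, Y.IsHyperbolicTime a t (κ + 1)) ∧
    (∀ N : ℤ, ∃ t ≤ N, Y.IsHyperbolicTime a t (κ + 1)) ∧ ∀ t, ¬ Y.IsHyperbolicTime a t κ}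

/-- The vertex `v` is the block of the sequence `a` around time `n`. -/
structure Describes (v : Vertex A) (a : ℤ → A) (n : ℤ) : Prop where
  start : Y.IsHyperbolicTime a (n - v.elapsed) (v.level + 1)
  remaining_pos : 0 < v.remaining
  between : ∀ t, n - v.elapsed < t → t < n + v.remaining → ¬ Y.IsHyperbolicTime a t (v.level + 1)
  finish : Y.IsHyperbolicTime a (n + v.remaining) (v.level + 1)
  word : v.word = readWord a (n - v.elapsed) (v.elapsed + v.remaining + (v.level + 1))

/-- The edges of the Markov graph: the blocks around two successive times of an admissible
itinerary. -/
def MarkovAdj (v w : Vertex A) : Prop :=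
  v.level = w.level ∧ ∃ a ∈ Y.admissible v.level, Y.Describes v a 0 ∧ Y.Describes w a 1

variable {Y} {v w : Vertex A} {a b : ℤ → A} {m n : ℤ} {κ κ' : ℕ}

section Admissible

lemma admissible_level_unique (h : a ∈ Y.admissible κ) (h' : a ∈ Y.admissible κ') : κ = κ' := by
  by_contra hne
  rcases lt_or_gt_of_ne hne with hlt | hlt
  · obtain ⟨t, -, ht⟩ := h.2.1 0
    exact h'.2.2.2 t (ht.mono hlt)
  · obtain ⟨t, -, ht⟩ := h'.2.1 0
    exact h.2.2.2 t (ht.mono hlt)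

lemma shift_mem_admissible (k : ℤ) (h : a ∈ Y.admissible κ) : shift k a ∈ Y.admissible κ := by
  obtain ⟨⟨x, hx, rfl⟩, hlate, hearly, hnot⟩ := h
  refine ⟨⟨shift k x, hx.shift k, rfl⟩, fun N => ?_, fun N => ?_, fun t ht => ?_⟩
  · obtain ⟨t, ht, hyp⟩ := hlate (N + k)
    exact ⟨t - k, by omega, isHyperbolicTime_shift.2 (by rwa [sub_add_cancel])⟩
  · obtain ⟨t, ht, hyp⟩ := hearly (N + k)
    exact ⟨t - k, by omega, isHyperbolicTime_shift.2 (by rwa [sub_add_cancel])⟩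
  · exact hnot _ (isHyperbolicTime_shift.1 ht)

end Admissible

namespace Describes

lemma shift_iff {k : ℤ} : Y.Describes v (shift k a) n ↔ Y.Describes v a (n + k) := by
  have hstart : n - v.elapsed + k = n + k - v.elapsed := by ring
  have hfinish : n + v.remaining + k = n + k + v.remaining := by ring
  have hword : ∀ l, readWord (shift k a) (n - v.elapsed) l = readWord a (n + k - v.elapsed) l :=
    fun l => List.map_congr_left fun j _ => by rw [shift_apply]; congr 1; ring
  constructor
  · rintro ⟨h₀, hpos, hbtw, h₁, hw⟩
    simp only [isHyperbolicTime_shift, hstart, hfinish, hword] at h₀ hbtw h₁ hw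
    exact ⟨h₀, hpos, fun t ht ht' => sub_add_cancel t k ▸ hbtw (t - k) (by omega) (by omega),
      h₁, hw⟩
  · rintro ⟨h₀, hpos, hbtw, h₁, hw⟩
    refine ⟨?_, hpos, fun t ht ht' => ?_, ?_, ?_⟩ <;>
      simp only [isHyperbolicTime_shift, hstart, hfinish, hword]
    exacts [h₀, hbtw _ (by omega) (by omega), h₁, hw]

lemma apply_eq (h : Y.Describes v a n) (h' : Y.Describes v b n) {j : ℤ} (hj : n - v.elapsed ≤ j)
    (hj' : j < n + v.remaining + (v.level + 1)) : a j = b j := by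
  obtain ⟨i, rfl⟩ := Int.le.dest hj
  exact List.map_inj_left.1 (h.word.symm.trans h'.word) i (List.mem_range.2 (by omega))

lemma next (hv : Y.Describes v a n) (hw : Y.Describes w a (n + 1)) (hlevel : w.level = v.level) :
    (n + 1 - w.elapsed = n - v.elapsed ∧ n + 1 + (w.remaining : ℤ) = n + v.remaining) ∨
      n + 1 - (w.elapsed : ℤ) = n + v.remaining := by
  obtain ⟨v₀, vpos, vbtw, v₁, -⟩ := hv
  obtain ⟨w₀, wpos, wbtw, w₁, -⟩ := hw
  rw [hlevel] at w₀ wbtw w₁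
  have hstart : ¬ (n - v.elapsed < n + 1 - w.elapsed ∧ n + 1 - w.elapsed < n + (v.remaining : ℤ)) :=
    fun h => vbtw _ h.1 h.2 w₀
  have hfinish : ¬ (n - v.elapsed < n + 1 + w.remaining ∧
      n + 1 + w.remaining < n + (v.remaining : ℤ)) := fun h => vbtw _ h.1 h.2 w₁
  have hstart' : ¬ (n + 1 - w.elapsed < n - v.elapsed ∧
      n - v.elapsed < n + 1 + (w.remaining : ℤ)) := fun h => wbtw _ h.1 h.2 v₀
  have hfinish' : ¬ (n + 1 - w.elapsed < n + v.remaining ∧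
      n + v.remaining < n + 1 + (w.remaining : ℤ)) := fun h => wbtw _ h.1 h.2 v₁
  omega

lemma unique (hv : Y.Describes v a n) (hw : Y.Describes w a n) (hlevel : v.level = w.level) :
    v = w := by
  obtain ⟨κ, p, q, l⟩ := v
  obtain ⟨κ', p', q', l'⟩ := w
  obtain ⟨v₀, vpos, vbtw, v₁, vword⟩ := hv
  obtain ⟨w₀, wpos, wbtw, w₁, wword⟩ := hw
  dsimp only at *
  subst hlevel
  have hstart : ¬ (n - p < n - p' ∧ n - (p' : ℤ) < n + q) := fun h => vbtw _ h.1 h.2 w₀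
  have hstart' : ¬ (n - p' < n - p ∧ n - (p : ℤ) < n + q') := fun h => wbtw _ h.1 h.2 v₀
  obtain rfl : p = p' := by omega
  have hfinish : ¬ (n - p < n + q' ∧ n + q' < n + (q : ℤ)) := fun h => vbtw _ h.1 h.2 w₁
  have hfinish' : ¬ (n - p < n + q ∧ n + q < n + (q' : ℤ)) := fun h => wbtw _ h.1 h.2 v₁
  obtain rfl : q = q' := by omega
  rw [vword, wword]

end Describes

lemma exists_describes (h : a ∈ Y.admissible κ) (n : ℤ) :
    ∃ v : Vertex A, v.level = κ ∧ Y.Describes v a n := by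
  classical
  have hpast : ∃ p : ℕ, Y.IsHyperbolicTime a (n - p) (κ + 1) := by
    obtain ⟨t, ht, hyp⟩ := h.2.2.1 n
    obtain ⟨p, hp⟩ := Int.le.dest ht
    exact ⟨p, by rwa [← hp, add_sub_cancel_right]⟩
  have hfuture : ∃ q : ℕ, 0 < q ∧ Y.IsHyperbolicTime a (n + q) (κ + 1) := by
    obtain ⟨t, ht, hyp⟩ := h.2.1 (n + 1)
    obtain ⟨q, rfl⟩ := Int.le.dest (show n ≤ t by omega)
    exact ⟨q, by omega, hyp⟩
  refine ⟨⟨κ, Nat.find hpast, Nat.find hfuture,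
      readWord a (n - Nat.find hpast) (Nat.find hpast + Nat.find hfuture + (κ + 1))⟩, rfl,
    Nat.find_spec hpast,
    (Nat.find_spec hfuture).1, fun t ht ht' hyp => ?_, (Nat.find_spec hfuture).2, rfl⟩
  rcases le_or_gt t n with htn | htn
  · obtain ⟨p, rfl⟩ := Int.le.dest htn
    exact Nat.find_min hpast (m := p) (by dsimp only at ht; omega)
      (by rwa [add_sub_cancel_right])
  · obtain ⟨q, rfl⟩ := Int.le.dest htn.le
    exact Nat.find_min hfuture (m := q) (by dsimp only at ht'; omega) ⟨by omega, hyp⟩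

/-! ### Paths in the Markov graph come from admissible itineraries -/

section PathSoundness

variable {v : ℤ → Vertex A}

lemma level_eq_of_isPath (hv : IsPath Y.MarkovAdj v) (n : ℤ) : (v n).level = (v 0).level := by
  rcases le_total 0 n with hn | hn
  · exact (eq_of_forall_eq_succ (c := fun k => (v k).level) hn fun k _ _ => (hv k).1).symm
  · exact eq_of_forall_eq_succ (c := fun k => (v k).level) hn fun k _ _ => (hv k).1

lemma exists_describes_of_isPath (hv : IsPath Y.MarkovAdj v) (n : ℤ) :
    ∃ c ∈ Y.admissible (v 0).level, Y.Describes (v n) c n ∧ Y.Describes (v (n + 1)) c (n + 1) := by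
  obtain ⟨-, a, ha, h₀, h₁⟩ := hv n
  rw [level_eq_of_isPath hv] at ha
  refine ⟨shift (-n) a, shift_mem_admissible _ ha, Describes.shift_iff.2 ?_,
    Describes.shift_iff.2 ?_⟩
  · rwa [add_neg_cancel]
  · rwa [add_neg_cancel_comm]

/-- The local description of a path: at each time `n`, the vertex describes the block of an
admissible sequence `c n`, and so does the next vertex at time `n + 1`. -/
structure LocalItineraries (Y : LabelledSystem X A) (v : ℤ → Vertex A) (κ : ℕ) (c : ℤ → ℤ → A) :
    Prop where
  level : ∀ n, (v n).level = κ
  admissible : ∀ n, c n ∈ Y.admissible κ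
  describes : ∀ n, Y.Describes (v n) (c n) n
  describes_succ : ∀ n, Y.Describes (v (n + 1)) (c n) (n + 1)

lemma exists_localItineraries (hv : IsPath Y.MarkovAdj v) :
    ∃ c, Y.LocalItineraries v (v 0).level c := by
  choose c hadm hc hc' using exists_describes_of_isPath hv
  exact ⟨c, level_eq_of_isPath hv, hadm, hc, hc'⟩

namespace LocalItineraries

variable {c : ℤ → ℤ → A} (h : Y.LocalItineraries v κ c)

include h

lemma next (n : ℤ) :
    (n + 1 - (v (n + 1)).elapsed = n - (v n).elapsed ∧
        n + 1 + ((v (n + 1)).remaining : ℤ) = n + (v n).remaining) ∨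
      n + 1 - ((v (n + 1)).elapsed : ℤ) = n + (v n).remaining :=
  (h.describes n).next (h.describes_succ n) ((h.level _).trans (h.level _).symm)

lemma apply_eq_diagonal {n m : ℤ} (hm : n - (v n).elapsed ≤ m)
    (hm' : m < n + (v n).remaining + (κ + 1)) : c n m = c m m := by
  have hpos : ∀ k, 0 < (v k).remaining := fun k => (h.describes k).remaining_pos
  refine OneDim.apply_eq_diagonal (lo := fun k => k - (v k).elapsed)
    (hi := fun k => k + (v k).remaining + (κ + 1))
    (monotone_int_of_le_succ fun k => ?_) (monotone_int_of_le_succ fun k => ?_)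
    (fun k => by omega) (fun k => by have := hpos k; omega) (fun k m hm hm' => ?_) hm hm'
  · have := h.next k
    omega
  · have := h.next k
    have := hpos (k + 1)
    omega
  · refine (h.describes_succ k).apply_eq (h.describes (k + 1)) hm ?_
    rwa [h.level]

lemma contracts_diagonal_iff {n s : ℤ} {m l : ℕ} (hs : n - (v n).elapsed ≤ s)
    (hm : s + m + l ≤ n + (v n).remaining + (κ + 1)) :
    Y.Contracts (fun m => c m m) s m l ↔ Y.Contracts (c n) s m l :=
  have heq : ∀ j : ℕ, j < m + l → c n (s + j) = c (s + j) (s + j) := fun j _ =>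
    h.apply_eq_diagonal (by omega) (by omega)
  ⟨.congr fun j hj => (heq j hj).symm, .congr heq⟩

lemma isHyperbolicTime_start (n : ℤ) :
    Y.IsHyperbolicTime (fun m => c m m) (n - (v n).elapsed) (κ + 1) := by
  refine isHyperbolicTime_of_blocks (start := fun n => n - (v n).elapsed)
    (finish := fun n => n + (v n).remaining) (fun n => by omega) (fun n => by omega)
    (fun n => (h.next n).imp_left And.left) (fun n s m hs hm => ?_) n
  have hfinish := (h.describes n).finish
  rw [h.level] at hfinish
  exact (h.contracts_diagonal_iff hs (by push_cast; omega)).2 (hfinish s m hm)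

lemma isHyperbolicTime_finish (n : ℤ) :
    Y.IsHyperbolicTime (fun m => c m m) (n + (v n).remaining) (κ + 1) := by
  have hfinish := (h.describes n).finish
  rw [h.level] at hfinish
  exact (h.isHyperbolicTime_start n).of_local (by omega) (by push_cast; omega) fun s m hs hm =>
    (h.contracts_diagonal_iff hs (by push_cast; omega)).2 (hfinish s m hm)

lemma isHyperbolicTime_of_diagonal {n t : ℤ} {l : ℕ} (ht : n - (v n).elapsed < t)
    (ht' : t + l ≤ n + (v n).remaining + (κ + 1)) (hl : κ ≤ l)
    (hyp : Y.IsHyperbolicTime (fun m => c m m) t l) : Y.IsHyperbolicTime (c n) t l := by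
  have hstart := (h.describes n).start
  rw [h.level] at hstart
  exact hstart.of_local ht.le (by push_cast; omega) fun s m hs hm =>
    (h.contracts_diagonal_iff hs (by omega)).1 (hyp s m hm)

lemma exists_isOrbit_label_eq_diagonal : ∃ x, Y.IsOrbit x ∧ Y.label ∘ x = fun m => c m m := by
  refine exists_isOrbit_label_eq κ.succ_pos fun N => ⟨N + (v N).remaining, by omega,
    h.isHyperbolicTime_finish N, ?_⟩
  obtain ⟨⟨x, hx, hxc⟩, -⟩ := h.admissible N
  refine ⟨x (N + (v N).remaining), hx.mem_cylinder fun j hj => ?_⟩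
  rw [← h.apply_eq_diagonal (n := N) (by omega) (by omega), ← hxc, Function.comp_apply]

lemma diagonal_mem_admissible : (fun m => c m m) ∈ Y.admissible κ := by
  refine ⟨h.exists_isOrbit_label_eq_diagonal,
    fun N => ⟨_, by omega, h.isHyperbolicTime_finish N⟩,
    fun N => ⟨_, by omega, h.isHyperbolicTime_start N⟩, fun t ht => ?_⟩
  obtain ⟨n, rfl⟩ : ∃ n, t = n + 1 := ⟨t - 1, by ring⟩
  have := (h.describes n).remaining_pos
  exact (h.admissible n).2.2.2 _
    (h.isHyperbolicTime_of_diagonal (n := n) (by omega) (by omega) le_rfl ht)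

lemma describes_diagonal (n : ℤ) : Y.Describes (v n) (fun m => c m m) n := by
  have hn := h.describes n
  have hlevel := h.level n
  refine ⟨?_, hn.remaining_pos, fun t ht ht' hyp => hn.between t ht ht' ?_, ?_, ?_⟩
  · rw [hlevel]
    exact h.isHyperbolicTime_start n
  · rw [hlevel] at hyp ⊢
    exact h.isHyperbolicTime_of_diagonal ht (by push_cast; omega) (Nat.le_succ κ) hyp
  · rw [hlevel]
    exact h.isHyperbolicTime_finish n
  · rw [hn.word]
    refine List.map_congr_left fun j hj => h.apply_eq_diagonal (by omega) ?_
    have := List.mem_range.1 hj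
    omega

end LocalItineraries

theorem exists_admissible_of_isPath (hv : IsPath Y.MarkovAdj v) :
    ∃ κ, ∃ a ∈ Y.admissible κ, ∀ n, (v n).level = κ ∧ Y.Describes (v n) a n := by
  obtain ⟨c, h⟩ := exists_localItineraries hv
  exact ⟨_, _, h.diagonal_mem_admissible, fun n => ⟨h.level n, h.describes_diagonal n⟩⟩

end PathSoundness

/-! ### The Markov coding -/

section Coding

/-- The path `v` consists of the blocks of the itinerary of the orbit `x`. -/
structure CodesOrbit (Y : LabelledSystem X A) (κ : ℕ) (v : ℤ → Vertex A) (x : ℤ → X) : Prop where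
  isOrbit : Y.IsOrbit x
  admissible : Y.label ∘ x ∈ Y.admissible κ
  level : ∀ n, (v n).level = κ
  describes : ∀ n, Y.Describes (v n) (Y.label ∘ x) n

namespace CodesOrbit

variable {v w : ℤ → Vertex A} {x y : ℤ → X}

lemma shift (h : Y.CodesOrbit κ v x) (k : ℤ) :
    Y.CodesOrbit κ (shift k v) (shift k x) where
  isOrbit := h.isOrbit.shift k
  admissible := shift_mem_admissible k h.admissible
  level _ := h.level _
  describes _ := Describes.shift_iff.2 (h.describes _)

lemma isPath (h : Y.CodesOrbit κ v x) : IsPath Y.MarkovAdj v := fun n => by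
  refine ⟨(h.level _).trans (h.level _).symm, OneDim.shift n (Y.label ∘ x), ?_,
    Describes.shift_iff.2 ?_, Describes.shift_iff.2 ?_⟩
  · rw [h.level]
    exact shift_mem_admissible n h.admissible
  · rw [zero_add]
    exact h.describes n
  · rw [add_comm 1 n]
    exact h.describes (n + 1)

lemma unique (hv : Y.CodesOrbit κ v x) (hw : Y.CodesOrbit κ' w x) : v = w := by
  obtain rfl := admissible_level_unique hv.admissible hw.admissible
  exact funext fun n =>
    (hv.describes n).unique (hw.describes n) ((hv.level n).trans (hw.level n).symm)

lemma label_eq (hx : Y.CodesOrbit κ v x) (hy : Y.CodesOrbit κ' w y) {n j : ℤ} (h : v n = w n)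
    (hj : n ≤ j) (hj' : j < n + (v n).remaining + (κ + 1)) : Y.label (x j) = Y.label (y j) := by
  have hyn := hy.describes n
  rw [← h] at hyn
  exact (hx.describes n).apply_eq hyn (by omega) (by rwa [hx.level])

lemma dist_le (hx : Y.CodesOrbit κ v x) (hy : Y.CodesOrbit κ' w y) {N : ℕ}
    (h : ∀ n : ℕ, n ≤ N → v n = w n) : dist (x 0) (y 0) ≤ Y.rate ^ N := by
  have hfinish := (hx.describes N).finish
  rw [hx.level, ← Nat.cast_add] at hfinish
  refine (hx.isOrbit.dist_le hy.isOrbit hfinish fun j hj => ?_).trans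
    (pow_le_pow_of_le_one Y.rate_pos.le Y.rate_lt_one.le (Nat.le_add_right N _))
  rcases le_total j N with hjN | hNj
  · exact hx.label_eq hy (h j hjN) le_rfl (by omega)
  · exact hx.label_eq hy (h N le_rfl) (by omega) (by omega)

lemma recurrent (h : Y.CodesOrbit κ v x)
    (hfuture : {n : ℤ | 0 < n ∧ Y.Describes (v 0) (Y.label ∘ x) n}.Infinite)
    (hpast : {n : ℤ | n < 0 ∧ Y.Describes (v 0) (Y.label ∘ x) n}.Infinite) : Recurrent v :=
  have hunique : ∀ n, Y.Describes (v 0) (Y.label ∘ x) n → v n = v 0 := fun n hn =>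
    (h.describes n).unique hn ((h.level n).trans (h.level 0).symm)
  ⟨⟨v 0, hfuture.mono fun n hn => ⟨hn.1, hunique n hn.2⟩⟩,
    v 0, hpast.mono fun n hn => ⟨hn.1, hunique n hn.2⟩⟩

end CodesOrbit

lemma exists_codesOrbit {x : ℤ → X} (hx : Y.IsOrbit x) (h : Y.label ∘ x ∈ Y.admissible κ) :
    ∃ v, Y.CodesOrbit κ v x := by
  choose v hlevel hv using exists_describes h
  exact ⟨v, hx, h, hlevel, hv⟩

variable (Y) in
/-- The coding of the orbits with admissible itineraries by paths in the Markov graph. -/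
def markovCoding : OrbitCoding (Vertex A) Y.map Y.space Y.rate where
  Adj := Y.MarkovAdj
  Codes v x := ∃ κ, Y.CodesOrbit κ v x
  mem := fun ⟨_, h⟩ n => Y.domain_subset (h.isOrbit n).1
  map_eq := fun ⟨_, h⟩ n => (h.isOrbit n).2
  isPath := fun ⟨_, h⟩ => h.isPath
  exists_codes hv := by
    obtain ⟨κ, a, ha, h⟩ := exists_admissible_of_isPath hv
    have ⟨⟨x, hx, hxa⟩, _⟩ := ha
    subst hxa
    exact ⟨x, κ, hx, ha, fun n => (h n).1, fun n => (h n).2⟩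
  codes_shift := fun ⟨κ, h⟩ k => ⟨κ, h.shift k⟩
  dist_le := fun ⟨_, hx⟩ ⟨_, hy⟩ _ h => hx.dist_le hy h
  finite_codes _ := Set.Subsingleton.finite fun _ ⟨_, hv⟩ _ ⟨_, hw⟩ => hv.unique hw

end Coding

end LabelledSystem

/-! ### Laps of the map -/

namespace GoodMap

/-- The points of `M` away from the closure of the singular set; its connected components are the
laps of the map. -/
def regularPart (F : GoodMap) : Set ℝ := Mset \ closure F.S

/-- A rational number in the lap of `x`. -/
def lap (F : GoodMap) (x : ℝ) : ℚ :=
  Classical.epsilon fun q : ℚ => (q : ℝ) ∈ ordConnectedComponent F.regularPart x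

/-- The points `y` and `z` visit the same laps during the first `k` steps. -/
def SameLaps (F : GoodMap) (k : ℕ) (y z : ℝ) : Prop :=
  ∀ j < k, F.f^[j] y ∈ F.regularPart ∧ F.f^[j] z ∈ F.regularPart ∧
    F.lap (F.f^[j] y) = F.lap (F.f^[j] z)

variable {F : GoodMap} {x y z w u v : ℝ} {k l : ℕ}

section Laps

lemma lap_mem (hx : x ∈ F.regularPart) :
    (F.lap x : ℝ) ∈ ordConnectedComponent F.regularPart x := by
  refine Classical.epsilon_spec (p := fun q : ℚ => (q : ℝ) ∈ ordConnectedComponent _ x) ?_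
  obtain ⟨ε, hε, hball⟩ := Metric.isOpen_iff.1 isClosed_closure.isOpen_compl x hx.2
  have hlap : ball x ε ∩ Mset ⊆ ordConnectedComponent F.regularPart x := by
    have : OrdConnected (ball x ε ∩ Mset) := (convex_ball x ε).ordConnected.inter ordConnected_Icc
    exact subset_ordConnectedComponent ⟨mem_ball_self hε, hx.1⟩ fun y hy => ⟨hy.2, hball hy.1⟩
  have hx' : x ∈ closure (Ioo (0 : ℝ) (1 / 2)) := by
    rw [closure_Ioo (by norm_num)]
    exact hx.1
  obtain ⟨q, hq⟩ := Rat.denseRange_cast.exists_mem_open (isOpen_ball.inter isOpen_Ioo)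
    (mem_closure_iff.1 hx' _ isOpen_ball (mem_ball_self hε))
  exact ⟨q, hlap ⟨hq.1, Ioo_subset_Icc_self hq.2⟩⟩

lemma lap_eq_iff (hx : x ∈ F.regularPart) (hy : y ∈ F.regularPart) :
    F.lap x = F.lap y ↔ uIcc x y ⊆ F.regularPart := by
  refine ⟨fun h => ?_, fun h => by rw [lap, lap, ordConnectedComponent_eq h]⟩
  have hy' := lap_mem hy
  rw [← h, mem_ordConnectedComponent_comm] at hy'
  exact mem_ordConnectedComponent_trans (lap_mem hx) hy'

lemma mem_lap_of_mem_uIcc (hx : x ∈ F.regularPart) (hy : y ∈ F.regularPart)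
    (h : F.lap x = F.lap y) (hw : w ∈ uIcc x y) : w ∈ F.regularPart ∧ F.lap w = F.lap x := by
  have hsub := (lap_eq_iff hx hy).1 h
  exact ⟨hsub hw,
    (lap_eq_iff (hsub hw) hx).2 ((uIcc_subset_uIcc hw left_mem_uIcc).trans hsub)⟩

lemma measurableSet_regularPart : MeasurableSet F.regularPart :=
  measurableSet_Icc.diff isClosed_closure.measurableSet

lemma ordConnected_lap (q : ℚ) : OrdConnected {x | x ∈ F.regularPart ∧ F.lap x = q} := by
  refine ordConnected_iff.2 fun x ⟨hx, hxq⟩ y ⟨hy, hyq⟩ _ w hw => ?_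
  obtain ⟨hw', h⟩ := mem_lap_of_mem_uIcc hx hy (hxq.trans hyq.symm) (Icc_subset_uIcc hw)
  exact ⟨hw', h.trans hxq⟩

lemma measurable_lap : Measurable F.lap := by
  refine measurable_of_restrict_of_restrict_compl (measurableSet_regularPart (F := F))
    (measurable_to_countable' fun q => ?_)
    (measurable_const' fun x y => ?_)
  · convert measurable_subtype_coe (ordConnected_lap (F := F) q).measurableSet using 1
    ext x
    simp
  · simp only [domRestrict_apply, lap, ordConnectedComponent_eq_empty.2 x.2,
      ordConnectedComponent_eq_empty.2 y.2]

lemma deriv_ne_zero (hx : x ∈ F.regularPart) : deriv F.f x ≠ 0 := by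
  intro h
  refine hx.2 (subset_closure ?_)
  by_cases hD : x ∈ F.D
  exacts [.inr hD, .inl ⟨⟨hx.1, hD⟩, h⟩]

lemma differentiableAt (hx : x ∈ F.regularPart) : DifferentiableAt ℝ F.f x :=
  differentiableAt_of_deriv_ne_zero (deriv_ne_zero hx)

lemma strictMonoOn_or_strictAntiOn (huv : u ≤ v) (h : Icc u v ⊆ F.regularPart) :
    StrictMonoOn F.f (Icc u v) ∨ StrictAntiOn F.f (Icc u v) := by
  have hcont : ContinuousOn F.f (Icc u v) := fun x hx =>
    (differentiableAt (h hx)).continuousAt.continuousWithinAt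
  have hne : ∀ x ∈ Icc u v, ∀ y ∈ Icc u v, x < y → F.f x ≠ F.f y := by
    intro x hx y hy hxy heq
    obtain ⟨z, hz, hz'⟩ := exists_deriv_eq_zero hxy (hcont.mono (Icc_subset_Icc hx.1 hy.2)) heq
    exact deriv_ne_zero (h ⟨hx.1.trans hz.1.le, hz.2.le.trans hy.2⟩) hz'
  refine hcont.strictMonoOn_of_injOn_Icc' huv fun x hx y hy heq => ?_
  by_contra hxy
  rcases lt_or_gt_of_ne hxy with hlt | hlt
  exacts [hne x hx y hy hlt heq, hne y hy x hx hlt heq.symm]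

lemma eq_of_lap_eq (hx : x ∈ F.regularPart) (hy : y ∈ F.regularPart) (hlap : F.lap x = F.lap y)
    (h : F.f x = F.f y) : x = y := by
  rcases strictMonoOn_or_strictAntiOn inf_le_sup ((lap_eq_iff hx hy).1 hlap) with hf | hf
  exacts [hf.injOn left_mem_uIcc right_mem_uIcc h, hf.injOn left_mem_uIcc right_mem_uIcc h]

end Laps

section SameLaps

lemma SameLaps.symm (h : F.SameLaps k y z) : F.SameLaps k z y :=
  fun j hj => ⟨(h j hj).2.1, (h j hj).1, (h j hj).2.2.symm⟩

lemma SameLaps.trans (h : F.SameLaps k y z) (h' : F.SameLaps k z w) : F.SameLaps k y w :=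
  fun j hj => ⟨(h j hj).1, (h' j hj).2.1, (h j hj).2.2.trans (h' j hj).2.2⟩

lemma SameLaps.between (hyz : y ≤ z) (h : F.SameLaps k y z) :
    (StrictMonoOn F.f^[k] (Icc y z) ∨ StrictAntiOn F.f^[k] (Icc y z)) ∧
      ∀ w ∈ Icc y z, F.SameLaps k y w := by
  induction k with
  | zero => exact ⟨.inl fun _ _ _ _ h => h, fun w _ j hj => absurd hj (Nat.not_lt_zero j)⟩
  | succ k ih =>
    obtain ⟨hmono, hsame⟩ := ih fun j hj => h j (hj.trans k.lt_succ_self)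
    obtain ⟨hy, hz, hlap⟩ := h k k.lt_succ_self
    have hmaps : MapsTo F.f^[k] (Icc y z) (uIcc (F.f^[k] y) (F.f^[k] z)) := by
      rw [← uIcc_of_le hyz] at hmono ⊢
      rcases hmono with hmono | hmono
      exacts [hmono.monotoneOn.mapsTo_uIcc, hmono.antitoneOn.mapsTo_uIcc]
    refine ⟨?_, fun w hw j hj => ?_⟩
    · rw [Function.iterate_succ']
      rcases strictMonoOn_or_strictAntiOn inf_le_sup ((lap_eq_iff hy hz).1 hlap) with hf | hf <;>
        rcases hmono with hmono | hmono
      · exact .inl (hf.comp hmono hmaps)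
      · exact .inr (hf.comp_strictAntiOn hmono hmaps)
      · exact .inr (hf.comp_strictMonoOn hmono hmaps)
      · exact .inl (hf.comp hmono hmaps)
    · rcases Nat.lt_succ_iff_lt_or_eq.1 hj with hj | rfl
      · exact hsame w hw j hj
      · obtain ⟨hw', hlap'⟩ := mem_lap_of_mem_uIcc hy hz hlap (hmaps hw)
        exact ⟨hy, hw', hlap'.symm⟩

end SameLaps

section DistSingular

lemma S_subset_Mset : F.S ⊆ Mset := union_subset (fun _ hx => hx.1.1) F.hD

lemma dS_le_one (hx : x ∈ Mset) : F.dS x ≤ 1 := by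
  rcases F.S.eq_empty_or_nonempty with h | ⟨y, hy⟩
  · rw [dS, h, infDist_empty]
    exact zero_le_one
  · exact (infDist_le_dist_of_mem hy).trans
      ((Real.dist_le_of_mem_Icc hx (S_subset_Mset hy)).trans (by norm_num))

lemma abs_deriv_mem_Icc (hA : F.SatA) (hM : x ∈ Mset) (hx : x ∉ F.S) (hfx : F.f x ∉ F.S) :
    |deriv F.f x| ∈ Icc (F.dS x ^ F.a) (F.dS x ^ (-F.a)) := by
  obtain ⟨⟨hr, -⟩, -, ⟨hderiv, -⟩, -⟩ := hA x hM hx hfx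
  have hr₀ : 0 < F.r x :=
    (le_min (rpow_nonneg infDist_nonneg _) (rpow_nonneg infDist_nonneg _)).trans_lt hr
  exact hderiv x (mem_ball_self (by positivity))

lemma dS_pos (hA : F.SatA) (hM : x ∈ Mset) (hx : x ∉ F.S) (hfx : F.f x ∉ F.S) : 0 < F.dS x := by
  refine infDist_nonneg.lt_of_ne fun h => hx ?_
  have hle := (abs_deriv_mem_Icc hA hM hx hfx).2
  rw [dS, ← h, zero_rpow (neg_ne_zero.2 (zero_lt_one.trans F.ha).ne')] at hle
  by_cases hD : x ∈ F.D
  exacts [.inr hD, .inl ⟨⟨hM, hD⟩, abs_nonpos_iff.1 hle⟩]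

lemma mem_regularPart (hA : F.SatA) (hM : x ∈ Mset) (hx : x ∉ F.S) (hfx : F.f x ∉ F.S) :
    x ∈ F.regularPart :=
  ⟨hM, fun h => (dS_pos hA hM hx hfx).ne' (infDist_zero_of_mem_closure h)⟩

lemma abs_log_abs_deriv_le (hA : F.SatA) (hM : x ∈ Mset) (hx : x ∉ F.S) (hfx : F.f x ∉ F.S) :
    |(Real.log |deriv F.f x|)| ≤ F.a * |Real.log (F.dS x)| := by
  obtain ⟨hlower, hupper⟩ := abs_deriv_mem_Icc hA hM hx hfx
  have hpos := dS_pos hA hM hx hfx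
  have hlog_lower := Real.log_le_log (rpow_pos_of_pos hpos _) hlower
  have hlog_upper := Real.log_le_log ((rpow_pos_of_pos hpos _).trans_le hlower) hupper
  rw [Real.log_rpow hpos] at hlog_lower hlog_upper
  rw [abs_of_nonpos (Real.log_nonpos hpos.le (dS_le_one hM)), abs_le]
  constructor <;> linarith

end DistSingular

variable (F) in
/-- The labelled system of `F`: orbits in the regular part are labelled by laps, and inverse
branches contract by `e^{-χ/4}`, half of the rate `χ/2` at which hyperbolic times are recorded. -/
def system {χ : ℝ} (hχ : 0 < χ) : LabelledSystem ℝ ℚ where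
  map := F.f
  space := Mset
  domain := F.regularPart
  label := F.lap
  rate := Real.exp (-(χ / 4))
  isCompact_space := isCompact_Icc
  dist_le_one _ hx _ hy := (Real.dist_le_of_mem_Icc hx hy).trans (by norm_num)
  domain_subset _ hx := hx.1
  rate_pos := Real.exp_pos _
  rate_lt_one := Real.exp_lt_one_iff.2 (by linarith)

end GoodMap

/-! ### Contracting inverse branches along a backward orbit -/

section LocalBranches

variable {X : Type*}

/-- The composition `g (m - 1) ∘ ⋯ ∘ g 0`. -/
def compBranch (g : ℕ → X → X) : ℕ → X → X
  | 0 => id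
  | m + 1 => g m ∘ compBranch g m

variable [PseudoMetricSpace X]

/-- Inverse branches `g m` of `f` on shrinking balls around a backward orbit `u`, with Lipschitz
constants `L m` whose products decay like the radii of the balls. -/
structure LocalBranches (f : X → X) (u : ℕ → X) (g : ℕ → X → X) (L : ℕ → ℝ) (r θ : ℝ) :
    Prop where
  radius_pos : 0 < r
  rate_pos : 0 < θ
  center (m : ℕ) : g m (u m) = u (m + 1)
  map_eq (m : ℕ) : ∀ y ∈ ball (u m) (r * θ ^ m), f (g m y) = y
  dist_le (m : ℕ) : ∀ y ∈ ball (u m) (r * θ ^ m), ∀ z ∈ ball (u m) (r * θ ^ m),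
    dist (g m y) (g m z) ≤ L m * dist y z
  nonneg (m : ℕ) : 0 ≤ L m
  prod_le (m : ℕ) : ∏ j ∈ Finset.range m, L j ≤ θ ^ m

namespace LocalBranches

variable {f : X → X} {u : ℕ → X} {g : ℕ → X → X} {L : ℕ → ℝ} {r θ : ℝ} {m j : ℕ} {y z : X}
  (h : LocalBranches f u g L r θ)

include h

lemma compBranch_center (m : ℕ) : compBranch g m (u 0) = u m := by
  induction m with
  | zero => rfl
  | succ m ih => rw [compBranch, Function.comp_apply, ih, h.center]

lemma mem_ball_of_dist_le (hy : y ∈ ball (u 0) r) (hdist : ∀ z ∈ ball (u 0) r,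
      dist (compBranch g m y) (compBranch g m z) ≤ θ ^ m * dist y z) :
    compBranch g m y ∈ ball (u m) (r * θ ^ m) := by
  have hle := hdist _ (mem_ball_self h.radius_pos)
  rw [h.compBranch_center] at hle
  rw [mem_ball, mul_comm]
  exact hle.trans_lt (mul_lt_mul_of_pos_left hy (pow_pos h.rate_pos m))

lemma dist_compBranch_le_prod (m : ℕ) : ∀ y ∈ ball (u 0) r, ∀ z ∈ ball (u 0) r,
    dist (compBranch g m y) (compBranch g m z) ≤ (∏ j ∈ Finset.range m, L j) * dist y z := by
  induction m with
  | zero => intro y _ z _; simp [compBranch]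
  | succ m ih =>
    have hmem : ∀ y ∈ ball (u 0) r, compBranch g m y ∈ ball (u m) (r * θ ^ m) := fun y hy =>
      h.mem_ball_of_dist_le hy fun z hz =>
        (ih y hy z hz).trans (mul_le_mul_of_nonneg_right (h.prod_le m) dist_nonneg)
    intro y hy z hz
    calc dist (compBranch g (m + 1) y) (compBranch g (m + 1) z)
        ≤ L m * dist (compBranch g m y) (compBranch g m z) :=
          h.dist_le m _ (hmem y hy) _ (hmem z hz)
      _ ≤ L m * ((∏ j ∈ Finset.range m, L j) * dist y z) :=
          mul_le_mul_of_nonneg_left (ih y hy z hz) (h.nonneg m)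
      _ = (∏ j ∈ Finset.range (m + 1), L j) * dist y z := by rw [Finset.prod_range_succ]; ring

lemma dist_compBranch_le (m : ℕ) (hy : y ∈ ball (u 0) r) (hz : z ∈ ball (u 0) r) :
    dist (compBranch g m y) (compBranch g m z) ≤ θ ^ m * dist y z :=
  (h.dist_compBranch_le_prod m y hy z hz).trans
    (mul_le_mul_of_nonneg_right (h.prod_le m) dist_nonneg)

lemma compBranch_mem_ball (m : ℕ) (hy : y ∈ ball (u 0) r) :
    compBranch g m y ∈ ball (u m) (r * θ ^ m) :=
  h.mem_ball_of_dist_le hy fun _ hz => h.dist_compBranch_le m hy hz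

lemma map_compBranch (m : ℕ) (hy : y ∈ ball (u 0) r) :
    f (compBranch g (m + 1) y) = compBranch g m y :=
  h.map_eq m _ (h.compBranch_mem_ball m hy)

lemma iterate_compBranch (m j : ℕ) (hy : y ∈ ball (u 0) r) :
    f^[j] (compBranch g (m + j) y) = compBranch g m y := by
  induction j with
  | zero => rfl
  | succ j ih => rw [Function.iterate_succ_apply, ← add_assoc, h.map_compBranch _ hy, ih]

end LocalBranches

end LocalBranches

namespace LabelledSystem

variable {X A : Type*} [MetricSpace X] {Y : LabelledSystem X A} {a : ℤ → A} {u : ℕ → X}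
  {g : ℕ → X → X} {L : ℕ → ℝ} {r : ℝ} {κ : ℕ}

lemma compBranch_mem_cylinder (h : LocalBranches Y.map u g L r Y.rate)
    (hlabel : ∀ (m : ℕ), ∀ y ∈ ball (u 0) r,
      compBranch g m y ∈ Y.domain ∧ Y.label (compBranch g m y) = a (-m))
    (m : ℕ) {q : X} (hq : q ∈ ball (u 0) r) : compBranch g m q ∈ Y.cylinder a (-m) m := by
  intro j hj
  obtain ⟨i, rfl⟩ := Nat.exists_eq_add_of_le' hj.le
  rw [h.iterate_compBranch i j hq, Nat.cast_add, neg_add, neg_add_cancel_right]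
  exact hlabel i q hq

lemma compBranch_iterate_eq (h : LocalBranches Y.map u g L r Y.rate)
    (hinj : ∀ y ∈ Y.domain, ∀ z ∈ Y.domain, Y.label y = Y.label z → Y.map y = Y.map z → y = z)
    (hlabel : ∀ (m : ℕ), ∀ y ∈ ball (u 0) r,
      compBranch g m y ∈ Y.domain ∧ Y.label (compBranch g m y) = a (-m))
    {m : ℕ} {y : X} (hy : y ∈ Y.cylinder a (-m) m) (hball : Y.map^[m] y ∈ ball (u 0) r) :
    compBranch g m (Y.map^[m] y) = y := by
  suffices ∀ i j, i + j = m → compBranch g i (Y.map^[m] y) = Y.map^[j] y from this m 0 rfl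
  intro i
  induction i with
  | zero => rintro j rfl; rw [zero_add]; rfl
  | succ i ih =>
    intro j hj
    obtain ⟨hdom, hlab⟩ := hlabel (i + 1) _ hball
    obtain ⟨hdom', hlab'⟩ := hy j (by omega)
    refine hinj _ hdom _ hdom' ?_ ?_
    · rw [hlab, hlab']
      congr 1
      omega
    · rw [h.map_compBranch i hball, ih (j + 1) (by omega), Function.iterate_succ_apply']

lemma isHyperbolicTime_of_localBranches (h : LocalBranches Y.map u g L r Y.rate)
    (hinj : ∀ y ∈ Y.domain, ∀ z ∈ Y.domain, Y.label y = Y.label z → Y.map y = Y.map z → y = z)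
    (hlabel : ∀ (m : ℕ), ∀ y ∈ ball (u 0) r,
      compBranch g m y ∈ Y.domain ∧ Y.label (compBranch g m y) = a (-m))
    (hκ : closure (Y.cylinder a 0 κ) ⊆ ball (u 0) r) : Y.IsHyperbolicTime a 0 κ := by
  intro s m hs
  obtain rfl : s = -m := by omega
  have hpull : ∀ y ∈ Y.pullback a (-m) m κ,
      Y.map^[m] y ∈ ball (u 0) r ∧ compBranch g m (Y.map^[m] y) = y := fun y hy => by
    have hball : Y.map^[m] y ∈ ball (u 0) r := hκ (by simpa only [hs] using hy.2)
    exact ⟨hball, compBranch_iterate_eq h hinj hlabel hy.1 hball⟩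
  constructor
  · intro q hq
    have hball : q ∈ ball (u 0) r := hκ (by rwa [hs] at hq)
    have hiter : Y.map^[m] (compBranch g m q) = q := by
      simpa only [zero_add] using! h.iterate_compBranch 0 m hball
    exact ⟨_, ⟨compBranch_mem_cylinder h hlabel m hball, by rwa [hiter]⟩, hiter⟩
  · intro y hy z hz
    have hle := h.dist_compBranch_le m (hpull y hy).1 (hpull z hz).1
    rwa [(hpull y hy).2, (hpull z hz).2] at hle

end LabelledSystem

/-! ### Hyperbolic backward orbits -/

namespace GoodMap

variable {F : GoodMap} {χ : ℝ} {x : ℤ → ℝ}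

section Radius

lemma exists_radius {θ β K η C : ℝ} (hθ₀ : 0 < θ) (hθ₁ : θ ≤ 1) (hβ₀ : 0 < β) (hβ₁ : β ≤ 1)
    (hη : 0 < η) (hC : 0 < C) {D : ℕ → ℝ} (hD : ∀ j, C * (θ ^ β) ^ j ≤ D j) :
    ∃ r > 0, ∀ m, r * θ ^ m ≤ D m ∧ r * θ ^ m ≤ D (m + 1) ∧
      K * (r * θ ^ m) ^ β ≤ η * D (m + 1) := by
  set φ := θ ^ β
  have hφ₀ : 0 < φ := rpow_pos_of_pos hθ₀ β
  have hφ₁ : φ ≤ 1 := rpow_le_one hθ₀.le hθ₁ hβ₀.le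
  have hθφ : ∀ m : ℕ, θ ^ m ≤ φ ^ m := fun m => pow_le_pow_left₀ hθ₀.le
    (by simpa only [rpow_one] using rpow_le_rpow_of_exponent_ge hθ₀ hθ₁ hβ₁) m
  have hpow : Tendsto (fun r : ℝ => K * r ^ β) (𝓝 0) (𝓝 0) := by
    simpa [zero_rpow hβ₀.ne'] using ((continuous_rpow_const hβ₀.le).const_mul K).tendsto 0
  have hsmall : ∀ᶠ r in 𝓝[>] (0 : ℝ), r ≤ C * φ ∧ K * r ^ β ≤ η * (C * φ) :=
    nhdsWithin_le_nhds ((eventually_le_nhds (mul_pos hC hφ₀)).and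
      (hpow.eventually_le_const (by positivity)))
  obtain ⟨r, ⟨hr₁, hr₂⟩, hr : 0 < r⟩ := (hsmall.and self_mem_nhdsWithin).exists
  have hnext : ∀ m, r * θ ^ m ≤ D (m + 1) := fun m =>
    calc r * θ ^ m ≤ C * φ * φ ^ m := mul_le_mul hr₁ (hθφ m) (by positivity) (by positivity)
      _ = C * φ ^ (m + 1) := by ring
      _ ≤ D (m + 1) := hD (m + 1)
  refine ⟨r, hr, fun m => ⟨?_, hnext m, ?_⟩⟩
  · calc r * θ ^ m ≤ C * φ ^ m :=
          mul_le_mul (hr₁.trans (mul_le_of_le_one_right hC.le hφ₁)) (hθφ m) (by positivity) hC.le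
      _ ≤ D m := hD m
  · calc K * (r * θ ^ m) ^ β = K * r ^ β * φ ^ m := by
          rw [mul_rpow hr.le (by positivity), ← rpow_natCast_mul hθ₀.le, mul_comm (m : ℝ),
            rpow_mul_natCast hθ₀.le, mul_assoc]
      _ ≤ η * (C * φ) * φ ^ m := mul_le_mul_of_nonneg_right hr₂ (by positivity)
      _ = η * (C * φ ^ (m + 1)) := by ring
      _ ≤ η * D (m + 1) := mul_le_mul_of_nonneg_left (hD (m + 1)) hη.le

end Radius

section InverseBranch

lemma deriv_inverseBranch (hA : F.SatA) {p : ℝ} (hM : p ∈ Mset) (hp : p ∉ F.S)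
    (hfp : F.f p ∉ F.S) : deriv (F.g p) (F.f p) = (deriv F.f p)⁻¹ := by
  obtain ⟨⟨hr, -⟩, ⟨-, hf, hgp, hfg, -, hg⟩, -⟩ := hA p hM hp hfp
  have hr₀ : 0 < 2 * F.r p := mul_pos two_pos
    ((le_min (rpow_nonneg infDist_nonneg _) (rpow_nonneg infDist_nonneg _)).trans_lt hr)
  have hf' : HasDerivAt F.f (deriv F.f p) (F.g p (F.f p)) := by
    rw [hgp]
    exact (hf p (mem_ball_self hr₀)).hasDerivAt
  have hcomp := hf'.comp (F.f p) (hg _ (mem_ball_self hr₀)).hasDerivAt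
  have hid : HasDerivAt (F.f ∘ F.g p) 1 (F.f p) :=
    (hasDerivAt_id _).congr_of_eventuallyEq (eventually_of_mem (ball_mem_nhds _ hr₀) hfg)
  exact eq_inv_of_mul_eq_one_right (hcomp.unique hid)

lemma abs_inverseBranch_sub_le (hA : F.SatA) {p ρ η : ℝ} (hM : p ∈ Mset) (hp : p ∉ F.S)
    (hfp : F.f p ∉ F.S) (hρ : ρ ≤ 2 * F.r p) (hρ₀ : 0 < ρ) (hη₀ : 0 ≤ η)
    (hη : F.K * ρ ^ F.β ≤ η * F.dS p ^ F.a) {y z : ℝ} (hy : y ∈ ball (F.f p) ρ)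
    (hz : z ∈ ball (F.f p) ρ) :
    |F.g p y - F.g p z| ≤ |deriv F.f p|⁻¹ * Real.exp η * |y - z| := by
  obtain ⟨-, ⟨-, -, -, -, -, hg⟩, ⟨-, hlower⟩, ⟨-, hholder⟩⟩ := hA p hM hp hfp
  have hsub := ball_subset_ball hρ (x := F.f p)
  have hcenter := hsub (mem_ball_self hρ₀)
  have hderiv : ∀ w ∈ ball (F.f p) ρ, ‖deriv (F.g p) w‖ ≤ |deriv F.f p|⁻¹ * Real.exp η := by
    intro w hw
    rw [← abs_inv, ← deriv_inverseBranch hA hM hp hfp, Real.norm_eq_abs]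
    set D := deriv (F.g p) (F.f p)
    calc |deriv (F.g p) w| ≤ |D| + |deriv (F.g p) w - D| := by
          linarith [abs_sub_abs_le_abs_sub (deriv (F.g p) w) D]
      _ ≤ |D| + F.K * ρ ^ F.β := by
          gcongr
          refine (hholder w (hsub hw) _ hcenter).trans ?_
          have := F.hK
          have := F.hβ0
          gcongr
          exact (mem_ball.1 hw).le
      _ ≤ |D| * (η + 1) := by
          linarith [mul_le_mul_of_nonneg_left (hlower _ hcenter).1 hη₀]
      _ ≤ |D| * Real.exp η := by gcongr; exact Real.add_one_le_exp η
  exact Convex.norm_image_sub_le_of_norm_deriv_le (fun w hw => hg w (hsub hw)) hderiv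
    (convex_ball _ _) hz hy

end InverseBranch

section HyperbolicPast

/-- Orbits of the natural extension along whose past the singular set is approached slowly, the
expansion never falls below the rate `χ / 2`, the interior of `M` is visited infinitely often and
the cylinders of the present shrink to a point. -/
structure HyperbolicPast (F : GoodMap) {χ : ℝ} (hχ : 0 < χ) (x : ℤ → ℝ) : Prop where
  inMhat : inMhat F.f x
  notMem (n : ℤ) : x n ∉ F.S
  sum_nonneg (m : ℕ) :
    0 ≤ ∑ j ∈ Finset.range m, (Real.log |deriv F.f (x (-((j + 1 : ℕ) : ℤ)))| - χ / 2)
  tempered : ∃ c > 0, ∀ j : ℕ, c * (Real.exp (-(χ / 4)) ^ (F.β / F.a)) ^ j ≤ F.dS (x (-j))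
  frequently_mem : ∃ δ > 0, ∃ᶠ m : ℕ in atTop, x (-m) ∈ Icc δ (1 / 2 - δ)
  exists_cylinder_subset : ∀ r > 0, ∃ k,
    closure ((F.system hχ).cylinder (F.lap ∘ x) 0 k) ⊆ ball (x 0) r

lemma map_eq_of_inMhat (h : inMhat F.f x) (n : ℤ) : F.f (x n) = x (n + 1) := by
  simpa only [add_sub_cancel_right] using h.2 (n + 1)

lemma map_neg_succ (h : inMhat F.f x) (m : ℕ) :
    F.f (x (-((m + 1 : ℕ) : ℤ))) = x (-m) := by
  rw [map_eq_of_inMhat h]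
  congr 1
  push_cast
  ring

lemma isOrbit_of_inMhat (hA : F.SatA) {hχ : 0 < χ} (h : inMhat F.f x) (hS : ∀ n, x n ∉ F.S) :
    (F.system hχ).IsOrbit x := fun n =>
  ⟨mem_regularPart hA (h.1 n) (hS n) (map_eq_of_inMhat h n ▸ hS _), map_eq_of_inMhat h n⟩

lemma prod_le_pow_of_sum_nonneg {d : ℕ → ℝ} (hd : ∀ j, d j ≠ 0) {m : ℕ}
    (h : 0 ≤ ∑ j ∈ Finset.range m, (Real.log |d j| - χ / 2)) :
    ∏ j ∈ Finset.range m, (|d j|⁻¹ * Real.exp (χ / 4)) ≤ Real.exp (-(χ / 4)) ^ m := by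
  have hfactor : ∀ j, |d j|⁻¹ * Real.exp (χ / 4) =
      Real.exp (-(Real.log |d j| - χ / 2)) * Real.exp (-(χ / 4)) := fun j => by
    rw [← Real.exp_add, show -(Real.log |d j| - χ / 2) + -(χ / 4) = -Real.log |d j| + χ / 4 by
      ring, Real.exp_add, Real.exp_neg, Real.exp_log (abs_pos.2 (hd j))]
  simp only [hfactor, Finset.prod_mul_distrib, Finset.prod_const, Finset.card_range]
  refine mul_le_of_le_one_left (by positivity) ?_
  rw [← Real.exp_sum, Finset.sum_neg_distrib, Real.exp_le_one_iff]
  exact neg_nonpos.2 h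

namespace HyperbolicPast

variable {hχ : 0 < χ} (h : HyperbolicPast F hχ x)

include h

lemma exists_radius (hA : F.SatA) : ∃ r > 0, ∀ m : ℕ,
    r * Real.exp (-(χ / 4)) ^ m ≤ F.dS (x (-m)) ^ F.a ∧
    r * Real.exp (-(χ / 4)) ^ m ≤ 2 * F.r (x (-((m + 1 : ℕ) : ℤ))) ∧
    F.K * (r * Real.exp (-(χ / 4)) ^ m) ^ F.β ≤
      χ / 4 * F.dS (x (-((m + 1 : ℕ) : ℤ))) ^ F.a := by
  have ha : 0 < F.a := zero_lt_one.trans F.ha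
  obtain ⟨c, hc, htemp⟩ := h.tempered
  have hpow : ∀ j : ℕ, c ^ F.a * (Real.exp (-(χ / 4)) ^ F.β) ^ j ≤ F.dS (x (-j)) ^ F.a := by
    intro j
    refine le_of_eq_of_le ?_ (rpow_le_rpow (by positivity) (htemp j) ha.le)
    rw [mul_rpow hc.le (by positivity), ← rpow_natCast_mul (by positivity), mul_comm (j : ℝ),
      rpow_mul_natCast (by positivity), ← rpow_mul (by positivity), div_mul_cancel₀ _ ha.ne']
  obtain ⟨r, hr, hle⟩ := GoodMap.exists_radius (K := F.K) (Real.exp_pos _)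
    (Real.exp_le_one_iff.2 (by linarith)) F.hβ0 F.hβ1.le (by positivity : 0 < χ / 4)
    (rpow_pos_of_pos hc F.a) hpow
  refine ⟨r, hr, fun m => ⟨(hle m).1, ?_, (hle m).2.2⟩⟩
  obtain ⟨⟨hmin, -⟩, -⟩ := hA _ (h.inMhat.1 (-((m + 1 : ℕ) : ℤ))) (h.notMem _)
    (map_neg_succ h.inMhat m ▸ h.notMem _)
  rw [map_neg_succ h.inMhat] at hmin
  have hle_min := le_min (hle m).2.1 (hle m).1
  have hρ : 0 < r * Real.exp (-(χ / 4)) ^ m := by positivity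
  linarith [hle_min.trans_lt hmin]

lemma exists_localBranches (hA : F.SatA) : ∃ r,
    LocalBranches F.f (fun m => x (-m)) (fun m => F.g (x (-((m + 1 : ℕ) : ℤ))))
      (fun m => |deriv F.f (x (-((m + 1 : ℕ) : ℤ)))|⁻¹ * Real.exp (χ / 4)) r
      (Real.exp (-(χ / 4))) ∧
    ∀ m : ℕ, r * Real.exp (-(χ / 4)) ^ m ≤ F.dS (x (-m)) := by
  have horbit := isOrbit_of_inMhat hA (hχ := hχ) h.inMhat h.notMem
  obtain ⟨r, hr, hle⟩ := h.exists_radius hA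
  have hsat := fun m : ℕ => (hA _ (h.inMhat.1 (-((m + 1 : ℕ) : ℤ))) (h.notMem _)
    (map_neg_succ h.inMhat m ▸ h.notMem _)).2.1
  refine ⟨r, ⟨hr, Real.exp_pos _, fun m => ?_, fun m y hy => ?_, fun m y hy z hz => ?_,
    fun m => by positivity, fun m =>
      prod_le_pow_of_sum_nonneg (fun j => deriv_ne_zero (horbit _).1) (h.sum_nonneg m)⟩,
    fun m => (hle m).1.trans ?_⟩
  · simpa only [map_neg_succ h.inMhat] using (hsat m).2.2.1
  · refine (hsat m).2.2.2.1 y ?_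
    rw [map_neg_succ h.inMhat]
    exact ball_subset_ball (hle m).2.1 hy
  · rw [← map_neg_succ h.inMhat] at hy hz
    exact abs_inverseBranch_sub_le hA (h.inMhat.1 _) (h.notMem _)
      (map_neg_succ h.inMhat m ▸ h.notMem _) (hle m).2.1 (by positivity) (by positivity)
      (hle m).2.2 hy hz
  · exact rpow_le_self_of_le_one infDist_nonneg (dS_le_one (h.inMhat.1 _)) F.ha.le

lemma compBranch_mem_Mset {g : ℕ → ℝ → ℝ} {L : ℕ → ℝ} {r θ : ℝ} (hθ : θ < 1)
    (hb : LocalBranches F.f (fun m => x (-m)) g L r θ) {y : ℝ} (hy : y ∈ ball (x (-(0 : ℕ))) r)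
    (m : ℕ) : compBranch g m y ∈ Mset := by
  obtain ⟨δ, hδ, hfreq⟩ := h.frequently_mem
  have hsmall : ∀ᶠ n : ℕ in atTop, r * θ ^ n < δ := by
    have := (tendsto_pow_atTop_nhds_zero_of_lt_one hb.rate_pos.le hθ).const_mul r
    rw [mul_zero] at this
    exact this.eventually_lt_const hδ
  obtain ⟨n, ⟨hmem, hn⟩, hmn⟩ := ((hfreq.and_eventually hsmall).and_eventually
    (eventually_ge_atTop m)).exists
  obtain ⟨j, rfl⟩ := Nat.exists_eq_add_of_le hmn
  rw [← hb.iterate_compBranch m j hy]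
  refine MapsTo.iterate F.hmaps j ?_
  have hdist := abs_lt.1 ((hb.compBranch_mem_ball (m + j) hy).trans hn)
  exact ⟨by linarith [hdist.1, hmem.1], by linarith [hdist.2, hmem.2]⟩

lemma compBranch_mem_regularPart (hA : F.SatA) {g : ℕ → ℝ → ℝ} {L : ℕ → ℝ} {r θ : ℝ}
    (hθ : θ < 1) (hb : LocalBranches F.f (fun m => x (-m)) g L r θ) {m : ℕ}
    (hle : r * θ ^ m ≤ F.dS (x (-m))) {y : ℝ} (hy : y ∈ ball (x (-(0 : ℕ))) r) :
    compBranch g m y ∈ F.regularPart ∧ F.lap (compBranch g m y) = F.lap (x (-m)) := by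
  have horbit := isOrbit_of_inMhat hA (hχ := hχ) h.inMhat h.notMem
  have hsub : uIcc (x (-m)) (compBranch g m y) ⊆ F.regularPart := by
    refine fun w hw => ⟨uIcc_subset_Icc (h.inMhat.1 _) (h.compBranch_mem_Mset hθ hb hy m) hw,
      fun hcl => ?_⟩
    have hdS : F.dS (x (-m)) ≤ dist w (x (-m)) := by
      have := infDist_le_infDist_add_dist (s := F.S) (x := x (-m)) (y := w)
      rwa [infDist_zero_of_mem_closure hcl, zero_add, dist_comm] at this
    exact ((Set.abs_sub_left_of_mem_uIcc hw).trans_lt (hb.compBranch_mem_ball m hy)).not_ge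
      (hle.trans hdS)
  have hmem := hsub right_mem_uIcc
  exact ⟨hmem, ((lap_eq_iff (horbit _).1 hmem).2 hsub).symm⟩

theorem exists_isHyperbolicTime (hA : F.SatA) :
    ∃ κ, (F.system hχ).IsHyperbolicTime (F.lap ∘ x) 0 κ := by
  obtain ⟨r, hb, hle⟩ := h.exists_localBranches hA
  obtain ⟨κ, hκ⟩ := h.exists_cylinder_subset r hb.radius_pos
  exact ⟨κ, LabelledSystem.isHyperbolicTime_of_localBranches (Y := F.system hχ) hb
    (fun _ hy _ hz => eq_of_lap_eq hy hz) (fun m _ hy =>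
      h.compBranch_mem_regularPart hA (F.system hχ).rate_lt_one hb (hle m) hy) hκ⟩

end HyperbolicPast

end HyperbolicPast

end GoodMap

/-! ### Maximal ergodic theorem and record times -/

section MaximalErgodic

variable {α : Type*} {T S : α → α} {f : α → ℝ}

/-- The maximum of the Birkhoff sums of `f` along `T` of lengths `0, …, N`, through the recursion
which the maximal ergodic theorem exploits. -/
def birkhoffMax (T : α → α) (f : α → ℝ) : ℕ → α → ℝ
  | 0 => 0
  | N + 1 => fun x => max 0 (f x + birkhoffMax T f N (T x))

lemma birkhoffMax_nonneg (N : ℕ) (x : α) : 0 ≤ birkhoffMax T f N x := by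
  cases N with
  | zero => exact le_rfl
  | succ N => exact le_max_left _ _

lemma monotone_birkhoffMax : Monotone (birkhoffMax T f) := by
  refine monotone_nat_of_le_succ fun N => ?_
  induction N with
  | zero => exact fun x => birkhoffMax_nonneg 1 x
  | succ N ih => exact fun x => max_le_max le_rfl (add_le_add_right (ih (T x)) _)

lemma birkhoffSum_le_birkhoffMax (n : ℕ) (x : α) : birkhoffSum T f n x ≤ birkhoffMax T f n x := by
  induction n generalizing x with
  | zero => exact le_rfl
  | succ n ih =>
    rw [birkhoffSum_succ']
    exact (add_le_add_right (ih (T x)) _).trans (le_max_right _ _)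

variable [MeasurableSpace α] {μ : Measure α}

lemma integrable_birkhoffMax (hT : MeasurePreserving T μ μ) (hf : Integrable f μ) (N : ℕ) :
    Integrable (birkhoffMax T f N) μ := by
  induction N with
  | zero => exact integrable_zero _ _ _
  | succ N ih =>
    exact (integrable_zero _ _ _).sup (hf.add (hT.integrable_comp_of_integrable ih))

lemma nullMeasurableSet_birkhoffMax_pos (hT : MeasurePreserving T μ μ) (hf : Integrable f μ)
    (N : ℕ) : NullMeasurableSet {x | 0 < birkhoffMax T f N x} μ :=
  nullMeasurableSet_lt aemeasurable_const (integrable_birkhoffMax hT hf N).aemeasurable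

lemma setIntegral_birkhoffMax_pos_nonneg (hT : MeasurePreserving T μ μ) (hf : Integrable f μ)
    (N : ℕ) : 0 ≤ ∫ x in {x | 0 < birkhoffMax T f N x}, f x ∂μ := by
  cases N with
  | zero => simp [birkhoffMax]
  | succ N =>
    have hM := integrable_birkhoffMax hT hf
    have hE := nullMeasurableSet_birkhoffMax_pos hT hf (N + 1)
    have hle : ∀ x, birkhoffMax T f (N + 1) x - birkhoffMax T f N (T x) ≤
        indicator {x | 0 < birkhoffMax T f (N + 1) x} f x := by
      intro x
      by_cases hx : x ∈ {x | 0 < birkhoffMax T f (N + 1) x}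
      · rw [indicator_of_mem hx]
        have : 0 < f x + birkhoffMax T f N (T x) :=
          (lt_max_iff.1 (mem_ofPred_eq.mp hx)).resolve_left (lt_irrefl _)
        simp only [birkhoffMax, max_eq_right this.le, add_sub_cancel_right, le_refl]
      · rw [indicator_of_notMem hx]
        exact sub_nonpos.2 ((not_lt.1 hx).trans (birkhoffMax_nonneg N (T x)))
    calc (0 : ℝ) ≤ ∫ x, birkhoffMax T f (N + 1) x ∂μ - ∫ x, birkhoffMax T f N x ∂μ :=
          sub_nonneg.2 (integral_mono (hM N) (hM (N + 1)) (monotone_birkhoffMax N.le_succ))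
      _ = ∫ x, birkhoffMax T f (N + 1) x - birkhoffMax T f N (T x) ∂μ := by
          have hcomp := integral_map hT.aemeasurable (f := birkhoffMax T f N)
            (by rw [hT.map_eq]; exact (hM N).aestronglyMeasurable)
          rw [hT.map_eq] at hcomp
          rw [hcomp]
          exact (integral_sub (hM _) (hT.integrable_comp_of_integrable (hM N))).symm
      _ ≤ ∫ x, indicator {x | 0 < birkhoffMax T f (N + 1) x} f x ∂μ :=
          integral_mono ((hM _).sub (hT.integrable_comp_of_integrable (hM N)))
            (hf.indicator₀ hE) hle
      _ = _ := integral_indicator₀ hE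

theorem integral_nonneg_of_ae_exists_birkhoffSum_pos (hT : MeasurePreserving T μ μ)
    (hf : Integrable f μ) (hpos : ∀ᵐ x ∂μ, ∃ n, 0 < birkhoffSum T f n x) :
    0 ≤ ∫ x, f x ∂μ := by
  have hunion : (⋃ N, {x | 0 < birkhoffMax T f N x}) =ᵐ[μ] univ := by
    refine eventuallyEq_univ.2 ?_
    filter_upwards [hpos] with x ⟨n, hn⟩
    exact mem_iUnion.2 ⟨n, hn.trans_le (birkhoffSum_le_birkhoffMax n x)⟩
  have hlim := tendsto_setIntegral_of_monotone₀ (μ := μ) (f := f)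
    (nullMeasurableSet_birkhoffMax_pos hT hf)
    (fun _ _ hNM x hx => lt_of_lt_of_le hx (monotone_birkhoffMax hNM x)) hf.integrableOn
  rw [setIntegral_congr_set hunion, setIntegral_univ] at hlim
  exact ge_of_tendsto' hlim (setIntegral_birkhoffMax_pos_nonneg hT hf)

lemma measurable_birkhoffSum (hT : Measurable T) (hf : Measurable f) (n : ℕ) :
    Measurable (birkhoffSum T f n) :=
  Finset.measurable_sum _ fun k _ => hf.comp (hT.iterate k)

/-- On the invariant set without record times, the maximal ergodic theorem bounds the integral of
`f` from above along `S` and from below along `T`. -/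
theorem ae_exists_forall_birkhoffSum_nonneg [IsFiniteMeasure μ] (hT : MeasurePreserving T μ μ)
    (hS : Measurable S) (hST : Function.LeftInverse S T) (hfm : Measurable f)
    (hf : Integrable f μ) {c : ℝ} (hc : 0 < c)
    (hgrow : ∀ᵐ x ∂μ, ∃ n : ℕ, n * c < birkhoffSum T f n x) :
    ∀ᵐ x ∂μ, ∃ t : ℕ, ∀ m, 0 ≤ birkhoffSum S f m (T^[t] x) := by
  set E : Set α := {x | ∀ t : ℕ, ∃ m, birkhoffSum S f m (T^[t] x) < 0} with hE_def
  have hE : MeasurableSet E := by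
    simp only [hE_def, ofPred_forall, ofPred_exists]
    exact .iInter fun t => .iUnion fun m => measurableSet_lt
      ((measurable_birkhoffSum hS hfm m).comp (hT.measurable.iterate t)) measurable_const
  have hT_E : MeasurePreserving T (μ.restrict E) (μ.restrict E) := by
    have hsub : E ⊆ T ⁻¹' E := fun x hx t => hx (t + 1)
    have heq := ae_eq_of_subset_of_measure_ge hsub
      (hT.measure_preimage hE.nullMeasurableSet).le hE.nullMeasurableSet (measure_ne_top _ _)
    have := hT.restrict_preimage hE
    rwa [← Measure.restrict_congr_set heq] at this
  have hS_E : MeasurePreserving S (μ.restrict E) (μ.restrict E) := by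
    refine ⟨hS, ?_⟩
    conv_lhs => rw [← hT_E.map_eq, Measure.map_map hS hT.measurable, hST.comp_eq_id,
      Measure.map_id]
  have hupper : 0 ≤ ∫ x in E, -f x ∂μ := by
    refine integral_nonneg_of_ae_exists_birkhoffSum_pos hS_E hf.restrict.neg ?_
    filter_upwards [ae_restrict_mem hE] with x hx
    obtain ⟨m, hm⟩ := hx 0
    exact ⟨m, (neg_pos.2 hm).trans_eq (birkhoffSum_neg S f m x).symm⟩
  have hlower : 0 ≤ ∫ x in E, f x - c ∂μ := by
    refine integral_nonneg_of_ae_exists_birkhoffSum_pos hT_E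
      (hf.restrict.sub (integrable_const c)) ?_
    filter_upwards [ae_restrict_of_ae hgrow] with x ⟨n, hn⟩
    refine ⟨n, ?_⟩
    have hconst : birkhoffSum T (fun _ => c) n x = n * c := by simp [birkhoffSum]
    have := birkhoffSum_sub T f (fun _ => c) n x
    rw [hconst] at this
    exact (sub_pos.2 hn).trans_eq this.symm
  have hE_zero : μ.real E = 0 := by
    rw [integral_neg] at hupper
    rw [integral_sub hf.restrict (integrable_const c), setIntegral_const, smul_eq_mul] at hlower
    nlinarith [measureReal_nonneg (μ := μ) (s := E)]
  filter_upwards [measure_eq_zero_iff_ae_notMem.1 ((measureReal_eq_zero_iff).1 hE_zero)] with x hx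
  simpa only [hE_def, mem_ofPred_eq, not_forall, not_exists, not_lt] using hx

theorem ae_eventually_abs_iterate_le [IsProbabilityMeasure μ] (hT : MeasurePreserving T μ μ)
    (hf : Integrable f μ) {ε : ℝ} (hε : 0 < ε) :
    ∀ᵐ x ∂μ, ∀ᶠ j : ℕ in atTop, |f (T^[j] x)| ≤ ε * j := by
  have hsum : ∑' j : ℕ, μ {x | |f x| / ε ∈ Ioi (j : ℝ)} ≠ ⊤ := by
    let _ : MeasureSpace α := ⟨μ⟩
    have : IsProbabilityMeasure (volume : Measure α) := inferInstanceAs (IsProbabilityMeasure μ)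
    exact (ProbabilityTheory.tsum_prob_mem_Ioi_lt_top (X := fun x => |f x| / ε)
      (hf.abs.div_const ε) fun x => div_nonneg (abs_nonneg _) hε.le).ne
  have hpre : ∀ j : ℕ, μ (T^[j] ⁻¹' {x | |f x| / ε ∈ Ioi (j : ℝ)}) =
      μ {x | |f x| / ε ∈ Ioi (j : ℝ)} := fun j =>
    (hT.iterate j).measure_preimage
      ((hf.abs.div_const ε).aemeasurable.nullMeasurable measurableSet_Ioi)
  simp_rw [← hpre] at hsum
  filter_upwards [ae_eventually_notMem hsum] with x hx
  filter_upwards [hx] with j hj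
  rw [mul_comm, ← div_le_iff₀ hε]
  exact not_lt.1 hj

end MaximalErgodic

/-! ### The shift of bi-infinite sequences -/

section ShiftMeasure

variable {α : Type*}

lemma shift_iterate (k : ℤ) (n : ℕ) (x : ℤ → α) : (shift k)^[n] x = shift (n * k) x := by
  induction n with
  | zero => rw [Function.iterate_zero_apply, Nat.cast_zero, zero_mul, shift_zero]
  | succ n ih => rw [Function.iterate_succ_apply', ih, shift_shift]; push_cast; ring_nf

lemma shift_neg_shift (k : ℤ) (x : ℤ → α) : shift (-k) (shift k x) = x := by
  rw [shift_shift, neg_add_cancel, shift_zero]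

variable [MeasurableSpace α] {ν : Measure (ℤ → α)}

lemma measurable_shift (k : ℤ) : Measurable (shift k : (ℤ → α) → ℤ → α) :=
  measurable_pi_lambda _ fun n => measurable_pi_apply (n + k)

lemma measurePreserving_shift (hν : ν.map (shift 1) = ν) (k : ℤ) :
    MeasurePreserving (shift k) ν ν := by
  have hnat : ∀ n : ℕ, MeasurePreserving (shift (n : ℤ)) ν ν := fun n => by
    have := MeasurePreserving.iterate ⟨measurable_shift 1, hν⟩ n
    rwa [show (shift 1 : (ℤ → α) → ℤ → α)^[n] = shift (n : ℤ) from
      funext fun x => by rw [shift_iterate, mul_one]] at this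
  obtain ⟨n, rfl | rfl⟩ := k.eq_nat_or_neg
  · exact hnat n
  · refine ⟨measurable_shift _, ?_⟩
    conv_lhs => rw [← (hnat n).map_eq, Measure.map_map (measurable_shift _) (measurable_shift _),
      show shift (-(n : ℤ)) ∘ shift (n : ℤ) = (id : (ℤ → α) → ℤ → α) from
        funext (shift_neg_shift _), Measure.map_id]

lemma ae_forall_shift (hν : ν.map (shift 1) = ν) {p : (ℤ → α) → Prop} (h : ∀ᵐ x ∂ν, p x) :
    ∀ᵐ x ∂ν, ∀ k, p (shift k x) :=
  ae_all_iff.2 fun k => (measurePreserving_shift hν k).quasiMeasurePreserving.ae h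

theorem ae_forall_frequently_shift_mem [IsFiniteMeasure ν] (hν : ν.map (shift 1) = ν)
    {s : Set (ℤ → α)} (hs : NullMeasurableSet s ν) :
    ∀ᵐ x ∂ν, ∀ k, shift k x ∈ s →
      (∃ᶠ n : ℤ in atTop, shift n x ∈ s) ∧ ∃ᶠ n : ℤ in atBot, shift n x ∈ s := by
  have hrec : ∀ k, ∀ᵐ x ∂ν, x ∈ s → ∃ᶠ n : ℕ in atTop, (shift k)^[n] x ∈ s := fun k =>
    (measurePreserving_shift hν k).conservative.ae_mem_imp_frequently_image_mem hs
  filter_upwards [ae_forall_shift hν (hrec 1), ae_forall_shift hν (hrec (-1))]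
    with x htop hbot k hk
  simp only [shift_iterate, shift_shift, mul_one, mul_neg_one] at htop hbot
  exact ⟨(tendsto_atTop_add_const_right _ k tendsto_natCast_atTop_atTop).frequently (htop k hk),
    (tendsto_atBot_add_const_right _ k
      (tendsto_neg_atTop_atBot.comp tendsto_natCast_atTop_atTop)).frequently (hbot k hk)⟩

end ShiftMeasure

section Frequently

variable {P : ℤ → Prop}

lemma infinite_pos_of_frequently_atTop (h : ∃ᶠ n in atTop, P n) :
    {n | 0 < n ∧ P n}.Infinite :=
  Set.infinite_of_forall_exists_gt fun N => by
    obtain ⟨n, hn, hP⟩ := frequently_atTop.1 h (max 1 (N + 1))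
    exact ⟨n, ⟨by omega, hP⟩, by omega⟩

lemma infinite_neg_of_frequently_atBot (h : ∃ᶠ n in atBot, P n) :
    {n | n < 0 ∧ P n}.Infinite :=
  Set.infinite_of_forall_exists_lt fun N => by
    obtain ⟨n, hn, hP⟩ := frequently_atBot.1 h (min (-1) (N - 1))
    exact ⟨n, ⟨by omega, hP⟩, by omega⟩

end Frequently

section Itinerary

lemma measurableSet_of_forall_eqOn_finset {ι A : Type*} [Countable A] [MeasurableSpace A]
    [MeasurableSingletonClass A] {s : Set (ι → A)} (J : Finset ι)
    (h : ∀ a ∈ s, ∀ b, (∀ i ∈ J, a i = b i) → b ∈ s) : MeasurableSet s := by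
  have hrestrict : Measurable (J.restrict : (ι → A) → J → A) :=
    measurable_pi_lambda _ fun i => measurable_pi_apply _
  have hs : s = J.restrict ⁻¹' (J.restrict '' s) := by
    refine (subset_preimage_image _ _).antisymm ?_
    rintro b ⟨a, ha, hab⟩
    exact h a ha b fun i hi => congrFun hab ⟨i, hi⟩
  rw [hs]
  exact hrestrict (to_countable _).measurableSet

namespace LabelledSystem

variable {X A : Type*} [MetricSpace X] [Countable A] [MeasurableSpace A]
  [MeasurableSingletonClass A] (Y : LabelledSystem X A)

lemma measurableSet_isHyperbolicTime (t : ℤ) (κ : ℕ) :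
    MeasurableSet {a | Y.IsHyperbolicTime a t κ} := by
  simp only [IsHyperbolicTime, ofPred_forall]
  refine .iInter fun s => .iInter fun m => .iInter fun _ =>
    measurableSet_of_forall_eqOn_finset (Finset.Ico s (s + (m + κ : ℕ))) fun a ha b hab => ?_
  exact Contracts.congr (fun j hj => hab _ (Finset.mem_Ico.2 (by omega))) ha

lemma measurableSet_describes (v : Vertex A) (n : ℤ) : MeasurableSet {a | Y.Describes v a n} := by
  have hword : MeasurableSet {a : ℤ → A | v.word =
      readWord a (n - v.elapsed) (v.elapsed + v.remaining + (v.level + 1))} := by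
    refine measurableSet_of_forall_eqOn_finset
      (Finset.Ico (n - v.elapsed : ℤ) (n + v.remaining + (v.level + 1))) fun a ha b hab => ?_
    refine (show v.word = _ from ha).trans (List.map_congr_left fun j hj => ?_)
    have := List.mem_range.1 hj
    exact hab _ (Finset.mem_Ico.2 (by omega))
  have hyp := Y.measurableSet_isHyperbolicTime
  have hbetween : MeasurableSet {a : ℤ → A | ∀ t, n - v.elapsed < t → t < n + v.remaining →
      ¬ Y.IsHyperbolicTime a t (v.level + 1)} := by
    simp only [ofPred_forall]
    exact .iInter fun t => .iInter fun _ => .iInter fun _ => (hyp t _).compl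
  have heq : {a | Y.Describes v a n} = {a | Y.IsHyperbolicTime a (n - v.elapsed) (v.level + 1) ∧
      0 < v.remaining ∧ (∀ t, n - v.elapsed < t → t < n + v.remaining →
        ¬ Y.IsHyperbolicTime a t (v.level + 1)) ∧
      Y.IsHyperbolicTime a (n + v.remaining) (v.level + 1) ∧
      v.word = readWord a (n - v.elapsed) (v.elapsed + v.remaining + (v.level + 1))} :=
    ext fun a => ⟨fun h => ⟨h.start, h.remaining_pos, h.between, h.finish, h.word⟩,
      fun ⟨h₀, hpos, hbtw, h₁, hw⟩ => ⟨h₀, hpos, hbtw, h₁, hw⟩⟩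
  rw [heq]
  exact (hyp _ _).inter ((MeasurableSet.const _).inter
    (hbetween.inter ((hyp _ _).inter hword)))

end LabelledSystem

end Itinerary

section AlmostEveryCoding

namespace LabelledSystem

variable {X A : Type*} [MetricSpace X] {Y : LabelledSystem X A}

lemma not_isHyperbolicTime_zero {y : X} (hy : y ∉ Y.map '' Y.domain) (a : ℤ → A) (t : ℤ) :
    ¬ Y.IsHyperbolicTime a t 0 := fun h => by
  have hyp := h (t - 1) 1 (by push_cast; ring)
  have hmem : y ∈ closure (Y.cylinder a (t - 1 + (1 : ℕ)) 0) := by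
    rw [cylinder_zero, closure_univ]
    trivial
  obtain ⟨z, hz, rfl⟩ := hyp.surjOn hmem
  exact hy ⟨z, (hz.1 0 one_pos).1, rfl⟩

variable [MeasurableSpace X] [MeasurableSpace A]

lemma measurable_label_comp (hY : Measurable Y.label) :
    Measurable fun x : ℤ → X => Y.label ∘ x :=
  measurable_pi_lambda _ fun n => hY.comp (measurable_pi_apply n)

variable [Countable A] [MeasurableSingletonClass A] {ν : Measure (ℤ → X)} [IsFiniteMeasure ν]

/-- The level of the itinerary is the least one at which hyperbolic times exist. -/
lemma ae_label_comp_mem_admissible (hν : ν.map (shift 1) = ν) (hY : Measurable Y.label) {y : X}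
    (hy : y ∉ Y.map '' Y.domain) :
    ∀ᵐ x ∂ν, Y.IsOrbit x → (∃ κ t, Y.IsHyperbolicTime (Y.label ∘ x) t κ) →
      ∃ κ, Y.label ∘ x ∈ Y.admissible κ := by
  classical
  have hrec := ae_all_iff.2 fun κ => ae_forall_frequently_shift_mem hν
    (measurable_label_comp hY (Y.measurableSet_isHyperbolicTime 0 κ)).nullMeasurableSet
  filter_upwards [hrec] with x hrec hx hex
  have hshift : ∀ κ t, shift t x ∈ (fun x => Y.label ∘ x) ⁻¹' {a | Y.IsHyperbolicTime a 0 κ} ↔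
      Y.IsHyperbolicTime (Y.label ∘ x) t κ := fun κ t => by
    rw [mem_preimage, mem_ofPred_eq, show Y.label ∘ shift t x = shift t (Y.label ∘ x) from rfl,
      isHyperbolicTime_shift, zero_add]
  simp only [hshift] at hrec
  obtain ⟨t, ht⟩ := Nat.find_spec hex
  obtain ⟨κ, hκ⟩ : ∃ κ, Nat.find hex = κ + 1 := Nat.exists_eq_succ_of_ne_zero fun h₀ =>
    not_isHyperbolicTime_zero hy _ t (h₀ ▸ ht)
  obtain ⟨htop, hbot⟩ := hrec _ t (hκ ▸ ht)
  exact ⟨κ, ⟨x, hx, rfl⟩, frequently_atTop.1 htop, frequently_atBot.1 hbot, fun t h =>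
    Nat.find_min hex (hκ ▸ κ.lt_succ_self) ⟨t, h⟩⟩

theorem ae_exists_codes_recurrent (hν : ν.map (shift 1) = ν) (hY : Measurable Y.label) {y : X}
    (hy : y ∉ Y.map '' Y.domain) :
    ∀ᵐ x ∂ν, Y.IsOrbit x → (∃ κ t, Y.IsHyperbolicTime (Y.label ∘ x) t κ) →
      ∃ v, Y.markovCoding.Codes v x ∧ Recurrent v := by
  have hrec := ae_all_iff.2 fun v => ae_forall_frequently_shift_mem hν
    (measurable_label_comp hY (Y.measurableSet_describes v 0)).nullMeasurableSet
  filter_upwards [ae_label_comp_mem_admissible hν hY hy, hrec] with x hadm hrec hx hex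
  have hshift : ∀ v n, shift n x ∈ (fun x => Y.label ∘ x) ⁻¹' {a | Y.Describes v a 0} ↔
      Y.Describes v (Y.label ∘ x) n := fun v n => by
    rw [mem_preimage, mem_ofPred_eq, show Y.label ∘ shift n x = shift n (Y.label ∘ x) from rfl,
      Describes.shift_iff, zero_add]
  simp only [hshift] at hrec
  obtain ⟨κ, hκ⟩ := hadm hx hex
  obtain ⟨v, hv⟩ := exists_codesOrbit hx hκ
  obtain ⟨htop, hbot⟩ := hrec (v 0) 0 (hv.describes 0)
  exact ⟨v, ⟨κ, hv⟩, hv.recurrent (infinite_pos_of_frequently_atTop htop)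
    (infinite_neg_of_frequently_atBot hbot)⟩

end LabelledSystem

end AlmostEveryCoding

section Recurrence

variable {X : Type*} {x : ℤ → X}

lemma injective_shift_iff {k : ℤ} : Function.Injective (shift k x) ↔ Function.Injective x :=
  Function.Injective.of_comp_iff' x (Equiv.addRight k).bijective

section Topology

variable [TopologicalSpace X]

lemma ae_forall_frequently_shift_mem_nhds [SecondCountableTopology X] [MeasurableSpace X]
    [BorelSpace X] {ν : Measure (ℤ → X)} [IsFiniteMeasure ν] (hν : ν.map (shift 1) = ν) :
    ∀ᵐ x ∂ν, ∀ k, ∀ s ∈ 𝓝 x, ∃ᶠ n : ℕ in atTop, shift (n * k) x ∈ s := by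
  refine ae_all_iff.2 fun k => ?_
  simpa only [shift_iterate] using
    (measurePreserving_shift hν k).conservative.ae_frequently_mem_of_mem_nhds

lemma frequently_apply_mem {k : ℤ} (h : ∀ s ∈ 𝓝 x, ∃ᶠ n : ℕ in atTop, shift (n * k) x ∈ s)
    {u : Set X} (hu : u ∈ 𝓝 (x 0)) : ∃ᶠ n : ℕ in atTop, x (n * k) ∈ u := by
  simpa only [mem_preimage, shift_apply, zero_add] using
    h _ ((continuous_apply (0 : ℤ)).continuousAt.preimage_mem_nhds hu)

lemma exists_forall_add_eq_of_not_injective [T2Space X] {f : X → X}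
    (hx : ∀ n, f (x n) = x (n + 1))
    (hrec : ∀ s ∈ 𝓝 x, ∃ᶠ n : ℕ in atTop, shift n x ∈ s) (h : ¬ Function.Injective x) :
    ∃ p : ℕ, 0 < p ∧ ∀ n, x (n + p) = x n := by
  obtain ⟨p, hp, m, hm⟩ : ∃ p : ℕ, 0 < p ∧ ∃ m, x (m + p) = x m := by
    simp only [Function.Injective, not_forall] at h
    obtain ⟨a, b, hab, hne⟩ := h
    rcases lt_or_gt_of_ne hne with hlt | hlt
    · exact ⟨(b - a).toNat, by omega, a, hab ▸ congrArg x (by omega)⟩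
    · exact ⟨(a - b).toNat, by omega, b, hab ▸ congrArg x (by omega)⟩
  refine ⟨p, hp, fun n => ?_⟩
  have hforward : ∀ j : ℕ, x (m + j + p) = x (m + j) := fun j => by
    rw [add_right_comm, ← iterate_apply_of_forall_map_eq hx, hm,
      iterate_apply_of_forall_map_eq hx]
  by_contra hne
  have hopen : IsOpen {y : ℤ → X | y (n + p) ≠ y n} :=
    isOpen_ne_fun (continuous_apply _) (continuous_apply _)
  obtain ⟨k, hk, hkm⟩ := ((hrec _ (hopen.mem_nhds hne)).and_eventually
    (eventually_ge_atTop (m - n).toNat)).exists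
  refine hk ?_
  have := hforward (n + k - m).toNat
  rwa [show m + ((n + k - m).toNat : ℤ) = n + k by omega, add_right_comm] at this

end Topology

lemma eq_of_monotone_of_frequently [LinearOrder X] [TopologicalSpace X] [OrderTopology X]
    {y : ℕ → X} (hy : Monotone y) (h : ∀ s ∈ 𝓝 (y 0), ∃ᶠ n in atTop, y n ∈ s) : y 1 = y 0 := by
  refine (hy zero_le_one).antisymm' (le_of_not_gt fun hlt => ?_)
  obtain ⟨n, hn, hn₁⟩ := ((h _ (Iio_mem_nhds hlt)).and_eventually (eventually_ge_atTop 1)).exists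
  exact (hy hn₁).not_gt hn

lemma ae_apply_zero_ne_of_injective [MeasurableSpace X] [MeasurableSingletonClass X]
    {ν : Measure (ℤ → X)} [IsFiniteMeasure ν] (hν : ν.map (shift 1) = ν) (c : X) :
    ∀ᵐ x ∂ν, Function.Injective x → x 0 ≠ c := by
  have hc : MeasurableSet ((fun x : ℤ → X => x 0) ⁻¹' {c}) :=
    measurable_pi_apply 0 (measurableSet_singleton c)
  filter_upwards [ae_forall_frequently_shift_mem hν hc.nullMeasurableSet] with x hrec hinj h
  obtain ⟨n, hn, hpos⟩ := ((hrec 0 (by rw [shift_zero]; exact h)).1.and_eventually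
    (eventually_gt_atTop 0)).exists
  refine hpos.ne' (hinj (Eq.trans ?_ h.symm))
  simpa only [mem_preimage, mem_singleton_iff, shift_apply, zero_add] using hn

end Recurrence

/-! ### Repelling periodic points -/

section Repelling

lemma hasDerivAt_iterate {𝕜 : Type*} [NontriviallyNormedField 𝕜] {f : 𝕜 → 𝕜} {x : 𝕜}
    (h : ∀ i, DifferentiableAt 𝕜 f (f^[i] x)) (n : ℕ) :
    HasDerivAt f^[n] (∏ i ∈ Finset.range n, deriv f (f^[i] x)) x := by
  induction n with
  | zero => exact hasDerivAt_id x
  | succ n ih =>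
    rw [Function.iterate_succ', Finset.prod_range_succ, mul_comm]
    exact (h n).hasDerivAt.comp x ih

lemma prod_range_mul_of_isPeriodicPt {X M : Type*} [CommMonoid M] {f : X → X} {x : X} {p : ℕ}
    (hx : Function.IsPeriodicPt f p x) (φ : X → M) (k : ℕ) :
    ∏ i ∈ Finset.range (p * k), φ (f^[i] x) = (∏ i ∈ Finset.range p, φ (f^[i] x)) ^ k := by
  induction k with
  | zero => rw [mul_zero, Finset.prod_range_zero, pow_zero]
  | succ k ih =>
    have hreturn : ∀ i, f^[p * k + i] x = f^[i] x := fun i => by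
      rw [add_comm, Function.iterate_add_apply, (hx.mul_const k).eq]
    simp only [mul_add_one, Finset.prod_range_add, ih, pow_succ, hreturn]

lemma one_lt_abs_prod_of_isPeriodicPt {X : Type*} {f : X → X} {x : X} {p : ℕ} (hp : 0 < p)
    (hx : Function.IsPeriodicPt f p x) {φ : X → ℝ} {l : ℝ} (hl : 0 < l)
    (h : Tendsto (fun n : ℕ => Real.log |∏ i ∈ Finset.range n, φ (f^[i] x)| / n) atTop (𝓝 l)) :
    1 < |∏ i ∈ Finset.range p, φ (f^[i] x)| := by
  obtain ⟨k, hk⟩ := ((tendsto_id.const_mul_atTop' hp).eventually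
    (h.eventually (eventually_gt_nhds hl))).exists
  rw [id, prod_range_mul_of_isPeriodicPt hx, abs_pow, Real.log_pow] at hk
  by_contra! hle
  exact hk.not_ge (div_nonpos_of_nonpos_of_nonneg (mul_nonpos_of_nonneg_of_nonpos k.cast_nonneg
    (Real.log_nonpos (abs_nonneg _) hle)) (Nat.cast_nonneg _))

lemma countable_repelling_fixedPoints (f : ℝ → ℝ) :
    {x | f x = x ∧ ∃ D, HasDerivAt f D x ∧ 1 < |D|}.Countable := by
  let s := {x | f x = x ∧ ∃ D, HasDerivAt f D x ∧ 1 < |D|}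
  suffices hisolated : s ⊆ {x ∈ s | 𝓝[s ∩ Ioi x] x = ⊥} from
    countable_setOfPred_isolated_right_within.mono hisolated
  rintro x ⟨hx, D, hD, hD₁⟩
  have hD_ne : D - 1 ≠ 0 := sub_ne_zero.2 fun h => by simp [h] at hD₁
  have hne : ∀ᶠ y in 𝓝[≠] x, f y - y ≠ 0 := (hD.sub (hasDerivAt_id x)).eventually_ne hD_ne
  refine ⟨⟨hx, D, hD, hD₁⟩, empty_mem_iff_bot.1 ?_⟩
  filter_upwards [nhdsWithin_mono x (fun y hy => (hy.2 : x < y).ne') hne, self_mem_nhdsWithin]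
    with y hy hys
  exact hy (sub_eq_zero.2 hys.1.1)

namespace GoodMap

variable {F : GoodMap}

/-- The periodic points in `M` at which the derivative over a period exceeds one. -/
def repellingPeriodicPoints (F : GoodMap) : Set ℝ :=
  {x ∈ Mset | ∃ p, 0 < p ∧ Function.IsPeriodicPt F.f p x ∧ ∃ D, HasDerivAt F.f^[p] D x ∧ 1 < |D|}

lemma repellingPeriodicPoints_subset : F.repellingPeriodicPoints ⊆ Mset := fun _ hx => hx.1

lemma countable_repellingPeriodicPoints : F.repellingPeriodicPoints.Countable :=
  (countable_iUnion fun p => countable_repelling_fixedPoints F.f^[p]).mono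
    fun _ hx => by
      obtain ⟨-, p, -, hfix, hD⟩ := hx
      exact mem_iUnion.2 ⟨p, hfix, hD⟩

end GoodMap

end Repelling

/-! ### Orbits sharing their whole itinerary with a rational -/

namespace GoodMap

variable {F : GoodMap} {q : ℝ}

/-- The points which visit the same laps as `q` at all times. -/
def itineraryClass (F : GoodMap) (q : ℝ) : Set ℝ := {z | ∀ k, F.SameLaps k q z}

section ItineraryClass

variable {y z : ℝ} {k p : ℕ}

lemma ordConnected_itineraryClass : (F.itineraryClass q).OrdConnected :=
  ⟨fun _ hy _ hz w hw k =>
    (hy k).trans ((((hy k).symm.trans (hz k)).between (hw.1.trans hw.2)).2 w hw)⟩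

lemma SameLaps.anti {l : ℕ} (h : F.SameLaps l y z) (hkl : k ≤ l) : F.SameLaps k y z :=
  fun j hj => h j (hj.trans_le hkl)

lemma SameLaps.iterate (h : F.SameLaps (k + p) y z) : F.SameLaps k (F.f^[p] y) (F.f^[p] z) :=
  fun j hj => by
    simpa only [Function.iterate_add_apply] using h (j + p) (Nat.add_lt_add_right hj p)

lemma mapsTo_itineraryClass (hz : z ∈ F.itineraryClass q)
    (hfz : F.f^[p] z ∈ F.itineraryClass q) :
    MapsTo F.f^[p] (F.itineraryClass q) (F.itineraryClass q) := fun _ hy k =>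
  (hfz k).trans ((hz (k + p)).symm.trans (hy (k + p))).iterate

/-- The iterate `f^p` is monotone or antitone on an interval containing any two given points of the
class and their images, so its square is increasing. -/
lemma strictMonoOn_itineraryClass
    (h : MapsTo F.f^[p] (F.itineraryClass q) (F.itineraryClass q)) :
    StrictMonoOn F.f^[2 * p] (F.itineraryClass q) := by
  intro y hy z hz hyz
  obtain ⟨u, hu, huy, huy', huz'⟩ : ∃ u ∈ F.itineraryClass q, u ≤ y ∧ u ≤ F.f^[p] y ∧
      u ≤ F.f^[p] z :=
    ⟨_, inf_ind y _ hy (inf_ind _ _ (h hy) (h hz)), inf_le_left,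
      inf_le_right.trans inf_le_left, inf_le_right.trans inf_le_right⟩
  obtain ⟨v, hv, hvz, hvy', hvz'⟩ : ∃ v ∈ F.itineraryClass q, z ≤ v ∧ F.f^[p] y ≤ v ∧
      F.f^[p] z ≤ v :=
    ⟨_, sup_ind z _ hz (sup_ind _ _ (h hy) (h hz)), le_sup_left,
      le_sup_left.trans le_sup_right, le_sup_right.trans le_sup_right⟩
  have hyI : y ∈ Icc u v := ⟨huy, hyz.le.trans hvz⟩
  have hzI : z ∈ Icc u v := ⟨huy.trans hyz.le, hvz⟩
  rw [two_mul, Function.iterate_add_apply, Function.iterate_add_apply]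
  rcases (((hu p).symm.trans (hv p)).between (huy'.trans hvy')).1 with hf | hf
  · exact hf ⟨huy', hvy'⟩ ⟨huz', hvz'⟩ (hf hyI hzI hyz)
  · exact hf ⟨huz', hvz'⟩ ⟨huy', hvy'⟩ (hf hyI hzI hyz)

end ItineraryClass

variable {x : ℤ → ℝ}

/-- The orbit of `x 0` under an increasing return map is monotone and recurrent, hence constant. -/
lemma not_injective_of_mem_itineraryClass (hx : ∀ n, F.f (x n) = x (n + 1))
    (hrec : ∀ k, ∀ s ∈ 𝓝 x, ∃ᶠ n : ℕ in atTop, shift (n * k) x ∈ s)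
    {p : ℕ} (hp : 0 < p) (h₀ : x 0 ∈ F.itineraryClass q) (h : x p ∈ F.itineraryClass q) :
    ¬ Function.Injective x := by
  have hmaps := mapsTo_itineraryClass h₀ (p := p) (by
    rwa [iterate_apply_of_forall_map_eq hx, zero_add])
  have hmono := strictMonoOn_itineraryClass hmaps
  have hmaps₂ : MapsTo F.f^[2 * p] (F.itineraryClass q) (F.itineraryClass q) := by
    rw [two_mul, Function.iterate_add]
    exact hmaps.comp hmaps
  set G := hmaps₂.restrict
  have hG : Monotone G := fun y z hyz => hmono.monotoneOn y.2 z.2 hyz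
  have horbit : (fun n : ℕ => x (n * (2 * p : ℕ))) = fun n => ↑(G^[n] ⟨x 0, h₀⟩) := by
    funext n
    rw [hmaps₂.iterate_restrict, MapsTo.val_restrict_apply, ← Function.iterate_mul,
      iterate_apply_of_forall_map_eq hx]
    congr 1
    push_cast
    ring
  have hreturn : ∀ s ∈ 𝓝 (x ((0 : ℕ) * (2 * p : ℕ))),
      ∃ᶠ n : ℕ in atTop, x (n * (2 * p : ℕ)) ∈ s := fun s hs =>
    frequently_apply_mem (hrec _) (by rwa [Nat.cast_zero, zero_mul] at hs)
  have heq : x ((1 : ℕ) * (2 * p : ℕ)) = x ((0 : ℕ) * (2 * p : ℕ)) := by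
    rcases le_total ⟨x 0, h₀⟩ (G ⟨x 0, h₀⟩) with hle | hle
    · refine eq_of_monotone_of_frequently (y := fun n : ℕ => x (n * (2 * p : ℕ))) ?_ hreturn
      rw [horbit]
      exact (Subtype.mono_coe _).comp (hG.monotone_iterate_of_le_map hle)
    · refine eq_of_monotone_of_frequently (X := ℝᵒᵈ) (y := fun n : ℕ => x (n * (2 * p : ℕ)))
        (Antitone.dual_right ?_) hreturn
      rw [horbit]
      exact (Subtype.mono_coe _).comp_antitone (hG.antitone_iterate_of_map_le hle)
  intro hinj
  have := hinj heq
  omega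

/-- If the cylinders of `x 0` do not shrink to it, they all contain a common one-sided
neighbourhood of it, hence a common rational. -/
lemma exists_cylinder_subset {χ : ℝ} {hχ : 0 < χ} (hx : (F.system hχ).IsOrbit x)
    (hq : ∀ q : ℚ, x 0 ∉ F.itineraryClass q) {r : ℝ} (hr : 0 < r) :
    ∃ k, closure ((F.system hχ).cylinder (F.lap ∘ x) 0 k) ⊆ ball (x 0) r := by
  have hsame : ∀ k, ∀ z ∈ (F.system hχ).cylinder (F.lap ∘ x) 0 k, F.SameLaps k (x 0) z :=
    fun k z hz j hj => by
      rw [show F.f^[j] (x 0) = x (0 + j) from hx.map_iterate 0 j]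
      exact ⟨(hx _).1, (hz j hj).1, (hz j hj).2.symm⟩
  obtain ⟨q₁, hxq₁, hq₁⟩ := exists_rat_btwn (show x 0 < x 0 + r / 2 by linarith)
  obtain ⟨q₂, hq₂, hxq₂⟩ := exists_rat_btwn (show x 0 - r / 2 < x 0 by linarith)
  obtain ⟨k₁, hk₁⟩ : ∃ k, ¬ F.SameLaps k q₁ (x 0) := not_forall.1 (hq q₁)
  obtain ⟨k₂, hk₂⟩ : ∃ k, ¬ F.SameLaps k q₂ (x 0) := not_forall.1 (hq q₂)
  refine ⟨max k₁ k₂, (closure_minimal (fun z hz => ?_) isClosed_Icc).trans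
    (Real.closedBall_eq_Icc.symm.trans_subset (closedBall_subset_ball (half_lt_self hr)))⟩
  have hz := hsame _ z hz
  constructor
  · by_contra! hlt
    have hz₂ := (hz.anti (le_max_right _ _)).symm
    exact hk₂ (((hz₂.between (by linarith)).2 q₂ ⟨by linarith, hxq₂.le⟩).symm.trans hz₂)
  · by_contra! hlt
    exact hk₁ (((hz.anti (le_max_left _ _)).between (by linarith)).2 q₁
      ⟨hxq₁.le, by linarith⟩).symm

variable {χ : ℝ}

/-- The coding of the orbits of repelling periodic points by themselves. -/
def periodicCoding (F : GoodMap) (hχ : 0 < χ) :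
    OrbitCoding F.repellingPeriodicPoints F.f Mset (F.system hχ).rate :=
  OrbitCoding.self _ repellingPeriodicPoints_subset (F.system hχ).rate_pos.le

/-- The coding of all typical orbits: the non-periodic ones by the Markov coding, the periodic
ones by themselves. -/
def coding (F : GoodMap) (hχ : 0 < χ) :
    OrbitCoding (Vertex ℚ ⊕ F.repellingPeriodicPoints) F.f Mset (F.system hχ).rate :=
  (F.system hχ).markovCoding.sum (F.periodicCoding hχ)

end GoodMap

/-! ### Lifts of expanding measures -/

lemma exists_pos_mul_le_of_eventually_le {u v : ℕ → ℝ} (hu : ∀ j, 0 ≤ u j) (hv : ∀ j, 0 < v j)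
    (h : ∀ᶠ j in atTop, u j ≤ v j) : ∃ c > 0, ∀ j, c * u j ≤ v j := by
  have hO : u =O[atTop] v := .of_norm_eventuallyLE <| h.mono fun j hj => by
    simpa only [Real.norm_of_nonneg (hu j)] using hj
  obtain ⟨C, hC, hle⟩ := Asymptotics.bound_of_isBigO_nat_atTop hO
  refine ⟨C⁻¹, inv_pos.2 hC, fun j => (inv_mul_le_iff₀ hC).2 ?_⟩
  simpa only [Real.norm_of_nonneg (hu j), Real.norm_of_nonneg (hv j).le] using hle (hv j).ne'

lemma measurable_log_abs_deriv (f : ℝ → ℝ) : Measurable fun x => Real.log |deriv f x| :=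
  Real.measurable_log.comp (measurable_deriv f).abs

section Projections

variable {ν : Measure (ℤ → ℝ)} {μ : Measure ℝ}

lemma measurePreserving_apply {α : Type*} [MeasurableSpace α] {ν : Measure (ℤ → α)}
    {μ : Measure α} (hν : ν.map (shift 1) = ν) (hμ : ν.map (fun x => x 0) = μ) (n : ℤ) :
    MeasurePreserving (fun x : ℤ → α => x n) ν μ := by
  have h₀ : MeasurePreserving (fun x : ℤ → α => x 0) ν μ := ⟨measurable_pi_apply 0, hμ⟩
  simpa only [Function.comp_def, shift_apply, zero_add] using
    h₀.comp (measurePreserving_shift hν n)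

lemma nullMeasurableSet_inMhat {f : ℝ → ℝ} (hf : AEMeasurable f μ)
    (hν : ∀ n : ℤ, MeasurePreserving (fun x : ℤ → ℝ => x n) ν μ) :
    NullMeasurableSet {x | inMhat f x} ν := by
  simp only [inMhat, ofPred_and, ofPred_forall]
  exact .inter
    (.iInter fun n => (measurable_pi_apply n measurableSet_Icc).nullMeasurableSet)
    (.iInter fun n => nullMeasurableSet_eq_fun
      (hf.comp_quasiMeasurePreserving (hν (n - 1)).quasiMeasurePreserving)
      (measurable_pi_apply n).aemeasurable)

end Projections

/-- The invariant measures on the natural extension which come from adapted `χ`-expanding measures: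
almost every orbit avoids the singular set and expands at a rate above `χ`. -/
structure HyperbolicLift (F : GoodMap) (χ : ℝ) (ν : Measure (ℤ → ℝ)) : Prop where
  map_shift : ν.map (shift 1) = ν
  inMhat : ∀ᵐ x ∂ν, inMhat F.f x
  notMem : ∀ᵐ x ∂ν, ∀ n, x n ∉ F.S
  lyapunov : ∀ᵐ x ∂ν, ∃ l > χ, Tendsto (fun n : ℕ =>
    Real.log |∏ j ∈ Finset.range n, deriv F.f (F.f^[j] (x 0))| / n) atTop (𝓝 l)
  integrable : Integrable (fun x => Real.log (F.dS (x 0))) ν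

namespace HyperbolicLift

variable {F : GoodMap} {χ : ℝ} {ν : Measure (ℤ → ℝ)}

lemma of_expanding {μ : Measure ℝ} [NeZero μ] [IsProbabilityMeasure ν] (hμ : μ.map F.f = μ)
    (hS : μ F.S = 0) (hint : Integrable (fun x => Real.log (F.dS x)) μ)
    (hexp : ∀ᵐ x ∂μ, ∃ l > χ, Tendsto (fun n : ℕ =>
      Real.log |∏ j ∈ Finset.range n, deriv F.f (F.f^[j] x)| / n) atTop (𝓝 l))
    (hM : ν {x | OneDim.inMhat F.f x} = 1) (hν : ν.map (shift 1) = ν)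
    (hlift : ν.map (fun x => x 0) = μ) : HyperbolicLift F χ ν := by
  have hproj := measurePreserving_apply hν hlift
  have hf : AEMeasurable F.f μ := .of_map_ne_zero (by rw [hμ]; exact NeZero.ne μ)
  exact
    { map_shift := hν
      inMhat := (mem_ae_iff_prob_eq_one₀ (nullMeasurableSet_inMhat hf hproj)).2 hM
      notMem := ae_all_iff.2 fun n =>
        (hproj n).quasiMeasurePreserving.ae (measure_eq_zero_iff_ae_notMem.1 hS)
      lyapunov := (hproj 0).quasiMeasurePreserving.ae hexp
      integrable := (hproj 0).integrable_comp_of_integrable hint }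

variable (h : HyperbolicLift F χ ν)

include h

lemma ae_mem_regularPart (hA : F.SatA) : ∀ᵐ x ∂ν, ∀ n, x n ∈ F.regularPart := by
  filter_upwards [h.inMhat, h.notMem] with x hx hS n
  exact GoodMap.mem_regularPart hA (hx.1 n) (hS n) (GoodMap.map_eq_of_inMhat hx n ▸ hS _)

lemma ae_frequently_shift_mem_nhds [IsFiniteMeasure ν] :
    ∀ᵐ x ∂ν, ∀ k, ∀ s ∈ 𝓝 x, ∃ᶠ n : ℕ in atTop, shift (n * k) x ∈ s :=
  ae_forall_frequently_shift_mem_nhds h.map_shift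

section Expansion

lemma integrable_log_abs_deriv (hA : F.SatA) :
    Integrable (fun x => Real.log |deriv F.f (x 0)|) ν := by
  refine (h.integrable.abs.const_mul F.a).mono'
    ((measurable_log_abs_deriv F.f).comp (measurable_pi_apply 0)).aestronglyMeasurable ?_
  filter_upwards [h.inMhat, h.notMem] with x hx hS
  exact GoodMap.abs_log_abs_deriv_le hA (hx.1 0) (hS 0) (GoodMap.map_eq_of_inMhat hx 0 ▸ hS _)

lemma ae_exists_lt_birkhoffSum (hA : F.SatA) : ∀ᵐ x ∂ν, ∃ n : ℕ, n * (χ / 2) <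
    birkhoffSum (shift 1) (fun x => Real.log |deriv F.f (x 0)| - χ / 2) n x := by
  filter_upwards [h.inMhat, h.ae_mem_regularPart hA, h.lyapunov] with x hx hreg ⟨l, hl, hlim⟩
  obtain ⟨n, hn, hpos⟩ := ((hlim.eventually (eventually_gt_nhds hl)).and
    (eventually_gt_atTop 0)).exists
  refine ⟨n, ?_⟩
  have hiter : ∀ j : ℕ, F.f^[j] (x 0) = x j := fun j => by
    rw [iterate_apply_of_forall_map_eq (GoodMap.map_eq_of_inMhat hx), zero_add]
  simp only [hiter] at hn
  have hlog := Real.log_prod (s := Finset.range n) (f := fun j : ℕ => |deriv F.f (x j)|)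
    fun j _ => abs_ne_zero.2 (GoodMap.deriv_ne_zero (hreg j))
  rw [lt_div_iff₀ (by exact_mod_cast hpos), Finset.abs_prod, hlog] at hn
  simp only [birkhoffSum, shift_iterate, shift_apply, mul_one, zero_add, Finset.sum_sub_distrib,
    Finset.sum_const, Finset.card_range, nsmul_eq_mul]
  linarith

lemma ae_exists_shift_sum_nonneg [IsFiniteMeasure ν] (hA : F.SatA) (hχ : 0 < χ) :
    ∀ᵐ x ∂ν, ∃ t, ∀ m : ℕ, 0 ≤ ∑ j ∈ Finset.range m,
      (Real.log |deriv F.f (shift t x (-((j + 1 : ℕ) : ℤ)))| - χ / 2) := by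
  have hrec := ae_exists_forall_birkhoffSum_nonneg (measurePreserving_shift h.map_shift 1)
    (measurable_shift (-1)) (shift_neg_shift 1)
    (((measurable_log_abs_deriv F.f).comp (measurable_pi_apply 0)).sub_const _)
    ((h.integrable_log_abs_deriv hA).sub (integrable_const (χ / 2))) (half_pos hχ)
    (h.ae_exists_lt_birkhoffSum hA)
  filter_upwards [hrec] with x ⟨t, ht⟩
  refine ⟨t + 1, fun m => (ht m).trans_eq (Finset.sum_congr rfl fun j _ => ?_)⟩
  simp only [Function.comp_apply, shift_iterate, shift_shift, shift_apply]
  congr 5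
  push_cast
  ring

lemma ae_tempered [IsProbabilityMeasure ν] (hA : F.SatA) (hχ : 0 < χ) : ∀ᵐ x ∂ν, ∃ c > 0,
    ∀ j : ℕ, c * (Real.exp (-(χ / 4)) ^ (F.β / F.a)) ^ j ≤ F.dS (x (-j)) := by
  have hε : 0 < χ / 4 * (F.β / F.a) :=
    mul_pos (by positivity) (div_pos F.hβ0 (zero_lt_one.trans F.ha))
  filter_upwards [h.inMhat, h.notMem, ae_eventually_abs_iterate_le
    (measurePreserving_shift h.map_shift (-1)) h.integrable hε] with x hx hS hlog
  have hpos : ∀ n, 0 < F.dS (x n) := fun n =>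
    GoodMap.dS_pos hA (hx.1 n) (hS n) (GoodMap.map_eq_of_inMhat hx n ▸ hS _)
  refine exists_pos_mul_le_of_eventually_le (fun j => by positivity) (fun j => hpos _) ?_
  filter_upwards [hlog] with j hj
  rw [shift_iterate, shift_apply, zero_add, mul_neg_one] at hj
  rw [← Real.exp_mul, ← Real.exp_nat_mul, ← Real.le_log_iff_exp_le (hpos _)]
  linarith [(abs_le.1 hj).1]

end Expansion

section InjectiveOrbits

variable [IsFiniteMeasure ν]

lemma ae_frequently_mem_of_injective : ∀ᵐ x ∂ν, Function.Injective x →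
    ∃ δ > 0, ∃ᶠ m : ℕ in atTop, x (-(m : ℤ)) ∈ Icc δ (1 / 2 - δ) := by
  filter_upwards [h.inMhat, h.ae_frequently_shift_mem_nhds,
    ae_apply_zero_ne_of_injective h.map_shift 0, ae_apply_zero_ne_of_injective h.map_shift (1 / 2)]
    with x hx hrec hne₀ hne₁ hinj
  have h₀ : 0 < x 0 := (hx.1 0).1.lt_of_ne' (hne₀ hinj)
  have h₁ : x 0 < 1 / 2 := (hx.1 0).2.lt_of_ne (hne₁ hinj)
  refine ⟨min (x 0) (1 / 2 - x 0) / 2, half_pos (lt_min h₀ (sub_pos.2 h₁)), ?_⟩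
  have hnhds : Icc (min (x 0) (1 / 2 - x 0) / 2) (1 / 2 - min (x 0) (1 / 2 - x 0) / 2) ∈
      𝓝 (x 0) :=
    Icc_mem_nhds (by linarith [min_le_left (x 0) (1 / 2 - x 0)])
      (by linarith [min_le_right (x 0) (1 / 2 - x 0)])
  simpa only [mul_neg_one] using frequently_apply_mem (hrec (-1)) hnhds

lemma ae_notMem_itineraryClass_of_injective : ∀ᵐ x ∂ν, Function.Injective x →
    ∀ q : ℚ, x 0 ∉ F.itineraryClass q := by
  have hreturn := ae_all_iff.2 fun q : ℚ => ae_forall_frequently_shift_mem h.map_shift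
    (measurable_pi_apply (0 : ℤ)
      (GoodMap.ordConnected_itineraryClass (F := F) (q := q)).measurableSet).nullMeasurableSet
  filter_upwards [h.inMhat, h.ae_frequently_shift_mem_nhds, hreturn]
    with x hx hrec hreturn hinj q hq
  have hfreq := (hreturn q 0 (by rwa [shift_zero])).1
  obtain ⟨n, hn, hpos⟩ := (hfreq.and_eventually (eventually_gt_atTop 0)).exists
  lift n to ℕ using hpos.le
  rw [mem_preimage, shift_apply, zero_add] at hn
  exact GoodMap.not_injective_of_mem_itineraryClass (GoodMap.map_eq_of_inMhat hx) hrec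
    (by exact_mod_cast hpos) hq hn hinj

lemma ae_exists_isHyperbolicTime_of_injective [IsProbabilityMeasure ν] (hA : F.SatA)
    (hχ : 0 < χ) : ∀ᵐ x ∂ν, Function.Injective x →
      ∃ κ t, (F.system hχ).IsHyperbolicTime (F.lap ∘ x) t κ := by
  filter_upwards [h.ae_exists_shift_sum_nonneg hA hχ, ae_forall_shift h.map_shift h.inMhat,
    ae_forall_shift h.map_shift h.notMem, ae_forall_shift h.map_shift (h.ae_tempered hA hχ),
    ae_forall_shift h.map_shift h.ae_frequently_mem_of_injective,
    ae_forall_shift h.map_shift h.ae_notMem_itineraryClass_of_injective]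
    with x ⟨t, ht⟩ hM hS htemp hfreq hq hinj
  have hinj' : Function.Injective (shift t x) := injective_shift_iff.2 hinj
  have hpast : GoodMap.HyperbolicPast F hχ (shift t x) :=
    { inMhat := hM t
      notMem := hS t
      sum_nonneg := ht
      tempered := htemp t
      frequently_mem := hfreq t hinj'
      exists_cylinder_subset := fun r hr => GoodMap.exists_cylinder_subset
        (GoodMap.isOrbit_of_inMhat hA (hM t) (hS t)) (hq t hinj') hr }
  obtain ⟨κ, hκ⟩ := hpast.exists_isHyperbolicTime hA
  exact ⟨κ, 0 + t, LabelledSystem.isHyperbolicTime_shift.1 hκ⟩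

end InjectiveOrbits

lemma ae_codes_periodic_of_not_injective [IsFiniteMeasure ν] (hA : F.SatA) (hχ : 0 < χ) :
    ∀ᵐ x ∂ν, ¬ Function.Injective x →
      ∃ v, (GoodMap.periodicCoding F hχ).Codes v x ∧ Recurrent v := by
  filter_upwards [h.inMhat, h.ae_mem_regularPart hA, ae_forall_shift h.map_shift h.lyapunov,
    h.ae_frequently_shift_mem_nhds] with x hx hreg hlyap hrec hinj
  have hmap := GoodMap.map_eq_of_inMhat hx
  obtain ⟨p, hp, hper⟩ := exists_forall_add_eq_of_not_injective hmap
    (by simpa only [mul_one] using hrec 1) hinj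
  have hmem : ∀ n, x n ∈ F.repellingPeriodicPoints := fun n => by
    obtain ⟨l, hl, hlim⟩ := hlyap n
    rw [shift_apply, zero_add] at hlim
    have hfix : Function.IsPeriodicPt F.f p (x n) :=
      (iterate_apply_of_forall_map_eq hmap n p).trans (hper n)
    refine ⟨hx.1 n, p, hp, hfix, _, hasDerivAt_iterate (fun i => ?_) p,
      one_lt_abs_prod_of_isPeriodicPt hp hfix (hχ.trans hl) hlim⟩
    rw [iterate_apply_of_forall_map_eq hmap]
    exact GoodMap.differentiableAt (hreg _)
  exact ⟨fun n => ⟨x n, hmem n⟩, ⟨fun _ => rfl, hmap⟩,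
    recurrent_of_forall_add_eq hp fun n => Subtype.ext (hper n)⟩

theorem ae_mem_image_proj [IsProbabilityMeasure ν] (hA : F.SatA) (hχ : 0 < χ) :
    ∀ᵐ x ∂ν, x ∈ (F.coding hχ).proj '' {v | IsPath (F.coding hχ).Adj v ∧ Recurrent v} := by
  have hone : (1 : ℝ) ∉ F.f '' F.regularPart := by
    rintro ⟨x, hx, h₁⟩
    have := (F.hmaps x hx.1).2
    rw [h₁] at this
    norm_num at this
  filter_upwards [h.inMhat, h.notMem, h.ae_codes_periodic_of_not_injective hA hχ,
    h.ae_exists_isHyperbolicTime_of_injective hA hχ,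
    (F.system hχ).ae_exists_codes_recurrent h.map_shift GoodMap.measurable_lap hone]
    with x hx hS hper hhyp hcodes
  have hcoded : ∃ v, (F.coding hχ).Codes v x ∧ Recurrent v := by
    by_cases hinj : Function.Injective x
    · obtain ⟨v, hv, hrec⟩ := hcodes (GoodMap.isOrbit_of_inMhat hA hx hS) (hhyp hinj)
      exact ⟨Sum.inl ∘ v, .inl ⟨v, rfl, hv⟩, hrec.comp Sum.inl⟩
    · obtain ⟨v, hv, hrec⟩ := hper hinj
      exact ⟨Sum.inr ∘ v, .inr ⟨v, rfl, hv⟩, hrec.comp Sum.inr⟩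
  obtain ⟨v, hv, hrec⟩ := hcoded
  exact (F.coding hχ).mem_image_proj (F.system hχ).rate_pos (F.system hχ).rate_lt_one hv hrec

end HyperbolicLift

/-- Main symbolic-dynamics theorem (Theorem 1.1). -/
theorem main_symbolic_model (F : GoodMap) (hA : F.SatA) (χ : ℝ) (hχ : 0 < χ) :
    ∃ ε₀ > 0, ∀ ε : ℝ, 0 < ε → ε < ε₀ →
      ∃ (V : Type) (E : V → V → Prop) (prj : (ℤ → V) → (ℤ → ℝ)),
        Countable V ∧
        (∀ v : ℤ → V, (∀ n, E (v n) (v (n + 1))) → inMhat F.f (prj v)) ∧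
        -- (0) prj is Hölder continuous
        (∃ C > 0, ∃ α : ℝ, 0 < α ∧ α ≤ 1 ∧
          ∀ v w : ℤ → V, (∀ n, E (v n) (v (n + 1))) → (∀ n, E (w n) (w (n + 1))) →
            dhat (prj v) (prj w) ≤ C * dSigma v w ^ α) ∧
        -- (1) prj ∘ σ = f̂ ∘ prj
        (∀ v : ℤ → V, (∀ n, E (v n) (v (n + 1))) →
          prj (fun n => v (n + 1)) = fhat (prj v)) ∧
        -- (2) prj[Σ^#] has full outer measure for every lift of every f-adapted
        --     χ-expanding invariant probability measure
        (∀ μ : Measure ℝ, IsProbabilityMeasure μ → μ Mset = 1 → μ.map F.f = μ →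
          μ F.S = 0 → Integrable (fun x => Real.log (F.dS x)) μ →
          (∀ᵐ x ∂μ, (∀ n : ℕ, F.f^[n] x ∉ F.S) ∧
            ∃ l > χ, Tendsto
              (fun n : ℕ => Real.log |∏ j ∈ Finset.range n, deriv F.f (F.f^[j] x)| / (n:ℝ))
              atTop (𝓝 l)) →
          ∀ μhat : Measure (ℤ → ℝ), IsProbabilityMeasure μhat →
            μhat {x | inMhat F.f x} = 1 → μhat.map fhat = μhat →
            μhat.map (fun x => x 0) = μ →
            μhat (prj '' {v : ℤ → V | (∀ n, E (v n) (v (n + 1))) ∧ Recurrent v}) = 1) ∧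
        -- (3) finite-to-one on the recurrent set
        (∀ xh ∈ prj '' {v : ℤ → V | (∀ n, E (v n) (v (n + 1))) ∧ Recurrent v},
          {v : ℤ → V | ((∀ n, E (v n) (v (n + 1))) ∧ Recurrent v) ∧ prj v = xh}.Finite) := by
  let C := F.coding hχ
  have hθ₀ := (F.system hχ).rate_pos
  have hθ₁ := (F.system hχ).rate_lt_one
  have : Countable F.repellingPeriodicPoints := F.countable_repellingPeriodicPoints.to_subtype
  refine ⟨1, one_pos, fun ε _ _ => ⟨Vertex ℚ ⊕ F.repellingPeriodicPoints, C.Adj, C.proj,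
    inferInstance, fun v hv => C.inMhat_proj subset_rfl hv,
    C.exists_holder_proj (F.system hχ).dist_le_one hθ₀ hθ₁,
    fun v hv => C.proj_shift hθ₀ hθ₁ hv 1, ?_, fun x _ => ?_⟩⟩
  · intro μ _ _ hμ hS hint hexp ν _ hM hν hlift
    have hlyap := hexp.mono fun _ h => h.2
    have hhyp := HyperbolicLift.of_expanding hμ hS hint hlyap hM hν hlift
    have hcoded := hhyp.ae_mem_image_proj hA hχ
    refine le_antisymm prob_le_one ?_
    rw [← measure_univ (μ := ν)]
    exact measure_mono_ae (hcoded.mono fun _ hx _ => hx)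
  · exact (C.finite_proj_eq x).subset fun v hv => ⟨hv.1.1, hv.2⟩

end OneDim
end
end

section
/- Assume f satisfies (A1)–(A3) and fix χ > 0. For every x̂ = (x_n)_{n∈ℤ} ∈ NUE_χ, the composition F_{x̂} := Ψ_{f̂(x̂)}^{−1} ∘ f ∘ Ψ_{x̂} is a diffeomorphism from [−2r(x₀), 2r(x₀)] onto its image, it satisfies F_{x̂}(0) = 0, and |(dF_{x̂})_0| > e^χ; more precisely |(dF_{x̂})_0|² = e^{2χ} u(f̂(x̂))² / (u(f̂(x̂))² − 1). -/
open Real MeasureTheory Filter Topology Metric Set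

noncomputable section

namespace OneDim

/-!
Shifting the base point by `f̂` prepends the term `1` to the series of `u(x̂)²` and multiplies
all the others by `e^{2χ} |df_{x₀}|⁻²`, whence the recursion
`u(f̂x̂)² = 1 + e^{2χ} |df_{x₀}|⁻² u(x̂)²`. Since `(dF_{x̂})₀ = u(f̂x̂) df_{x₀} / u(x̂)`, solving
the recursion for `|df_{x₀}|² / u(x̂)²` gives the formula for `|(dF_{x̂})₀|²`, which exceeds
`e^{2χ}`. As `u(x̂) > 1`, the chart `Ψ_{x̂}` contracts `[-2r(x₀), 2r(x₀)]` into the open ball on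
which (A1) and (A2) apply.
-/

-- `log 0 = 0` does no harm here: a vanishing `c n` contributes a vanishing term.
theorem summable_exp_mul_sq_of_tendsto_log {c : ℕ → ℝ} {χ l : ℝ} (hl : χ < l)
    (hlim : Tendsto (fun n : ℕ => Real.log |c n| / (-(n : ℝ))) atTop (𝓝 l)) :
    Summable fun n : ℕ => Real.exp (2 * (n : ℝ) * χ) * c n ^ 2 := by
  obtain ⟨m, hχm, hml⟩ := exists_between hl
  have hratio : Real.exp (2 * (χ - m)) < 1 := Real.exp_lt_one_iff.2 (by linarith)
  refine Summable.of_norm_bounded_eventually_nat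
    (summable_geometric_of_lt_one (Real.exp_pos _).le hratio) ?_
  filter_upwards [hlim.eventually (lt_mem_nhds hml), eventually_gt_atTop 0] with n hn hn0
  have hlog : Real.log |c n| < -(m * n) := by
    rwa [div_neg, lt_neg, div_lt_iff₀ (Nat.cast_pos.2 hn0), neg_mul] at hn
  have hc : |c n| ≤ Real.exp (-(m * n)) :=
    (Real.le_exp_log _).trans (Real.exp_le_exp.2 hlog.le)
  calc ‖Real.exp (2 * (n : ℝ) * χ) * c n ^ 2‖
      = Real.exp (2 * (n : ℝ) * χ) * |c n| ^ 2 := by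
        rw [sq_abs, Real.norm_of_nonneg (by positivity)]
    _ ≤ Real.exp (2 * (n : ℝ) * χ) * Real.exp (-(m * n)) ^ 2 := by gcongr
    _ = Real.exp (2 * (χ - m)) ^ n := by
        rw [← Real.exp_nat_mul, ← Real.exp_nat_mul, ← Real.exp_add]
        congr 1
        push_cast
        ring

theorem exp_lt_abs_of_sq_eq {χ d w : ℝ} (hw : 1 < w)
    (hd : d ^ 2 = Real.exp (2 * χ) * w / (w - 1)) : Real.exp χ < |d| := by
  refine lt_of_pow_lt_pow_left₀ 2 (abs_nonneg d) ?_
  calc Real.exp χ ^ 2 = Real.exp (2 * χ) := (Real.exp_nat_mul χ 2).symm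
    _ < Real.exp (2 * χ) * w / (w - 1) := by
      rw [lt_div_iff₀ (sub_pos.2 hw)]
      exact mul_lt_mul_of_pos_left (sub_one_lt w) (Real.exp_pos _)
    _ = |d| ^ 2 := by rw [sq_abs, hd]

theorem inMhat.map_apply {f : ℝ → ℝ} {x : ℤ → ℝ} (hx : inMhat f x) (n : ℤ) :
    f (x n) = x (n + 1) := by
  simpa only [add_sub_cancel_right] using hx.2 (n + 1)

section PesinParameter

variable {f : ℝ → ℝ} {χ : ℝ} {x : ℤ → ℝ}

theorem dfhat_neg_natCast (f : ℝ → ℝ) (x : ℤ → ℝ) (n : ℕ) :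
    dfhat f x (-(n : ℤ)) = (∏ j ∈ Finset.range n, deriv f (x (-(j : ℤ) - 1)))⁻¹ := by
  rcases n.eq_zero_or_pos with rfl | hn
  · simp [dfhat]
  · rw [dfhat, if_neg (by lia), neg_neg, Int.toNat_natCast]

theorem dfhat_fhat_neg_succ (f : ℝ → ℝ) (x : ℤ → ℝ) (n : ℕ) :
    dfhat f (fhat x) (-((n + 1 : ℕ) : ℤ)) = (deriv f (x 0))⁻¹ * dfhat f x (-(n : ℤ)) := by
  have hshift (j : ℕ) : fhat x (-((j + 1 : ℕ) : ℤ) - 1) = x (-(j : ℤ) - 1) := by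
    rw [fhat]
    congr 1
    push_cast
    ring
  have hzero : fhat x (-((0 : ℕ) : ℤ) - 1) = x 0 := by simp [fhat]
  rw [dfhat_neg_natCast, dfhat_neg_natCast, Finset.prod_range_succ', mul_inv_rev, hzero]
  simp only [hshift]

/-- The `n`-th term `e^{2nχ} |d̂f^{(-n)}_{x̂}|²` of the series whose sum is `u(x̂)²`. Where the
series diverges, `uPes` takes the junk value `0`, so summability is assumed wherever it matters. -/
def uPesTerm (f : ℝ → ℝ) (χ : ℝ) (x : ℤ → ℝ) (n : ℕ) : ℝ :=
  Real.exp (2 * (n : ℝ) * χ) * dfhat f x (-(n : ℤ)) ^ 2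

theorem uPesTerm_nonneg (n : ℕ) : 0 ≤ uPesTerm f χ x n := by
  rw [uPesTerm]
  positivity

theorem uPesTerm_zero : uPesTerm f χ x 0 = 1 := by
  simp [uPesTerm, dfhat]

theorem uPesTerm_one_pos (hne : deriv f (x (-1)) ≠ 0) : 0 < uPesTerm f χ x 1 := by
  rw [uPesTerm, dfhat_neg_natCast, Finset.prod_range_one, Nat.cast_zero, neg_zero, zero_sub]
  positivity

theorem uPesTerm_fhat_succ (n : ℕ) :
    uPesTerm f χ (fhat x) (n + 1) =
      Real.exp (2 * χ) * (deriv f (x 0))⁻¹ ^ 2 * uPesTerm f χ x n := by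
  have hexp : Real.exp (2 * ((n + 1 : ℕ) : ℝ) * χ) =
      Real.exp (2 * χ) * Real.exp (2 * (n : ℝ) * χ) := by
    rw [← Real.exp_add]
    congr 1
    push_cast
    ring
  rw [uPesTerm, uPesTerm, dfhat_fhat_neg_succ, hexp]
  ring

theorem summable_uPesTerm_fhat (hsum : Summable (uPesTerm f χ x)) :
    Summable (uPesTerm f χ (fhat x)) := by
  rw [← summable_nat_add_iff 1]
  simpa only [uPesTerm_fhat_succ] using hsum.mul_left _

theorem uPes_sq : uPes f χ x ^ 2 = ∑' n, uPesTerm f χ x n :=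
  Real.sq_sqrt (tsum_nonneg uPesTerm_nonneg)

theorem uPes_fhat_sq (hsum : Summable (uPesTerm f χ x)) :
    uPes f χ (fhat x) ^ 2 =
      1 + Real.exp (2 * χ) * (deriv f (x 0))⁻¹ ^ 2 * uPes f χ x ^ 2 := by
  rw [uPes_sq, uPes_sq, (summable_uPesTerm_fhat hsum).tsum_eq_zero_add, uPesTerm_zero]
  simp only [uPesTerm_fhat_succ, tsum_mul_left]

theorem one_lt_uPes (hsum : Summable (uPesTerm f χ x)) (hne : deriv f (x (-1)) ≠ 0) :
    1 < uPes f χ x := by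
  refine Real.lt_sqrt_of_sq_lt ?_
  calc (1 : ℝ) ^ 2 < uPesTerm f χ x 0 + uPesTerm f χ x 1 := by
        rw [one_pow, uPesTerm_zero]
        exact lt_add_of_pos_right 1 (uPesTerm_one_pos hne)
    _ = ∑ n ∈ Finset.range 2, uPesTerm f χ x n := by
        rw [Finset.sum_range_succ, Finset.sum_range_one]
    _ ≤ ∑' n, uPesTerm f χ x n := hsum.sum_le_tsum _ fun n _ => uPesTerm_nonneg n

theorem one_lt_uPes_fhat (hsum : Summable (uPesTerm f χ x)) (hne : deriv f (x 0) ≠ 0) :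
    1 < uPes f χ (fhat x) :=
  one_lt_uPes (summable_uPesTerm_fhat hsum) (by simpa [fhat] using hne)

end PesinParameter

section PesinChart

variable {f : ℝ → ℝ} {χ : ℝ} {x : ℤ → ℝ}

theorem Psi_zero : Psi f χ x 0 = x 0 := by
  simp [Psi]

theorem Psi_injective (hu : uPes f χ x ≠ 0) : Function.Injective (Psi f χ x) :=
  (add_left_injective (x 0)).comp fun _ _ h => (div_left_inj' hu).1 h

theorem hasDerivAt_Psi (t : ℝ) : HasDerivAt (Psi f χ x) (1 / uPes f χ x) t :=
  ((hasDerivAt_id t).div_const _).add_const _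

theorem mapsTo_Psi_ball {ρ : ℝ} (hρ : 0 < ρ) (hu : 1 < uPes f χ x) :
    MapsTo (Psi f χ x) (Icc (-ρ) ρ) (ball (x 0) ρ) := by
  intro t ht
  have hupos : 0 < uPes f χ x := one_pos.trans hu
  rw [Metric.mem_ball, Real.dist_eq, Psi, add_sub_cancel_right, abs_div, abs_of_pos hupos,
    div_lt_iff₀ hupos]
  exact (abs_le.2 ht).trans_lt (lt_mul_of_one_lt_right hρ hu)

end PesinChart

namespace GoodMap

variable {F : GoodMap} {y : ℝ}

theorem deriv_ne_zero_of_notMem_S (hy : y ∈ Mset) (hyS : y ∉ F.S) : deriv F.f y ≠ 0 :=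
  fun h => hyS (Or.inl ⟨⟨hy, fun hyD => hyS (Or.inr hyD)⟩, h⟩)

theorem SatA.r_pos (hA : F.SatA) (hy : y ∈ Mset) (hyS : y ∉ F.S) (hfyS : F.f y ∉ F.S) :
    0 < F.r y := by
  obtain ⟨⟨hmin, -⟩, -⟩ := hA y hy hyS hfyS
  exact (le_min (Real.rpow_nonneg Metric.infDist_nonneg _)
    (Real.rpow_nonneg Metric.infDist_nonneg _)).trans_lt hmin

-- `infDist` gives `d(y, S) = 0` if `S = ∅` or if `y` is a limit of singular points. Both are
-- excluded by (A2) at `y`: as `0 ^ (-a) = 0` for real powers, it would make `y` critical.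
theorem SatA.dS_pos (hA : F.SatA) (hy : y ∈ Mset) (hyS : y ∉ F.S) (hfyS : F.f y ∉ F.S) :
    0 < F.dS y := by
  have hr : 0 < F.r y := hA.r_pos hy hyS hfyS
  obtain ⟨-, -, ⟨hbound, -⟩, -⟩ := hA y hy hyS hfyS
  refine Metric.infDist_nonneg.lt_of_ne' fun hzero => deriv_ne_zero_of_notMem_S hy hyS ?_
  have hle : |deriv F.f y| ≤ F.dS y ^ (-F.a) := (hbound y (mem_ball_self (by positivity))).2
  have ha : -F.a ≠ 0 := (neg_neg_of_pos (one_pos.trans F.ha)).ne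
  rw [dS, hzero, Real.zero_rpow ha] at hle
  exact abs_nonpos_iff.1 hle

theorem SatA.injOn_ball (hA : F.SatA) (hy : y ∈ Mset) (hyS : y ∉ F.S) (hfyS : F.f y ∉ F.S) :
    InjOn F.f (ball y (2 * F.r y)) :=
  (hA y hy hyS hfyS).2.1.1

theorem SatA.deriv_ne_zero_of_mem_ball (hA : F.SatA) (hy : y ∈ Mset) (hyS : y ∉ F.S)
    (hfyS : F.f y ∉ F.S) {z : ℝ} (hz : z ∈ ball y (2 * F.r y)) : deriv F.f z ≠ 0 := by
  obtain ⟨-, -, ⟨hbound, -⟩, -⟩ := hA y hy hyS hfyS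
  exact abs_pos.1 <|
    (Real.rpow_pos_of_pos (hA.dS_pos hy hyS hfyS) _).trans_le (hbound z hz).1

end GoodMap

section ChartMap

variable {F : GoodMap} {χ : ℝ} {x : ℤ → ℝ}

theorem Fmap_zero (horb : F.f (x 0) = x 1) : Fmap F χ x 0 = 0 := by
  rw [Fmap, Psi_zero, horb, sub_self, mul_zero]

theorem injOn_Fmap {s B : Set ℝ} (hu : uPes F.f χ x ≠ 0) (hv : uPes F.f χ (fhat x) ≠ 0)
    (hmaps : MapsTo (Psi F.f χ x) s B) (hinj : InjOn F.f B) : InjOn (Fmap F χ x) s :=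
  ((mul_right_injective₀ hv).comp (sub_left_injective (b := x 1))).comp_injOn
    (hinj.comp (Psi_injective hu).injOn hmaps)

theorem hasDerivAt_Fmap {t : ℝ} (hf : DifferentiableAt ℝ F.f (Psi F.f χ x t)) :
    HasDerivAt (Fmap F χ x)
      (uPes F.f χ (fhat x) * (deriv F.f (Psi F.f χ x t) * (1 / uPes F.f χ x))) t :=
  ((hf.hasDerivAt.comp t (hasDerivAt_Psi t)).sub_const _).const_mul _

theorem deriv_Fmap_zero_sq (hsum : Summable (uPesTerm F.f χ x)) (hu : uPes F.f χ x ≠ 0)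
    (hne : deriv F.f (x 0) ≠ 0) :
    deriv (Fmap F χ x) 0 ^ 2 =
      Real.exp (2 * χ) * uPes F.f χ (fhat x) ^ 2 / (uPes F.f χ (fhat x) ^ 2 - 1) := by
  have hdiff : DifferentiableAt ℝ F.f (Psi F.f χ x 0) := by
    rw [Psi_zero]
    exact differentiableAt_of_deriv_ne_zero hne
  have hrec : uPes F.f χ (fhat x) ^ 2 - 1 =
      Real.exp (2 * χ) * (deriv F.f (x 0))⁻¹ ^ 2 * uPes F.f χ x ^ 2 :=
    sub_eq_of_eq_add' (uPes_fhat_sq hsum)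
  have hexp : Real.exp (2 * χ) ≠ 0 := Real.exp_ne_zero _
  rw [(hasDerivAt_Fmap hdiff).deriv, Psi_zero, hrec]
  field_simp

end ChartMap

theorem linear_reduction_general (F : GoodMap) (χ : ℝ) {x : ℤ → ℝ} (hx : inMhat F.f x)
    (hpast : ∀ n < 0, deriv F.f (x n) ≠ 0) (hsum : Summable (uPesTerm F.f χ x))
    {ρ : ℝ} (hρ : 0 < ρ) (hinj : InjOn F.f (ball (x 0) ρ))
    (hball : ∀ y ∈ ball (x 0) ρ, deriv F.f y ≠ 0) :
    InjOn (Fmap F χ x) (Icc (-ρ) ρ) ∧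
    (∀ t ∈ Icc (-ρ) ρ,
      DifferentiableAt ℝ (Fmap F χ x) t ∧ deriv (Fmap F χ x) t ≠ 0) ∧
    Fmap F χ x 0 = 0 ∧
    Real.exp χ < |deriv (Fmap F χ x) 0| ∧
    deriv (Fmap F χ x) 0 ^ 2 =
      Real.exp (2 * χ) * uPes F.f χ (fhat x) ^ 2 / (uPes F.f χ (fhat x) ^ 2 - 1) := by
  have hne : deriv F.f (x 0) ≠ 0 := hball _ (mem_ball_self hρ)
  have hu : 1 < uPes F.f χ x := one_lt_uPes hsum (hpast (-1) (by norm_num))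
  have hv : 1 < uPes F.f χ (fhat x) := one_lt_uPes_fhat hsum hne
  have hu0 : uPes F.f χ x ≠ 0 := (one_pos.trans hu).ne'
  have hv0 : uPes F.f χ (fhat x) ≠ 0 := (one_pos.trans hv).ne'
  have hmaps : MapsTo (Psi F.f χ x) (Icc (-ρ) ρ) (ball (x 0) ρ) := mapsTo_Psi_ball hρ hu
  have hsq := deriv_Fmap_zero_sq hsum hu0 hne
  refine ⟨injOn_Fmap hu0 hv0 hmaps hinj, fun t ht => ?_, Fmap_zero (hx.map_apply 0),
    exp_lt_abs_of_sq_eq (one_lt_pow₀ hv two_ne_zero) hsq, hsq⟩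
  have hderiv_ne : deriv F.f (Psi F.f χ x t) ≠ 0 := hball _ (hmaps ht)
  have hderiv := hasDerivAt_Fmap (differentiableAt_of_deriv_ne_zero hderiv_ne)
  refine ⟨hderiv.differentiableAt, ?_⟩
  rw [hderiv.deriv]
  positivity

/-- linear reduction (Lemma 2.1): `F_{x̂}` is a diffeomorphism on
`[-2r(x₀), 2r(x₀)]` with `F_{x̂}(0) = 0` and `|(dF_{x̂})₀| > e^χ`. -/
theorem linear_reduction (F : GoodMap) (hA : F.SatA) (χ : ℝ) (hχ : 0 < χ)
    (x : ℤ → ℝ) (hx : x ∈ NUE F χ) :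
    Set.InjOn (Fmap F χ x) (Set.Icc (-(2 * F.r (x 0))) (2 * F.r (x 0))) ∧
    (∀ t ∈ Set.Icc (-(2 * F.r (x 0))) (2 * F.r (x 0)),
      DifferentiableAt ℝ (Fmap F χ x) t ∧ deriv (Fmap F χ x) t ≠ 0) ∧
    Fmap F χ x 0 = 0 ∧
    Real.exp χ < |deriv (Fmap F χ x) 0| ∧
    (deriv (Fmap F χ x) 0) ^ 2 =
      Real.exp (2 * χ) * uPes F.f χ (fhat x) ^ 2 / (uPes F.f χ (fhat x) ^ 2 - 1) := by
  obtain ⟨hM, hS, -, l, hl, hlim⟩ := hx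
  have hS1 : F.f (x 0) ∉ F.S := hM.map_apply 0 ▸ hS (0 + 1)
  exact linear_reduction_general F χ hM
    (fun n _ => GoodMap.deriv_ne_zero_of_notMem_S (hM.1 n) (hS n))
    (summable_exp_mul_sq_of_tendsto_log hl hlim)
    (mul_pos two_pos (hA.r_pos (hM.1 0) (hS 0) hS1)) (hA.injOn_ball (hM.1 0) (hS 0) hS1)
    fun y hy => hA.deriv_ne_zero_of_mem_ball (hM.1 0) (hS 0) hS1 hy

end OneDim
end
end
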